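/- There exists a constant C > 0 such that for every T with 0 ≤ T ≤ 1 and every admissible source g on [0,T]×ℝ², the Duhamel term D(t) = ∫₀^t U(t−τ) g(τ) dτ satisfies both (∫₀^T ‖∂_{x₁}D(t)‖_{L^∞(ℝ²)}^{9/4} dt)^{4/9} ≤ C (∫₀^T ∫_{ℝ²} (1+x₁²) |g(t,x)|² dx dt)^{1/2} and (∫₀^T ‖∂_{x₁}D(t)‖_{L^∞(ℝ²)}^{9/4} dt)^{4/9} ≤ C (∫₀^T ∫_{ℝ²} (1+x₁²) |(D_{x₁}^{-2/9}g)(t,x)|² dx dt)^{1/2}. -/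

import Mathlib

/-!
The `L^{9/4}_t L^∞_x` norm is dualized along a measurable choice of points `y(t)` against a test
function `w ∈ L^{9/5}`. For fixed `y` and `w` the quantity to control is a double time integral
over the triangle `τ ≤ t`, with kernel `w(t) · (∂_{x₁} U(t-τ) g(τ))(y(t))`.

On a rectangular block `t ∈ (m, b]`, `τ ∈ (a, m]` the two times decouple. The kernel pairs
`|ξ₁|^{-r} ĝ(τ)` with `ξ₁ e^{-iτφ} |ξ₁|^r P`, where `φ(ξ) = ξ₁(ξ₁² + ξ₂²)` and `P` (`Pw`) is the
superposition of the waves `e^{i(tφ(ξ) + 2π y(t)·ξ)}` with density `w` (`cut_block`, `block`).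
* Parseval in `x` and Cauchy–Schwarz with the weight `1 + x₁²` leave the weighted norm of
  `D^{-r}_{x₁} g` and a dual factor. Local smoothing (`smoothing`) bounds the dual factor by
  `‖|ξ₁|^r P‖_{L²}`: for fixed `x₁` it is Plancherel after the change of variables
  `(ξ₁, ξ₂) ↦ (φ(ξ)/2π, ξ₂)`, whose Jacobian `(3ξ₁² + ξ₂²)/2π` dominates `ξ₁²`, and `(1 + x₁²)⁻¹`
  is integrable.
* The square of `‖|ξ₁|^r P‖_{L²}` is a double integral of `w` against the kernel
  `∫ |ξ₁|^{2r} e^{i(sφ(ξ) + z·ξ)} dξ`, which is `O(|s|^{-22/27})` for `|s| ≤ 1` and `0 ≤ r ≤ 2/9`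
  (`kernel_bound`): the Gaussian integral in `ξ₂` leaves a factor `|s ξ₁|^{-1/2}`, and the remaining
  phase `sξ₁³ + zξ₁ - μ/ξ₁` obeys the third-derivative van der Corput test. Hölder's inequality in
  time (`hls`) closes the `TT*` argument (`hfun_bound`), with a gain `(b - m)^{1/27}` to spare.

That gain makes repeated bisection of the triangle into rectangular blocks summable
(`causal_bound`). The choice of `y` is then removed by taking the supremum over a countable dense
set of points (`sup_bound`), and `r = 0`, `r = 2/9` give the two inequalities (`main_bound`).
-/

open MeasureTheory
open scoped ENNReal NNReal

noncomputable section

/-- Fourier transform on ℝ² (realized as ℝ × ℝ). -/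
def FT (f : ℝ × ℝ → ℂ) : ℝ × ℝ → ℂ := fun ξ =>
  ∫ x : ℝ × ℝ,
    Complex.exp (((-(2 * Real.pi * (x.1 * ξ.1 + x.2 * ξ.2)) : ℝ) : ℂ) * Complex.I) * f x

/-- Inverse Fourier transform on ℝ². -/
def FTinv (f : ℝ × ℝ → ℂ) : ℝ × ℝ → ℂ := fun x =>
  ∫ ξ : ℝ × ℝ,
    Complex.exp ((((2 * Real.pi * (x.1 * ξ.1 + x.2 * ξ.2)) : ℝ) : ℂ) * Complex.I) * f ξ

/-- The linear Zakharov–Kuznetsov group `U(t)φ = F⁻¹(e^{i t ξ₁(ξ₁²+ξ₂²)} Fφ)`. -/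
def U (t : ℝ) (φ : ℝ × ℝ → ℂ) : ℝ × ℝ → ℂ :=
  FTinv (fun ξ => Complex.exp (Complex.I * ((t * ξ.1 * (ξ.1 ^ 2 + ξ.2 ^ 2) : ℝ) : ℂ)) * FT φ ξ)

/-- Fractional derivative in the first variable: `D^r_{x₁} f = F⁻¹(|ξ₁|^r F f)`. -/
def Dx1 (r : ℝ) (f : ℝ × ℝ → ℂ) : ℝ × ℝ → ℂ :=
  FTinv (fun ξ => ((|ξ.1| ^ r : ℝ) : ℂ) * FT f ξ)

/-- Fractional derivative in the second variable: `D^r_{x₂} f = F⁻¹(|ξ₂|^r F f)`. -/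
def Dx2 (r : ℝ) (f : ℝ × ℝ → ℂ) : ℝ × ℝ → ℂ :=
  FTinv (fun ξ => ((|ξ.2| ^ r : ℝ) : ℂ) * FT f ξ)

/-- Partial derivative ∂_{x₁}. -/
def pd1 (f : ℝ × ℝ → ℂ) : ℝ × ℝ → ℂ := fun x => fderiv ℝ f x (1, 0)

/-- Partial derivative ∂_{x₂}. -/
def pd2 (f : ℝ × ℝ → ℂ) : ℝ × ℝ → ℂ := fun x => fderiv ℝ f x (0, 1)

/-- Duhamel integral `∫₀^t U(t-τ) g(τ) dτ`. -/
def Duh (g : ℝ → ℝ × ℝ → ℂ) (t : ℝ) : ℝ × ℝ → ℂ := fun x =>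
  ∫ τ in (0:ℝ)..t, U (t - τ) (g τ) x

/-- Sobolev norm `‖f‖_{H^s(ℝ²)}`. -/
def HsNorm (s : ℝ) (f : ℝ × ℝ → ℂ) : ℝ≥0∞ :=
  (∫⁻ ξ : ℝ × ℝ,
      ENNReal.ofReal ((1 + ξ.1 ^ 2 + ξ.2 ^ 2) ^ s) * (‖FT f ξ‖₊ : ℝ≥0∞) ^ (2 : ℝ)) ^ ((1:ℝ)/2)

/-- The mixed norm `‖f‖_{L^{9/4}_T L^∞_x}`. -/
def L94LinfNorm (T : ℝ) (f : ℝ → ℝ × ℝ → ℂ) : ℝ≥0∞ :=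
  (∫⁻ t in Set.Icc (0:ℝ) T, (eLpNorm (f t) ⊤ volume) ^ ((9:ℝ)/4)) ^ ((4:ℝ)/9)

/-- The mixed norm `‖f‖_{L²_{x₁} L^∞_{x₂ T}}` (with genuine suprema). -/
def L2x1LinfNorm (T : ℝ) (f : ℝ → ℝ × ℝ → ℂ) : ℝ≥0∞ :=
  (∫⁻ x₁ : ℝ,
      (⨆ x₂ : ℝ, ⨆ t ∈ Set.Icc (0:ℝ) T, (‖f t (x₁, x₂)‖₊ : ℝ≥0∞)) ^ (2 : ℝ)) ^ ((1:ℝ)/2)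

/-- The mixed norm `‖f‖_{L^∞_{x₁} L²_{x₂ T}}`. -/
def LinfX1L2Norm (T : ℝ) (f : ℝ → ℝ × ℝ → ℂ) : ℝ≥0∞ :=
  ⨆ x₁ : ℝ,
    (∫⁻ x₂ : ℝ, ∫⁻ t in Set.Icc (0:ℝ) T, (‖f t (x₁, x₂)‖₊ : ℝ≥0∞) ^ (2 : ℝ)) ^ ((1:ℝ)/2)

/-- The mixed norm `‖g‖_{L¹_{x₁} L²_{x₂ T}}`. -/
def L1x1L2Norm (T : ℝ) (g : ℝ → ℝ × ℝ → ℂ) : ℝ≥0∞ :=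
  ∫⁻ x₁ : ℝ,
    (∫⁻ x₂ : ℝ, ∫⁻ τ in Set.Icc (0:ℝ) T, (‖g τ (x₁, x₂)‖₊ : ℝ≥0∞) ^ (2 : ℝ)) ^ ((1:ℝ)/2)


/-! ### Characters and the dispersion relation -/

/-- The unimodular character `e^{iθ}`. -/
def ex (θ : ℝ) : ℂ := Complex.exp ((θ : ℂ) * Complex.I)

/-- The dispersion relation `φ(ξ) = ξ₁(ξ₁² + ξ₂²)`. -/
def ph (ξ : ℝ × ℝ) : ℝ := ξ.1 * (ξ.1 ^ 2 + ξ.2 ^ 2)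

lemma ex_add (a b : ℝ) : ex (a + b) = ex a * ex b := by
  simp [ex, add_mul, Complex.exp_add]

@[simp] lemma norm_ex (a : ℝ) : ‖ex a‖ = 1 := Complex.norm_exp_ofReal_mul_I a

lemma conj_ex (a : ℝ) : (starRingEnd ℂ) (ex a) = ex (-a) := by
  simp [ex, ← Complex.exp_conj]

@[simp] lemma ex_zero : ex 0 = 1 := by simp [ex]

@[fun_prop] lemma continuous_ex : Continuous ex := by unfold ex; fun_prop

@[fun_prop] lemma measurable_ex : Measurable ex := continuous_ex.measurable

@[fun_prop] lemma continuous_ph : Continuous ph := by unfold ph; fun_prop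

@[fun_prop] lemma measurable_ph : Measurable ph := continuous_ph.measurable

lemma hasDerivAt_ex {p : ℝ → ℝ} {p' x : ℝ} (h : HasDerivAt p p' x) :
    HasDerivAt (fun y => ex (p y)) ((p' : ℂ) * Complex.I * ex (p x)) x := by
  unfold ex
  have := ((h.ofReal_comp).mul_const Complex.I).cexp
  simpa [mul_comm, mul_assoc, mul_left_comm] using this

/-! ### Van der Corput estimates -/

/-- First-derivative test. -/
lemma vdc1 {p p1 p2 : ℝ → ℝ} {c d ρ : ℝ} (hcd : c ≤ d) (hρ : 0 < ρ)
    (h1 : ∀ x ∈ Set.Icc c d, HasDerivAt p (p1 x) x)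
    (h2 : ∀ x ∈ Set.Icc c d, HasDerivAt p1 (p2 x) x)
    (hc : ContinuousOn p2 (Set.Icc c d))
    (hpos : ∀ x ∈ Set.Icc c d, 0 ≤ p2 x)
    (hl : ∀ x ∈ Set.Icc c d, ρ ≤ |p1 x|) :
    ‖∫ x in c..d, ex (p x)‖ ≤ 4 / ρ := by
  have hne : ∀ x ∈ Set.Icc c d, p1 x ≠ 0 := fun x hx h => by
    have := hl x hx; rw [h, abs_zero] at this; linarith
  have huI : Set.uIcc c d = Set.Icc c d := Set.uIcc_of_le hcd
  have cp : ContinuousOn p (Set.Icc c d) := fun x hx => (h1 x hx).continuousAt.continuousWithinAt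
  have cp1 : ContinuousOn p1 (Set.Icc c d) :=
    fun x hx => (h2 x hx).continuousAt.continuousWithinAt
  have cex : ContinuousOn (fun x => ex (p x)) (Set.Icc c d) := continuous_ex.comp_continuousOn cp
  -- the reciprocal of the first derivative and its derivative
  have hinv : ∀ x ∈ Set.Icc c d, HasDerivAt (fun y => (p1 y)⁻¹) (-p2 x / (p1 x) ^ 2) x :=
    fun x hx => (h2 x hx).inv (hne x hx)
  have cq : ContinuousOn (fun x => -p2 x / (p1 x) ^ 2) (Set.Icc c d) :=
    hc.neg.div (cp1.pow 2) (fun x hx => pow_ne_zero 2 (hne x hx))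
  have cq' : ContinuousOn (fun x => ((-p2 x / (p1 x) ^ 2 : ℝ) : ℂ)) (Set.Icc c d) :=
    Complex.continuous_ofReal.comp_continuousOn cq
  have cv : ContinuousOn (fun x => (p1 x : ℂ) * Complex.I * ex (p x)) (Set.Icc c d) :=
    ((Complex.continuous_ofReal.comp_continuousOn cp1).mul continuousOn_const).mul cex
  have key := intervalIntegral.integral_mul_deriv_eq_deriv_mul (a := c) (b := d)
    (u := fun x => (((p1 x)⁻¹ : ℝ) : ℂ)) (v := fun x => ex (p x))
    (u' := fun x => ((-p2 x / (p1 x) ^ 2 : ℝ) : ℂ))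
    (v' := fun x => (p1 x : ℂ) * Complex.I * ex (p x))
    (fun x hx => (hinv x (huI ▸ hx)).ofReal_comp)
    (fun x hx => hasDerivAt_ex (h1 x (huI ▸ hx)))
    (ContinuousOn.intervalIntegrable (huI ▸ cq'))
    (ContinuousOn.intervalIntegrable (huI ▸ cv))
  have e1 : ∫ x in c..d, (((p1 x)⁻¹ : ℝ) : ℂ) * ((p1 x : ℂ) * Complex.I * ex (p x))
      = Complex.I * ∫ x in c..d, ex (p x) := by
    rw [← intervalIntegral.integral_const_mul]
    refine intervalIntegral.integral_congr (fun x hx => ?_)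
    have : (p1 x : ℂ) ≠ 0 := by exact_mod_cast hne x (huI ▸ hx)
    simp only [Complex.ofReal_inv]
    field_simp
  have e2 : ‖∫ x in c..d, ((-p2 x / (p1 x) ^ 2 : ℝ) : ℂ) * ex (p x)‖ ≤ 2 / ρ := by
    have b1 : ‖∫ x in c..d, ((-p2 x / (p1 x) ^ 2 : ℝ) : ℂ) * ex (p x)‖
        ≤ ∫ x in c..d, p2 x / (p1 x) ^ 2 := by
      refine intervalIntegral.norm_integral_le_of_norm_le hcd ?_ ?_
      · refine Filter.Eventually.of_forall (fun x hx => ?_)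
        have hx' := Set.Ioc_subset_Icc_self hx
        rw [norm_mul, norm_ex, mul_one, Complex.norm_real, Real.norm_eq_abs, neg_div, abs_neg,
          abs_of_nonneg (div_nonneg (hpos x hx') (sq_nonneg _))]
      · refine ContinuousOn.intervalIntegrable (huI ▸ ?_)
        exact hc.div (cp1.pow 2) (fun x hx => pow_ne_zero 2 (hne x hx))
    have b2 : ∫ x in c..d, -p2 x / (p1 x) ^ 2 = (p1 d)⁻¹ - (p1 c)⁻¹ :=
      intervalIntegral.integral_eq_sub_of_hasDerivAt (fun x hx => hinv x (huI ▸ hx))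
        (ContinuousOn.intervalIntegrable (huI ▸ cq))
    have b3 : ∫ x in c..d, p2 x / (p1 x) ^ 2 = (p1 c)⁻¹ - (p1 d)⁻¹ := by
      have : ∫ x in c..d, p2 x / (p1 x) ^ 2 = - ∫ x in c..d, -p2 x / (p1 x) ^ 2 := by
        rw [← intervalIntegral.integral_neg]; congr 1; ext x; ring
      rw [this, b2]; ring
    have i1 : |(p1 c)⁻¹| ≤ 1 / ρ := by
      rw [abs_inv, ← one_div]; exact one_div_le_one_div_of_le hρ (hl c ⟨le_rfl, hcd⟩)
    have i2 : |(p1 d)⁻¹| ≤ 1 / ρ := by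
      rw [abs_inv, ← one_div]; exact one_div_le_one_div_of_le hρ (hl d ⟨hcd, le_rfl⟩)
    have := abs_le.1 i1; have := abs_le.1 i2
    have : (2:ℝ) / ρ = 1 / ρ + 1 / ρ := by ring
    linarith
  have e3 : ∀ x ∈ Set.Icc c d, ‖(((p1 x)⁻¹ : ℝ) : ℂ) * ex (p x)‖ ≤ 1 / ρ := fun x hx => by
    rw [norm_mul, norm_ex, mul_one, Complex.norm_real, Real.norm_eq_abs, abs_inv, ← one_div]
    exact one_div_le_one_div_of_le hρ (hl x hx)
  have e4 := e3 c ⟨le_rfl, hcd⟩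
  have e5 := e3 d ⟨hcd, le_rfl⟩
  rw [e1] at key
  have : ‖∫ x in c..d, ex (p x)‖ = ‖Complex.I * ∫ x in c..d, ex (p x)‖ := by simp
  rw [this, key]
  refine (norm_sub_le _ _).trans ?_
  have := norm_sub_le ((((p1 d)⁻¹ : ℝ) : ℂ) * ex (p d)) ((((p1 c)⁻¹ : ℝ) : ℂ) * ex (p c))
  have : (4:ℝ) / ρ = 1 / ρ + 1 / ρ + 2 / ρ := by ring
  linarith

/-- A function of slope at least `lam` exceeds `ρ` in absolute value off an interval of length
at most `2ρ/lam`. -/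
lemma split_mono {q q' : ℝ → ℝ} {c d ρ lam : ℝ} (hcd : c ≤ d) (hρ : 0 < ρ) (hlam : 0 < lam)
    (h : ∀ x ∈ Set.Icc c d, HasDerivAt q (q' x) x)
    (hl : ∀ x ∈ Set.Icc c d, lam ≤ q' x) :
    ∃ u v, c ≤ u ∧ u ≤ v ∧ v ≤ d ∧ v - u ≤ 2 * ρ / lam ∧
      (c < u → ∀ x ∈ Set.Icc c u, q x ≤ -ρ) ∧ (v < d → ∀ x ∈ Set.Icc v d, ρ ≤ q x) := by
  have cq : ContinuousOn q (Set.Icc c d) := fun x hx => (h x hx).continuousAt.continuousWithinAt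
  have slope : ∀ x ∈ Set.Icc c d, ∀ y ∈ Set.Icc c d, x ≤ y → lam * (y - x) ≤ q y - q x := by
    refine (convex_Icc c d).mul_sub_le_image_sub_of_le_deriv cq ?_ ?_
    · intro x hx
      exact (h x (interior_subset hx)).differentiableAt.differentiableWithinAt
    · intro x hx
      rw [(h x (interior_subset hx)).deriv]; exact hl x (interior_subset hx)
  have mono : ∀ x ∈ Set.Icc c d, ∀ y ∈ Set.Icc c d, x ≤ y → q x ≤ q y := fun x hx y hy hxy => by
    have := slope x hx y hy hxy
    have : 0 ≤ lam * (y - x) := mul_nonneg hlam.le (by linarith)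
    linarith
  have hcI : c ∈ Set.Icc c d := ⟨le_rfl, hcd⟩
  have hdI : d ∈ Set.Icc c d := ⟨hcd, le_rfl⟩
  -- a crossing point at an arbitrary level
  have cross : ∀ r : ℝ, ∃ u ∈ Set.Icc c d, (c < u → q u ≤ r) ∧ (u < d → r ≤ q u) := by
    intro r
    by_cases h1 : r ≤ q c
    · exact ⟨c, hcI, fun h => absurd h (lt_irrefl _), fun _ => h1⟩
    by_cases h2 : q d ≤ r
    · exact ⟨d, hdI, fun _ => h2, fun h => absurd h (lt_irrefl _)⟩
    obtain ⟨u, hu, hur⟩ := intermediate_value_Icc hcd cq ⟨(not_le.1 h1).le, (not_le.1 h2).le⟩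
    exact ⟨u, hu, fun _ => hur.le, fun _ => hur.ge⟩
  obtain ⟨u, hu, hu1, hu2⟩ := cross (-ρ)
  obtain ⟨v, hv, hv1, hv2⟩ := cross ρ
  by_cases huv : u ≤ v
  · refine ⟨u, v, hu.1, huv, hv.2, ?_, fun hcu x hx => ?_, fun hvd x hx => ?_⟩
    · rcases huv.eq_or_lt with e | e
      · rw [e, sub_self]; positivity
      · have := slope u hu v hv huv
        have := hu2 (e.trans_le hv.2)
        have := hv1 (hu.1.trans_lt e)
        rw [le_div_iff₀ hlam]; linarith
    · exact (mono x ⟨hx.1, hx.2.trans hu.2⟩ u hu hx.2).trans (hu1 hcu)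
    · exact (hv2 hvd).trans (mono v hv x ⟨hv.1.trans hx.1, hx.2⟩ hx.1)
  · exfalso
    push Not at huv
    have := mono v hv u hu huv.le
    have := hu1 (hv.1.trans_lt huv)
    have := hv2 (huv.trans_le hu.2)
    linarith

lemma norm_integral_ex_le (p : ℝ → ℝ) {u v : ℝ} (h : u ≤ v) :
    ‖∫ x in u..v, ex (p x)‖ ≤ v - u := by
  have := intervalIntegral.norm_integral_le_of_norm_le_const (a := u) (b := v) (C := 1)
    (f := fun x => ex (p x)) (fun x _ => (norm_ex _).le)
  rwa [one_mul, abs_of_nonneg (by linarith)] at this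

/-- Splitting an oscillatory integral in three pieces. -/
lemma split3 {p : ℝ → ℝ} {c d u v A B L : ℝ} (cp : ContinuousOn p (Set.Icc c d))
    (h1 : c ≤ u) (h2 : u ≤ v) (h3 : v ≤ d) (hA : ‖∫ x in c..u, ex (p x)‖ ≤ A)
    (hB : ‖∫ x in v..d, ex (p x)‖ ≤ B) (hL : v - u ≤ L) :
    ‖∫ x in c..d, ex (p x)‖ ≤ A + L + B := by
  have cex : ContinuousOn (fun x => ex (p x)) (Set.Icc c d) := continuous_ex.comp_continuousOn cp
  have ii : ∀ x y, c ≤ x → x ≤ y → y ≤ d → IntervalIntegrable (fun x => ex (p x)) volume x y := by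
    intro x y hx hxy hy
    refine ContinuousOn.intervalIntegrable ?_
    rw [Set.uIcc_of_le hxy]
    exact cex.mono (Set.Icc_subset_Icc hx hy)
  have e : ∫ x in c..d, ex (p x)
      = (∫ x in c..u, ex (p x)) + (∫ x in u..v, ex (p x)) + ∫ x in v..d, ex (p x) := by
    rw [intervalIntegral.integral_add_adjacent_intervals (ii c u le_rfl h1 (h2.trans h3))
      (ii u v h1 h2 h3), intervalIntegral.integral_add_adjacent_intervals
      (ii c v le_rfl (h1.trans h2) h3) (ii v d (h1.trans h2) h3 le_rfl)]
  rw [e]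
  refine (norm_add₃_le).trans ?_
  have := norm_integral_ex_le p h2
  linarith

/-- Second-derivative test. -/
lemma vdc2 {p p1 p2 : ℝ → ℝ} {c d lam : ℝ} (hcd : c ≤ d) (hlam : 0 < lam)
    (h1 : ∀ x ∈ Set.Icc c d, HasDerivAt p (p1 x) x)
    (h2 : ∀ x ∈ Set.Icc c d, HasDerivAt p1 (p2 x) x)
    (hc : ContinuousOn p2 (Set.Icc c d))
    (hl : ∀ x ∈ Set.Icc c d, lam ≤ p2 x) :
    ‖∫ x in c..d, ex (p x)‖ ≤ 10 / Real.sqrt lam := by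
  have hs := Real.sqrt_pos.2 hlam
  obtain ⟨u, v, hcu, huv, hvd, hL, hm, hp⟩ := split_mono hcd hs hlam h2 hl
  have cp : ContinuousOn p (Set.Icc c d) := fun x hx => (h1 x hx).continuousAt.continuousWithinAt
  have hL' : 2 * Real.sqrt lam / lam = 2 / Real.sqrt lam := by
    have := Real.mul_self_sqrt hlam.le
    rw [div_eq_div_iff hlam.ne' hs.ne']; linear_combination 2 * this
  rw [hL'] at hL
  have hA : ‖∫ x in c..u, ex (p x)‖ ≤ 4 / Real.sqrt lam := by
    rcases hcu.eq_or_lt with e | e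
    · rw [e, intervalIntegral.integral_same, norm_zero]; positivity
    have sub : Set.Icc c u ⊆ Set.Icc c d := Set.Icc_subset_Icc le_rfl (huv.trans hvd)
    refine vdc1 hcu hs (fun x hx => h1 x (sub hx)) (fun x hx => h2 x (sub hx)) (hc.mono sub)
      (fun x hx => hlam.le.trans (hl x (sub hx))) (fun x hx => ?_)
    have := hm e x hx
    rw [abs_of_nonpos (by linarith)]; linarith
  have hB : ‖∫ x in v..d, ex (p x)‖ ≤ 4 / Real.sqrt lam := by
    rcases hvd.eq_or_lt with e | e
    · rw [e, intervalIntegral.integral_same, norm_zero]; positivity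
    have sub : Set.Icc v d ⊆ Set.Icc c d := Set.Icc_subset_Icc (hcu.trans huv) le_rfl
    refine vdc1 hvd hs (fun x hx => h1 x (sub hx)) (fun x hx => h2 x (sub hx)) (hc.mono sub)
      (fun x hx => hlam.le.trans (hl x (sub hx))) (fun x hx => ?_)
    exact (hp e x hx).trans (le_abs_self _)
  refine (split3 cp hcu huv hvd hA hB hL).trans (le_of_eq ?_)
  ring

lemma norm_integral_ex_neg (p : ℝ → ℝ) (c d : ℝ) :
    ‖∫ x in c..d, ex (-(p x))‖ = ‖∫ x in c..d, ex (p x)‖ := by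
  have : ∫ x in c..d, ex (-(p x)) = (starRingEnd ℂ) (∫ x in c..d, ex (p x)) := by
    simp only [intervalIntegral, map_sub, ← integral_conj, conj_ex]
  rw [this, RCLike.norm_conj]

/-- Third-derivative test; the inner threshold for the second derivative is `lam^{2/3}`, written
here with `lam = σ³`. -/
lemma vdc3 {p p1 p2 p3 : ℝ → ℝ} {c d σ : ℝ} (hcd : c ≤ d) (hσ : 0 < σ)
    (h1 : ∀ x ∈ Set.Icc c d, HasDerivAt p (p1 x) x)
    (h2 : ∀ x ∈ Set.Icc c d, HasDerivAt p1 (p2 x) x)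
    (h3 : ∀ x ∈ Set.Icc c d, HasDerivAt p2 (p3 x) x)
    (hl : ∀ x ∈ Set.Icc c d, σ ^ 3 ≤ p3 x) :
    ‖∫ x in c..d, ex (p x)‖ ≤ 22 / σ := by
  have hs : 0 < σ ^ 2 := by positivity
  obtain ⟨u, v, hcu, huv, hvd, hL, hm, hp⟩ := split_mono hcd hs (by positivity) h3 hl
  have cp : ContinuousOn p (Set.Icc c d) := fun x hx => (h1 x hx).continuousAt.continuousWithinAt
  have cp2 : ContinuousOn p2 (Set.Icc c d) :=
    fun x hx => (h3 x hx).continuousAt.continuousWithinAt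
  have hL' : 2 * σ ^ 2 / σ ^ 3 = 2 / σ := by field_simp
  rw [hL'] at hL
  have sq : Real.sqrt (σ ^ 2) = σ := Real.sqrt_sq hσ.le
  have hA : ‖∫ x in c..u, ex (p x)‖ ≤ 10 / σ := by
    rcases hcu.eq_or_lt with e | e
    · rw [e, intervalIntegral.integral_same, norm_zero]; positivity
    have sub : Set.Icc c u ⊆ Set.Icc c d := Set.Icc_subset_Icc le_rfl (huv.trans hvd)
    rw [← norm_integral_ex_neg]
    have := vdc2 (p := fun x => -p x) (p1 := fun x => -p1 x) (p2 := fun x => -p2 x) hcu hs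
      (fun x hx => (h1 x (sub hx)).neg) (fun x hx => (h2 x (sub hx)).neg) (cp2.mono sub).neg
      (fun x hx => by have := hm e x hx; linarith)
    rwa [sq] at this
  have hB : ‖∫ x in v..d, ex (p x)‖ ≤ 10 / σ := by
    rcases hvd.eq_or_lt with e | e
    · rw [e, intervalIntegral.integral_same, norm_zero]; positivity
    have sub : Set.Icc v d ⊆ Set.Icc c d := Set.Icc_subset_Icc (hcu.trans huv) le_rfl
    have := vdc2 hvd hs (fun x hx => h1 x (sub hx)) (fun x hx => h2 x (sub hx)) (cp2.mono sub)
      (fun x hx => hp e x hx)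
    rwa [sq] at this
  refine (split3 cp hcu huv hvd hA hB hL).trans (le_of_eq ?_)
  ring

/-- Insertion of a monotone amplitude into an integral whose partial integrals are bounded. -/
lemma amplitude {f : ℝ → ℂ} {ψ ψ' : ℝ → ℝ} {c d M : ℝ} (hcd : c ≤ d)
    (hf : ∀ x ∈ Set.Icc c d, ContinuousAt f x)
    (hM : ∀ x ∈ Set.Icc c d, ‖∫ y in c..x, f y‖ ≤ M)
    (hψ : ∀ x ∈ Set.Icc c d, HasDerivAt ψ (ψ' x) x)
    (hψ' : ContinuousOn ψ' (Set.Icc c d))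
    (hsgn : (∀ x ∈ Set.Icc c d, 0 ≤ ψ' x) ∨ (∀ x ∈ Set.Icc c d, ψ' x ≤ 0)) :
    ‖∫ x in c..d, (ψ x : ℂ) * f x‖ ≤ (|ψ d| + |ψ d - ψ c|) * M := by
  have huI : Set.uIcc c d = Set.Icc c d := Set.uIcc_of_le hcd
  have hM0 : 0 ≤ M := (norm_nonneg _).trans (hM c ⟨le_rfl, hcd⟩)
  have cf : ContinuousOn f (Set.Icc c d) := fun x hx => (hf x hx).continuousWithinAt
  have iif : IntervalIntegrable f volume c d := ContinuousOn.intervalIntegrable (huI ▸ cf)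
  have cF : ContinuousOn (fun x => ∫ y in c..x, f y) (Set.Icc c d) := by
    have := intervalIntegral.continuousOn_primitive_interval (μ := volume) (f := f) (a := c) (b := d)
      (by rw [huI]; exact cf.integrableOn_Icc)
    rwa [huI] at this
  have hF : ∀ x ∈ Set.Ioo c d, HasDerivAt (fun x => ∫ y in c..x, f y) (f x) x := by
    intro x hx
    have hx' := Set.Ioo_subset_Icc_self hx
    refine intervalIntegral.integral_hasDerivAt_right ?_ ?_ (hf x hx')
    · refine ContinuousOn.intervalIntegrable ?_
      rw [Set.uIcc_of_le hx'.1]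
      exact cf.mono (Set.Icc_subset_Icc le_rfl hx'.2)
    · exact (cf.mono Set.Ioo_subset_Icc_self).stronglyMeasurableAtFilter isOpen_Ioo x hx
  have cψ : ContinuousOn ψ (Set.Icc c d) := fun x hx => (hψ x hx).continuousAt.continuousWithinAt
  have iψ : IntervalIntegrable ψ' volume c d := ContinuousOn.intervalIntegrable (huI ▸ hψ')
  have key := intervalIntegral.integral_mul_deriv_eq_deriv_mul_of_hasDerivAt (a := c) (b := d)
    (u := fun x => (ψ x : ℂ)) (v := fun x => ∫ y in c..x, f y)
    (u' := fun x => (ψ' x : ℂ)) (v' := f)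
    (by rw [huI]; exact Complex.continuous_ofReal.comp_continuousOn cψ)
    (by rw [huI]; exact cF)
    (fun x hx => (hψ x (by
      rw [min_eq_left hcd, max_eq_right hcd] at hx; exact Set.Ioo_subset_Icc_self hx)).ofReal_comp)
    (fun x hx => hF x (by rwa [min_eq_left hcd, max_eq_right hcd] at hx))
    ⟨iψ.1.ofReal, iψ.2.ofReal⟩ iif
  rw [key]
  simp only [intervalIntegral.integral_same, mul_zero, sub_zero]
  have e1 : ‖(ψ d : ℂ) * ∫ y in c..d, f y‖ ≤ |ψ d| * M := by
    rw [norm_mul, Complex.norm_real, Real.norm_eq_abs]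
    exact mul_le_mul_of_nonneg_left (hM d ⟨hcd, le_rfl⟩) (abs_nonneg _)
  have e2 : ‖∫ x in c..d, (ψ' x : ℂ) * ∫ y in c..x, f y‖ ≤ |ψ d - ψ c| * M := by
    have b1 : ‖∫ x in c..d, (ψ' x : ℂ) * ∫ y in c..x, f y‖ ≤ ∫ x in c..d, |ψ' x| * M := by
      refine intervalIntegral.norm_integral_le_of_norm_le hcd ?_ ?_
      · refine Filter.Eventually.of_forall (fun x hx => ?_)
        rw [norm_mul, Complex.norm_real, Real.norm_eq_abs]
        exact mul_le_mul_of_nonneg_left (hM x (Set.Ioc_subset_Icc_self hx)) (abs_nonneg _)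
      · exact iψ.abs.mul_const M
    have b2 : ∫ x in c..d, ψ' x = ψ d - ψ c :=
      intervalIntegral.integral_eq_sub_of_hasDerivAt (fun x hx => hψ x (huI ▸ hx)) iψ
    refine b1.trans ?_
    rw [intervalIntegral.integral_mul_const]
    refine mul_le_mul_of_nonneg_right ?_ hM0
    rw [← b2]
    rcases hsgn with hs | hs
    · refine le_trans (le_of_eq ?_) (le_abs_self _)
      exact intervalIntegral.integral_congr (fun x hx => abs_of_nonneg (hs x (huI ▸ hx)))
    · refine le_trans (le_of_eq ?_) (neg_le_abs _)
      rw [← intervalIntegral.integral_neg]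
      exact intervalIntegral.integral_congr (fun x hx => abs_of_nonpos (hs x (huI ▸ hx)))
  refine (norm_sub_le _ _).trans ?_
  linarith

/-! ### The oscillatory integral and the dispersive estimate -/

/-- The cubic-minus-reciprocal phase has third derivative at least `6σ³`. -/
lemma osc_plain {σ μ z c d : ℝ} (hσ : 0 < σ) (hμ : 0 ≤ μ) (hc : 0 < c) (hcd : c ≤ d) :
    ‖∫ x in c..d, ex (σ ^ 3 * x ^ 3 + z * x - μ / x)‖ ≤ 22 / σ := by
  have hx0 : ∀ x ∈ Set.Icc c d, x ≠ 0 := fun x hx => (hc.trans_le hx.1).ne'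
  refine vdc3 (p1 := fun x => 3 * σ ^ 3 * x ^ 2 + z + μ / x ^ 2)
    (p2 := fun x => 6 * σ ^ 3 * x - 2 * μ / x ^ 3)
    (p3 := fun x => 6 * σ ^ 3 + 6 * μ / x ^ 4) hcd hσ ?_ ?_ ?_ ?_
  · intro x hx
    have h0 := hx0 x hx
    have h1 := ((hasDerivAt_pow 3 x).const_mul (σ ^ 3)).add ((hasDerivAt_id x).const_mul z)
    have h2 := (hasDerivAt_inv h0).const_mul μ
    convert! h1.sub h2 using 1
    push_cast
    ring
  · intro x hx
    have h0 := hx0 x hx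
    have h1 := ((hasDerivAt_pow 2 x).const_mul (3 * σ ^ 3)).add_const z
    have h2 := ((hasDerivAt_pow 2 x).inv (pow_ne_zero 2 h0)).const_mul μ
    convert! h1.add h2 using 1
    field_simp
    norm_num
    ring
  · intro x hx
    have h0 := hx0 x hx
    have h1 := (hasDerivAt_id x).const_mul (6 * σ ^ 3)
    have h2 := ((hasDerivAt_pow 3 x).inv (pow_ne_zero 3 h0)).const_mul (2 * μ)
    convert! h1.sub h2 using 1
    field_simp
    norm_num
    ring
  · intro x hx
    have h0 : 0 < x := hc.trans_le hx.1
    have : 0 ≤ 6 * μ / x ^ 4 := by positivity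
    have : 0 < σ ^ 3 := by positivity
    linarith

/-- The increasing amplitude `e^{-κ/x}` is bounded by `1`, so inserting it into `osc_plain` costs
a factor `2` at most. -/
lemma osc_exp {σ μ z κ c d : ℝ} (hσ : 0 < σ) (hμ : 0 ≤ μ) (hκ : 0 ≤ κ) (hc : 0 < c)
    (hcd : c ≤ d) :
    ‖∫ x in c..d, (Real.exp (-(κ / x)) : ℂ) * ex (σ ^ 3 * x ^ 3 + z * x - μ / x)‖
      ≤ 44 / σ := by
  have hx0 : ∀ x ∈ Set.Icc c d, x ≠ 0 := fun x hx => (hc.trans_le hx.1).ne'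
  have h := amplitude (f := fun x => ex (σ ^ 3 * x ^ 3 + z * x - μ / x))
    (ψ := fun x => Real.exp (-(κ / x))) (ψ' := fun x => Real.exp (-(κ / x)) * (κ / x ^ 2))
    (M := 22 / σ) hcd
    (fun x hx => continuous_ex.continuousAt.comp (by have := hx0 x hx; fun_prop (disch := assumption)))
    (fun x hx => osc_plain hσ hμ hc hx.1)
    (fun x hx => by
      have h2 := ((hasDerivAt_inv (hx0 x hx)).const_mul κ).neg.exp
      convert! h2 using 1
      have := hx0 x hx
      simp only [Pi.neg_apply, ← div_eq_mul_inv]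
      ring)
    (by
      refine ContinuousOn.mul (Real.continuous_exp.comp_continuousOn ?_) ?_
      · exact (continuousOn_const.div continuousOn_id hx0).neg
      · exact continuousOn_const.div (continuousOn_id.pow 2) (fun x hx => pow_ne_zero 2 (hx0 x hx)))
    (Or.inl fun x hx => by positivity)
  refine h.trans ?_
  have b : ∀ x, c ≤ x → 0 < Real.exp (-(κ / x)) ∧ Real.exp (-(κ / x)) ≤ 1 := fun x hx => by
    have : 0 < x := hc.trans_le hx
    refine ⟨Real.exp_pos _, Real.exp_le_one_iff.2 ?_⟩
    have : 0 ≤ κ / x := by positivity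
    linarith
  have b1 := b c le_rfl
  have b2 := b d hcd
  have : |Real.exp (-(κ / d))| + |Real.exp (-(κ / d)) - Real.exp (-(κ / c))| ≤ 2 := by
    rw [abs_of_pos b2.1]
    have : |Real.exp (-(κ / d)) - Real.exp (-(κ / c))| ≤ 1 := abs_le.2 ⟨by linarith, by linarith⟩
    linarith
  calc _ ≤ 2 * (22 / σ) := mul_le_mul_of_nonneg_right this (by positivity)
    _ = _ := by ring

/-- The half-line oscillatory integral with amplitude `ξ^{-β}e^{-κ/ξ}`, uniformly in all the
parameters other than `σ`. -/
lemma osc_half {σ μ z κ β R : ℝ} (hσ : 0 < σ) (hμ : 0 ≤ μ) (hκ : 0 ≤ κ) (hβ0 : 0 ≤ β)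
    (hβ : β < 1) (hR : 0 < R) :
    ‖∫ x in (0:ℝ)..R, ((x ^ (-β) * Real.exp (-(κ / x)) : ℝ) : ℂ)
        * ex (σ ^ 3 * x ^ 3 + z * x - μ / x)‖
      ≤ (44 + 1 / (1 - β)) * σ ^ (-(1 - β)) := by
  set F : ℝ → ℂ := fun x => ((x ^ (-β) * Real.exp (-(κ / x)) : ℝ) : ℂ)
        * ex (σ ^ 3 * x ^ 3 + z * x - μ / x) with hF
  have hFm : Measurable F := by
    simp only [hF]; fun_prop
  have hFn : ∀ x, 0 < x → ‖F x‖ ≤ x ^ (-β) := fun x hx => by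
    simp only [hF, norm_mul, norm_ex, mul_one, Complex.norm_real, Real.norm_eq_abs]
    rw [abs_of_nonneg (Real.rpow_nonneg hx.le _), abs_of_pos (Real.exp_pos _)]
    refine mul_le_of_le_one_right (by positivity) (Real.exp_le_one_iff.2 ?_)
    have : 0 ≤ κ / x := by positivity
    linarith
  have hir : ∀ a b, IntervalIntegrable (fun x : ℝ => x ^ (-β)) volume a b := fun a b =>
    intervalIntegral.intervalIntegrable_rpow' (by linarith)
  have hiF : ∀ a b, 0 ≤ a → a ≤ b → IntervalIntegrable F volume a b := fun a b ha hab => by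
    refine (hir a b).mono_fun hFm.aestronglyMeasurable ?_
    rw [Set.uIoc_of_le hab]
    refine (ae_restrict_iff' measurableSet_Ioc).2 (Filter.Eventually.of_forall fun x hx => ?_)
    have hx0 : 0 < x := ha.trans_lt hx.1
    exact (hFn x hx0).trans (le_abs_self _)
  have near : ∀ b, 0 < b → ‖∫ x in (0:ℝ)..b, F x‖ ≤ b ^ (1 - β) / (1 - β) := fun b hb => by
    have h1 : ‖∫ x in (0:ℝ)..b, F x‖ ≤ ∫ x in (0:ℝ)..b, x ^ (-β) :=
      intervalIntegral.norm_integral_le_of_norm_le hb.le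
        (Filter.Eventually.of_forall fun x hx => hFn x hx.1) (hir 0 b)
    rw [integral_rpow (Or.inl (by linarith))] at h1
    rwa [Real.zero_rpow (by linarith), sub_zero, show -β + 1 = 1 - β by ring] at h1
  have hc : 0 < σ⁻¹ := inv_pos.2 hσ
  have hcp : (σ⁻¹) ^ (1 - β) = σ ^ (-(1 - β)) := by
    rw [Real.inv_rpow hσ.le, Real.rpow_neg hσ.le]
  have h1β : 0 < 1 - β := by linarith
  have hpos : 0 < σ ^ (-(1 - β)) := Real.rpow_pos_of_pos hσ _
  -- split at `x = σ⁻¹`: absolute values before it, oscillation after it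
  by_cases hcR : R ≤ σ⁻¹
  · refine (near R hR).trans ?_
    have : R ^ (1 - β) ≤ σ ^ (-(1 - β)) := hcp ▸ Real.rpow_le_rpow hR.le hcR h1β.le
    calc R ^ (1 - β) / (1 - β) ≤ σ ^ (-(1 - β)) / (1 - β) := by gcongr
      _ ≤ 44 * σ ^ (-(1 - β)) + σ ^ (-(1 - β)) / (1 - β) := by linarith
      _ = _ := by ring
  push Not at hcR
  have far : ‖∫ x in σ⁻¹..R, F x‖ ≤ 44 * σ ^ (-(1 - β)) := by
    have hx0 : ∀ x ∈ Set.Icc (σ⁻¹) R, x ≠ 0 := fun x hx => (hc.trans_le hx.1).ne'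
    have h := amplitude
      (f := fun x => (Real.exp (-(κ / x)) : ℂ) * ex (σ ^ 3 * x ^ 3 + z * x - μ / x))
      (ψ := fun x => x ^ (-β)) (ψ' := fun x => -β * x ^ (-β - 1))
      (M := 44 / σ) hcR.le
      (fun x hx => by
        have := hx0 x hx
        refine ContinuousAt.mul ?_ (continuous_ex.continuousAt.comp (by fun_prop (disch := assumption)))
        exact Complex.continuous_ofReal.continuousAt.comp
          (Real.continuous_exp.continuousAt.comp (by fun_prop (disch := assumption))))
      (fun x hx => osc_exp hσ hμ hκ hc hx.1)
      (fun x hx => Real.hasDerivAt_rpow_const (Or.inl (hx0 x hx)))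
      (continuousOn_const.mul (continuousOn_id.rpow_const (fun x hx => Or.inl (hx0 x hx))))
      (Or.inr fun x hx => by
        have : 0 < x := hc.trans_le hx.1
        have : 0 ≤ β * x ^ (-β - 1) := by positivity
        linarith)
    have e : ∫ x in σ⁻¹..R, F x = ∫ x in σ⁻¹..R, ((x ^ (-β) : ℝ) : ℂ) *
        ((Real.exp (-(κ / x)) : ℂ) * ex (σ ^ 3 * x ^ 3 + z * x - μ / x)) := by
      congr 1; ext x; simp only [hF, Complex.ofReal_mul]; ring
    rw [e]
    refine h.trans (le_of_eq ?_)
    have hm : R ^ (-β) ≤ (σ⁻¹) ^ (-β) := Real.rpow_le_rpow_of_nonpos hc hcR.le (by linarith)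
    rw [abs_of_nonneg (Real.rpow_nonneg hR.le _), abs_of_nonpos (by linarith)]
    have : σ ^ (-(1 - β)) = (σ⁻¹) ^ (-β) * σ⁻¹ := by
      rw [Real.inv_rpow hσ.le, ← Real.rpow_neg_one σ,
        ← Real.rpow_neg hσ.le, ← Real.rpow_add hσ]
      congr 1; ring
    rw [this]; ring
  rw [← intervalIntegral.integral_add_adjacent_intervals (hiF 0 _ le_rfl hc.le)
    (hiF _ R hc.le hcR.le)]
  refine (norm_add_le _ _).trans ?_
  have := near _ hc
  rw [hcp] at this
  calc _ ≤ σ ^ (-(1 - β)) / (1 - β) + 44 * σ ^ (-(1 - β)) := add_le_add this far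
    _ = _ := by ring

/-- The Gaussian integral in the second frequency variable. -/
lemma inner_gauss {δ s ξ y z : ℝ} (hδ : 0 < δ) (hξ : 0 < ξ) :
    ∫ u : ℝ, (Real.exp (-(δ * ξ * u ^ 2)) : ℂ) * ex (s * ph (ξ, u) + 2 * Real.pi * (z * ξ + y * u))
      = ((Real.pi : ℂ) / (δ - s * Complex.I)) ^ (1 / 2 : ℂ) *
        (((ξ ^ (-(1/2) : ℝ) * Real.exp (-((Real.pi ^ 2 * y ^ 2 * δ / (δ ^ 2 + s ^ 2)) / ξ)) : ℝ) : ℂ)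
          * ex (s * ξ ^ 3 + 2 * Real.pi * z * ξ -
            (Real.pi ^ 2 * y ^ 2 * s / (δ ^ 2 + s ^ 2)) / ξ)) := by
  have hB : (δ - s * Complex.I : ℂ) ≠ 0 := fun h => by
    have := congrArg Complex.re h; simp at this; exact hδ.ne' this
  have hre : (-(ξ * (δ - s * Complex.I)) : ℂ).re < 0 := by
    simp; positivity
  have key := integral_cexp_quadratic hre (2 * Real.pi * y * Complex.I)
    ((s * ξ ^ 3 + 2 * Real.pi * z * ξ) * Complex.I)
  have e1 : ∀ u : ℝ, (Real.exp (-(δ * ξ * u ^ 2)) : ℂ)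
      * ex (s * ph (ξ, u) + 2 * Real.pi * (z * ξ + y * u))
      = Complex.exp (-(ξ * (δ - s * Complex.I)) * (u : ℂ) ^ 2 + 2 * Real.pi * y * Complex.I * u
        + (s * ξ ^ 3 + 2 * Real.pi * z * ξ) * Complex.I) := fun u => by
    unfold ex ph
    rw [Complex.ofReal_exp, ← Complex.exp_add]
    congr 1; push_cast; ring
  simp_rw [e1]
  rw [key]
  have e2 : ((Real.pi : ℂ) / - -(ξ * (δ - s * Complex.I))) ^ (1 / 2 : ℂ)
      = ((Real.pi : ℂ) / (δ - s * Complex.I)) ^ (1 / 2 : ℂ) * ((ξ ^ (-(1/2) : ℝ) : ℝ) : ℂ) := by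
    have hpi : (Real.pi : ℂ) / (δ - s * Complex.I) ≠ 0 :=
      div_ne_zero (by exact_mod_cast Real.pi_ne_zero) hB
    have a : (Real.pi : ℂ) / - -(ξ * (δ - s * Complex.I))
        = ((ξ⁻¹ : ℝ) : ℂ) * ((Real.pi : ℂ) / (δ - s * Complex.I)) := by
      push_cast; field_simp
    rw [a, Complex.cpow_def_of_ne_zero (mul_ne_zero (by exact_mod_cast (inv_pos.2 hξ).ne') hpi),
      Complex.cpow_def_of_ne_zero hpi, Complex.log_ofReal_mul (inv_pos.2 hξ) hpi,
      Real.rpow_def_of_pos hξ, Real.log_inv, Complex.ofReal_exp, ← Complex.exp_add]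
    congr 1; push_cast; ring
  rw [e2, mul_assoc]
  congr 1
  rw [Complex.ofReal_mul]
  refine (congrArg _ ?_).trans (mul_assoc _ _ _).symm
  unfold ex
  rw [Complex.ofReal_exp, ← Complex.exp_add]
  congr 1
  have hd : (δ ^ 2 + s ^ 2 : ℂ) ≠ 0 := by
    have : (δ ^ 2 + s ^ 2 : ℝ) ≠ 0 := by positivity
    exact_mod_cast this
  have hξ' : (ξ : ℂ) ≠ 0 := by exact_mod_cast hξ.ne'
  have hdd : (δ ^ 2 + s ^ 2 : ℂ) = (δ - s * Complex.I) * (δ + s * Complex.I) := by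
    linear_combination (s:ℂ)^2 * Complex.I_sq
  have hB' : (δ + s * Complex.I : ℂ) ≠ 0 := fun h => hd (by rw [hdd, h, mul_zero])
  push_cast
  rw [hdd]
  have h4 : (2 * Real.pi * y * Complex.I : ℂ) ^ 2 = -4 * Real.pi ^ 2 * y ^ 2 := by
    linear_combination (4 * Real.pi ^ 2 * y ^ 2 : ℂ) * Complex.I_sq
  rw [h4]
  field_simp
  ring

/-- One half-line `ξ₁ > 0` of the dispersive estimate, at positive times. The Gaussian integral in `ξ₂`
contributes `s^{-1/2} ξ₁^{-1/2}`, and `osc_half` with `β = 1/2 - 2r` and `σ = s^{1/3}` contributes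
`s^{-(1/6 + 2r/3)}`. The exponents add up to at most `22/27` because `r ≤ 2/9`, and `s ≤ 1`. -/
lemma half_kernel_pos {δ s y z r R : ℝ} (hδ : 0 < δ) (hs : 0 < s) (hs1 : s ≤ 1) (hr : 0 ≤ r)
    (hr2 : r ≤ 2 / 9) (hR : 0 < R) :
    ‖∫ ξ in (0:ℝ)..R, ((ξ ^ (2 * r) : ℝ) : ℂ) * ∫ u : ℝ, (Real.exp (-(δ * ξ * u ^ 2)) : ℂ)
        * ex (s * ph (ξ, u) + 2 * Real.pi * (z * ξ + y * u))‖
      ≤ 46 * Real.sqrt Real.pi * s ^ (-(22 / 27) : ℝ) := by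
  set σ : ℝ := s ^ (1 / 3 : ℝ) with hσd
  have hσ : 0 < σ := Real.rpow_pos_of_pos hs _
  have hσ3 : σ ^ 3 = s := by
    rw [hσd, ← Real.rpow_natCast, ← Real.rpow_mul hs.le]; norm_num
  set K : ℂ := ((Real.pi : ℂ) / (δ - s * Complex.I)) ^ (1 / 2 : ℂ) with hK
  set β : ℝ := 1 / 2 - 2 * r with hβ
  have e : ∫ ξ in (0:ℝ)..R, ((ξ ^ (2 * r) : ℝ) : ℂ) * ∫ u : ℝ, (Real.exp (-(δ * ξ * u ^ 2)) : ℂ)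
        * ex (s * ph (ξ, u) + 2 * Real.pi * (z * ξ + y * u))
      = K * ∫ ξ in (0:ℝ)..R,
        ((ξ ^ (-β) * Real.exp (-((Real.pi ^ 2 * y ^ 2 * δ / (δ ^ 2 + s ^ 2)) / ξ)) : ℝ) : ℂ)
          * ex (σ ^ 3 * ξ ^ 3 + (2 * Real.pi * z) * ξ -
            (Real.pi ^ 2 * y ^ 2 * s / (δ ^ 2 + s ^ 2)) / ξ) := by
    rw [← intervalIntegral.integral_const_mul]
    refine intervalIntegral.integral_congr_ae (Filter.Eventually.of_forall fun ξ hξ => ?_)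
    rw [Set.uIoc_of_le hR.le] at hξ
    rw [inner_gauss hδ hξ.1, hσ3, show -β = 2 * r + -(1/2) by rw [hβ]; ring,
      Real.rpow_add hξ.1]
    push_cast
    ring
  rw [e, norm_mul]
  have h1 := osc_half (σ := σ) (μ := Real.pi ^ 2 * y ^ 2 * s / (δ ^ 2 + s ^ 2))
    (z := 2 * Real.pi * z) (κ := Real.pi ^ 2 * y ^ 2 * δ / (δ ^ 2 + s ^ 2)) (β := β) hσ
    (by positivity) (by positivity) (by rw [hβ]; linarith) (by rw [hβ]; linarith) hR
  have h2 : ‖K‖ ≤ Real.sqrt Real.pi * s ^ (-(1 / 2) : ℝ) := by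
    have a : (1 / 2 : ℂ) = ((1 / 2 : ℝ) : ℂ) := by push_cast; rfl
    rw [hK, a, Complex.norm_cpow_real, norm_div, Complex.norm_real, Real.norm_eq_abs,
      abs_of_pos Real.pi_pos]
    have b : s ≤ ‖(δ - s * Complex.I : ℂ)‖ := by
      have := Complex.abs_im_le_norm (δ - s * Complex.I : ℂ)
      simpa [abs_of_pos hs] using this
    calc (Real.pi / ‖(δ - s * Complex.I : ℂ)‖) ^ (1 / 2 : ℝ)
        ≤ (Real.pi / s) ^ (1 / 2 : ℝ) := by
          have := Real.pi_pos
          gcongr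
      _ = _ := by
          rw [Real.div_rpow Real.pi_pos.le hs.le, Real.sqrt_eq_rpow, Real.rpow_neg hs.le]; rfl
  have h3 : (44 + 1 / (1 - β)) * σ ^ (-(1 - β)) ≤ 46 * s ^ (-(1 / 6 + 2 * r / 3) : ℝ) := by
    have a : σ ^ (-(1 - β)) = s ^ (-(1 / 6 + 2 * r / 3) : ℝ) := by
      rw [hσd, ← Real.rpow_mul hs.le]; congr 1; rw [hβ]; ring
    have b : 1 / (1 - β) ≤ 2 := by
      rw [hβ, div_le_iff₀ (by linarith)]; linarith
    rw [a]
    have := Real.rpow_nonneg hs.le (-(1 / 6 + 2 * r / 3))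
    gcongr; linarith
  calc ‖K‖ * _ ≤ (Real.sqrt Real.pi * s ^ (-(1 / 2) : ℝ)) * (46 * s ^ (-(1 / 6 + 2 * r / 3) : ℝ)) :=
        mul_le_mul h2 (h1.trans h3) (norm_nonneg _) (by positivity)
    _ = 46 * Real.sqrt Real.pi * s ^ (-(1 / 2) + -(1 / 6 + 2 * r / 3) : ℝ) := by
        rw [Real.rpow_add hs]; ring
    _ ≤ _ := by
        gcongr 46 * Real.sqrt Real.pi * ?_
        exact Real.rpow_le_rpow_of_exponent_ge hs hs1 (by linarith)

/-- Negative times follow from positive ones by complex conjugation. -/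
lemma half_kernel {δ s y z r R : ℝ} (hδ : 0 < δ) (hs : s ≠ 0) (hs1 : |s| ≤ 1) (hr : 0 ≤ r)
    (hr2 : r ≤ 2 / 9) (hR : 0 < R) :
    ‖∫ ξ in (0:ℝ)..R, ((ξ ^ (2 * r) : ℝ) : ℂ) * ∫ u : ℝ, (Real.exp (-(δ * ξ * u ^ 2)) : ℂ)
        * ex (s * ph (ξ, u) + 2 * Real.pi * (z * ξ + y * u))‖
      ≤ 46 * Real.sqrt Real.pi * |s| ^ (-(22 / 27) : ℝ) := by
  rcases lt_or_gt_of_ne hs with h | h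
  · have := half_kernel_pos (y := -y) (z := -z) hδ (neg_pos.2 h) (by rw [abs_of_neg h] at hs1; exact hs1)
      hr hr2 hR
    rw [abs_of_neg h]
    refine le_trans (le_of_eq ?_) this
    rw [← RCLike.norm_conj]
    congr 1
    simp only [intervalIntegral, map_sub, ← integral_conj, map_mul, conj_ex, Complex.conj_ofReal]
    have e : ∀ ξ u : ℝ, -(s * ph (ξ, u) + 2 * Real.pi * (z * ξ + y * u))
        = (-s) * ph (ξ, u) + 2 * Real.pi * ((-z) * ξ + (-y) * u) := fun ξ u => by ring
    simp only [e]
  · rw [abs_of_pos h] at hs1 ⊢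
    exact half_kernel_pos hδ h hs1 hr hr2 hR

/-- The frequency cutoff `1_{|ξ₁| ≤ R} e^{-δ|ξ₁|ξ₂²}`. The Gaussian is scaled by `|ξ₁|` so that the
`ξ₂`-integral against `e^{isξ₁ξ₂²}` has a parameter proportional to `|ξ₁|`. -/
def cut (δ R : ℝ) (ξ : ℝ × ℝ) : ℝ := if |ξ.1| ≤ R then Real.exp (-(δ * |ξ.1| * ξ.2 ^ 2)) else 0

@[fun_prop] lemma measurable_cut (δ R : ℝ) : Measurable (cut δ R) := by
  unfold cut
  refine Measurable.ite ?_ (by fun_prop) measurable_const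
  exact measurableSet_le (by fun_prop) measurable_const

lemma cut_nonneg (δ R : ℝ) (ξ : ℝ × ℝ) : 0 ≤ cut δ R ξ := by
  unfold cut; split_ifs <;> positivity

lemma cut_le_one {δ : ℝ} (hδ : 0 < δ) (R : ℝ) (ξ : ℝ × ℝ) : cut δ R ξ ≤ 1 := by
  unfold cut; split_ifs
  · refine Real.exp_le_one_iff.2 ?_
    have : 0 ≤ δ * |ξ.1| * ξ.2 ^ 2 := by positivity
    linarith
  · exact zero_le_one

lemma cut_sq (δ R : ℝ) (ξ : ℝ × ℝ) : cut δ R ξ ^ 2 = cut (2 * δ) R ξ := by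
  unfold cut; split_ifs
  · rw [← Real.exp_nat_mul]; congr 1; push_cast; ring
  · simp

/-- The Gaussian in `ξ₂` integrates to a multiple of `|ξ₁|^{-1/2}`, which is locally integrable. -/
lemma integrable_cut {δ : ℝ} (hδ : 0 < δ) (R p : ℝ) (hp : 0 ≤ p) :
    Integrable (fun ξ : ℝ × ℝ => |ξ.1| ^ p * cut δ R ξ) := by
  have hm : Measurable (fun ξ : ℝ × ℝ => |ξ.1| ^ p * cut δ R ξ) := by fun_prop
  rw [Measure.volume_eq_prod, integrable_prod_iff (by exact hm.aestronglyMeasurable)]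
  have h0 : ∀ᵐ x : ℝ, x ≠ 0 := Measure.ae_ne volume 0
  constructor
  · filter_upwards [h0] with x hx
    unfold cut
    by_cases h : |x| ≤ R
    · simp only [h, if_true]
      have := (integrable_exp_neg_mul_sq (b := δ * |x|) (by positivity)).const_mul (|x| ^ p)
      simpa [neg_mul] using this
    · simp [h]
  · have hi : Integrable (fun x : ℝ => (Set.Icc (-R) R).indicator
        (fun x => |x| ^ p * Real.sqrt (Real.pi / (δ * |x|))) x) := by
      rw [integrable_indicator_iff measurableSet_Icc]
      have hb : IntegrableOn (fun x : ℝ => R ^ p * Real.sqrt (Real.pi / δ) * |x| ^ (-(1/2) : ℝ))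
          (Set.Icc (-R) R) := by
        refine Integrable.const_mul ?_ _
        have a : IntervalIntegrable (fun x : ℝ => |x| ^ (-(1/2) : ℝ)) volume (-R) R := by
          have pos : ∀ c, IntervalIntegrable (fun x : ℝ => |x| ^ (-(1/2) : ℝ)) volume 0 c := by
            intro c
            rcases le_total 0 c with hc | hc
            · refine (intervalIntegral.intervalIntegrable_rpow' (r := -(1/2))
                (by norm_num)).congr (fun x hx => ?_)
              rw [Set.uIoc_of_le hc] at hx
              simp only [abs_of_pos hx.1]
            · have hh : IntervalIntegrable (fun x : ℝ => x ^ (-(1/2) : ℝ)) volume 0 (-c) :=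
                intervalIntegral.intervalIntegrable_rpow' (by norm_num)
              have := (IntervalIntegrable.iff_comp_neg (by simp)).1 hh
              rw [neg_zero, neg_neg] at this
              refine this.congr_ae ?_
              rw [Filter.EventuallyEq, ae_restrict_iff' measurableSet_uIoc]
              refine Filter.Eventually.of_forall (fun x hx => ?_)
              rw [Set.uIoc_of_ge hc] at hx
              simp only [abs_of_nonpos hx.2]
          exact (pos (-R)).symm.trans (pos R)
        rcases le_total (-R) R with hR | hR
        · refine (integrableOn_Icc_iff_integrableOn_Ioc (by simp)).2 ?_
          exact (intervalIntegrable_iff_integrableOn_Ioc_of_le hR).1 a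
        · have : volume (Set.Icc (-R) R) = 0 := by
            rw [Real.volume_Icc]; exact ENNReal.ofReal_of_nonpos (by linarith)
          exact IntegrableOn.of_measure_zero this
      refine Integrable.mono' hb (by fun_prop) ?_
      refine (ae_restrict_iff' measurableSet_Icc).2 ?_
      filter_upwards [h0] with x hx hxR
      have hx' : |x| ≤ R := abs_le.2 hxR
      have hx0 : 0 < |x| := abs_pos.2 hx
      rw [Real.norm_eq_abs, abs_of_nonneg (by positivity)]
      have : Real.sqrt (Real.pi / (δ * |x|)) = Real.sqrt (Real.pi / δ) * |x| ^ (-(1/2) : ℝ) := by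
        rw [← div_div, Real.sqrt_div' _ hx0.le, Real.rpow_neg hx0.le, ← Real.sqrt_eq_rpow]; rfl
      rw [this, mul_assoc]
      gcongr
    refine hi.congr ?_
    filter_upwards [h0] with x hx
    unfold cut
    by_cases h : |x| ≤ R
    · have hm : x ∈ Set.Icc (-R) R := abs_le.1 h
      rw [Set.indicator_of_mem hm]
      simp only [h, if_true]
      rw [← integral_gaussian, ← integral_const_mul]
      congr 1; ext u
      have hq : 0 ≤ |x| ^ p * Real.exp (-(δ * |x| * u ^ 2)) := by positivity
      rw [Real.norm_of_nonneg hq, neg_mul]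
    · have hm : x ∉ Set.Icc (-R) R := fun hh => h (abs_le.2 hh)
      rw [Set.indicator_of_notMem hm]
      simp [h]

/-- The regularised dispersive estimate, uniform in the cutoff parameters. -/
lemma kernel_bound {δ s y z r R : ℝ} (hδ : 0 < δ) (hs : s ≠ 0) (hs1 : |s| ≤ 1) (hr : 0 ≤ r)
    (hr2 : r ≤ 2 / 9) (hR : 0 < R) :
    ‖∫ ξ : ℝ × ℝ, ((|ξ.1| ^ (2 * r) * cut δ R ξ : ℝ) : ℂ)
        * ex (s * ph ξ + 2 * Real.pi * (z * ξ.1 + y * ξ.2))‖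
      ≤ 92 * Real.sqrt Real.pi * |s| ^ (-(22 / 27) : ℝ) := by
  set F : ℝ × ℝ → ℂ := fun ξ => ((|ξ.1| ^ (2 * r) * cut δ R ξ : ℝ) : ℂ)
        * ex (s * ph ξ + 2 * Real.pi * (z * ξ.1 + y * ξ.2)) with hF
  have hFi : Integrable F := by
    refine (integrable_cut hδ R (2 * r) (by linarith)).mono' ?_ ?_
    · have : Measurable F := by simp only [hF]; fun_prop
      exact this.aestronglyMeasurable
    · refine Filter.Eventually.of_forall (fun ξ => ?_)
      have := cut_nonneg δ R ξ
      have hp : 0 ≤ |ξ.1| ^ (2 * r) * cut δ R ξ := by positivity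
      simp only [hF, norm_mul, norm_ex, mul_one]
      rw [Complex.norm_real, Real.norm_of_nonneg hp]
  rw [Measure.volume_eq_prod] at hFi ⊢
  rw [integral_prod F hFi]
  have hH := hFi.integral_prod_left
  set H : ℝ → ℂ := fun x => ∫ u : ℝ, F (x, u) with hHd
  have hsupp : ∫ x, H x = ∫ x in (-R)..R, H x := by
    rw [intervalIntegral.integral_of_le (by linarith), ← integral_Icc_eq_integral_Ioc]
    refine (setIntegral_eq_integral_of_forall_compl_eq_zero (fun x hx => ?_)).symm
    have : ¬ |x| ≤ R := fun h => hx (abs_le.1 h)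
    simp only [hHd, hF, cut, this, if_false]; simp
  rw [hsupp, ← intervalIntegral.integral_add_adjacent_intervals (b := 0)
    hH.intervalIntegrable hH.intervalIntegrable]
  have hneg : ∫ x in (-R)..0, H x = ∫ x in (0:ℝ)..R, H (-x) := by
    rw [intervalIntegral.integral_comp_neg, neg_zero]
  rw [hneg]
  have e1 : ∫ x in (0:ℝ)..R, H x = ∫ ξ in (0:ℝ)..R, ((ξ ^ (2 * r) : ℝ) : ℂ) * ∫ u : ℝ,
      (Real.exp (-(δ * ξ * u ^ 2)) : ℂ) * ex (s * ph (ξ, u) + 2 * Real.pi * (z * ξ + y * u)) := by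
    refine intervalIntegral.integral_congr_ae (Filter.Eventually.of_forall fun x hx => ?_)
    rw [Set.uIoc_of_le hR.le] at hx
    have hx' : |x| = x := abs_of_pos hx.1
    simp only [hHd, hF, cut, hx', hx.2, if_true]
    rw [← integral_const_mul]
    congr 1; ext u; push_cast; ring
  have e2 : ∫ x in (0:ℝ)..R, H (-x) = ∫ ξ in (0:ℝ)..R, ((ξ ^ (2 * r) : ℝ) : ℂ) * ∫ u : ℝ,
      (Real.exp (-(δ * ξ * u ^ 2)) : ℂ) *
        ex ((-s) * ph (ξ, u) + 2 * Real.pi * ((-z) * ξ + y * u)) := by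
    refine intervalIntegral.integral_congr_ae (Filter.Eventually.of_forall fun x hx => ?_)
    rw [Set.uIoc_of_le hR.le] at hx
    have hx' : |x| = x := abs_of_pos hx.1
    simp only [hHd, hF, cut, abs_neg, hx', hx.2, if_true, ph]
    rw [← integral_const_mul]
    congr 1; ext u; push_cast
    rw [mul_assoc]
    congr 3; ring
  rw [e1, e2]
  have b1 := half_kernel (y := y) (z := z) hδ hs hs1 hr hr2 hR
  have b2 := half_kernel (y := y) (z := -z) hδ (neg_ne_zero.2 hs) (by rwa [abs_neg]) hr hr2 hR
  rw [abs_neg] at b2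
  refine (norm_add_le _ _).trans ?_
  linarith

/-! ### The Fourier transform on `ℝ × ℝ`: Parseval and Plancherel -/

open FourierTransform SchwartzMap in
/-- On `L¹ ∩ L²` the Fourier integral agrees with the `L²` Fourier transform. -/
lemma fourier_toLp_ae {V : Type*} [NormedAddCommGroup V] [InnerProductSpace ℝ V]
    [FiniteDimensional ℝ V] [MeasurableSpace V] [BorelSpace V] {f : V → ℂ}
    (h1 : Integrable f) (h2 : MemLp f 2) :
    (⇑(𝓕 (h2.toLp f) : Lp (α := V) ℂ 2)) =ᵐ[volume] 𝓕 f := by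
  have hc : Continuous (𝓕 f) := VectorFourier.fourierIntegral_continuous
    Real.continuous_fourierChar (by exact continuous_inner) h1
  refine ae_eq_of_integral_contDiff_smul_eq
    ((Lp.memLp _).locallyIntegrable (by norm_num)) hc.locallyIntegrable ?_
  intro g hg hgc
  have hg₁ : HasCompactSupport (Complex.ofRealCLM ∘ g) := hgc.comp_left rfl
  have hg₂ : ContDiff ℝ ((⊤ : ℕ∞) : WithTop ℕ∞) (Complex.ofRealCLM ∘ g) :=
    Complex.ofRealCLM.contDiff.comp hg
  set φ : 𝓢(V, ℂ) := hg₁.toSchwartzMap hg₂ with hφ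
  have hφx : ∀ x, φ x = (g x : ℂ) := fun x => rfl
  have a := congrArg (fun T : TemperedDistribution V ℂ => T φ)
    (Lp.fourier_toTemperedDistribution_eq (h2.toLp f))
  simp only [TemperedDistribution.fourier_apply, Lp.toTemperedDistribution_apply] at a
  have b : ∫ x, φ x • 𝓕 f x = ∫ x, (𝓕 φ) x • f x := by
    have := VectorFourier.integral_fourierIntegral_smul_eq_flip (L := innerₗ V)
      Real.continuous_fourierChar (μ := volume) (ν := volume) (by exact continuous_inner) φ.integrable h1
    simpa using! this.symm
  have c : ∫ x, (𝓕 φ) x • (h2.toLp f) x = ∫ x, (𝓕 φ) x • f x := by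
    refine integral_congr_ae ?_
    filter_upwards [h2.coeFn_toLp] with x hx
    rw [hx]
  have d : ∀ u : V → ℂ, ∫ x, g x • u x = ∫ x, φ x • u x := by
    intro u; congr 1
  rw [d, d, ← a, c, b]

open FourierTransform in
lemma FT_eq_fourier (f : ℝ × ℝ → ℂ) (ξ : WithLp 2 (ℝ × ℝ)) :
    FT f (WithLp.ofLp ξ) = 𝓕 (fun x : WithLp 2 (ℝ × ℝ) => f (WithLp.ofLp x)) ξ := by
  unfold FT
  rw [Real.fourier_eq', ← (WithLp.volume_preserving_ofLp ℝ ℝ).integral_comp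
    (MeasurableEquiv.toLp 2 (ℝ × ℝ)).symm.measurableEmbedding]
  congr 1; ext x
  simp only [smul_eq_mul, WithLp.prod_inner_apply]
  congr 3
  simp
  ring

open FourierTransform ComplexInnerProductSpace in
/-- Parseval's identity for `FT` on `L¹ ∩ L²`. -/
lemma FT_inner {f g : ℝ × ℝ → ℂ} (hf : Integrable f) (hf2 : MemLp f 2) (hg : Integrable g)
    (hg2 : MemLp g 2) :
    ∫ ξ, (starRingEnd ℂ) (FT f ξ) * FT g ξ = ∫ x, (starRingEnd ℂ) (f x) * g x := by
  have mp := WithLp.volume_preserving_ofLp ℝ ℝ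
  have me : MeasurableEmbedding (@WithLp.ofLp 2 (ℝ × ℝ)) :=
    (MeasurableEquiv.toLp 2 (ℝ × ℝ)).symm.measurableEmbedding
  have f1 := mp.integrable_comp_of_integrable hf
  have g1 := mp.integrable_comp_of_integrable hg
  have f2 := hf2.comp_measurePreserving mp
  have g2 := hg2.comp_measurePreserving mp
  have k := Lp.inner_fourier_eq (f2.toLp _) (g2.toLp _)
  rw [L2.inner_def, L2.inner_def] at k
  rw [← mp.integral_comp me, ← mp.integral_comp me (fun x => (starRingEnd ℂ) (f x) * g x)]
  refine Eq.trans ?_ (k.trans ?_)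
  · refine integral_congr_ae ?_
    filter_upwards [fourier_toLp_ae f1 f2, fourier_toLp_ae g1 g2] with x hx hy
    rw [hx, hy, FT_eq_fourier, FT_eq_fourier, RCLike.inner_apply, mul_comm]
    rfl
  · refine integral_congr_ae ?_
    filter_upwards [f2.coeFn_toLp, g2.coeFn_toLp] with x hx hy
    rw [hx, hy, RCLike.inner_apply, mul_comm]
    rfl

open FourierTransform in
lemma FT_memLp {f : ℝ × ℝ → ℂ} (hf : Integrable f) (hf2 : MemLp f 2) : MemLp (FT f) 2 := by
  have mp := WithLp.volume_preserving_ofLp ℝ ℝ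
  have mp' := WithLp.volume_preserving_toLp ℝ ℝ
  have f1 := mp.integrable_comp_of_integrable hf
  have f2 := hf2.comp_measurePreserving mp
  have h := (memLp_congr_ae (fourier_toLp_ae f1 f2)).1 (Lp.memLp _)
  have := h.comp_measurePreserving mp'
  refine (memLp_congr_ae ?_).1 this
  refine Filter.Eventually.of_forall fun x => ?_
  exact (FT_eq_fourier f (WithLp.toLp 2 x)).symm

/-- Plancherel's identity for `FT` on `L¹ ∩ L²`, in the extended nonnegative reals. -/
lemma FT_plancherel {f : ℝ × ℝ → ℂ} (hf : Integrable f) (hf2 : MemLp f 2) :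
    ∫⁻ ξ, ‖FT f ξ‖ₑ ^ (2:ℝ) = ∫⁻ x, ‖f x‖ₑ ^ (2:ℝ) := by
  have key : ∀ {h : ℝ × ℝ → ℂ}, MemLp h 2 →
      ∫⁻ x, ‖h x‖ₑ ^ (2:ℝ) = ENNReal.ofReal (∫ x, (starRingEnd ℂ) (h x) * h x).re := by
    intro h hh
    have e : ∀ x, (starRingEnd ℂ) (h x) * h x = ((‖h x‖ ^ 2 : ℝ) : ℂ) := by
      intro x; rw [mul_comm, Complex.mul_conj, Complex.normSq_eq_norm_sq]
    have hi : Integrable (fun x => ‖h x‖ ^ 2) := hh.integrable_norm_pow (by norm_num)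
    simp only [e]
    rw [integral_complex_ofReal, Complex.ofReal_re,
      ofReal_integral_eq_lintegral_ofReal hi (Filter.Eventually.of_forall fun x => by positivity)]
    congr 1; ext x
    rw [← ofReal_norm, ENNReal.ofReal_rpow_of_nonneg (norm_nonneg _) (by norm_num)]
    norm_num
  rw [key (FT_memLp hf hf2), key hf2, FT_inner hf hf2 hf hf2]

lemma FTinv_eq (A : ℝ × ℝ → ℂ) (x : ℝ × ℝ) :
    FTinv A x = (starRingEnd ℂ) (FT (fun ξ => (starRingEnd ℂ) (A ξ)) x) := by
  unfold FTinv FT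
  rw [← integral_conj]
  congr 1; ext ξ
  have e1 : ∀ θ : ℝ, Complex.exp ((θ : ℂ) * Complex.I) = ex θ := fun _ => rfl
  rw [map_mul, Complex.conj_conj, e1, e1, conj_ex, neg_neg]
  congr 3; ring

lemma integrable_conj_fun {f : ℝ × ℝ → ℂ} (hf : Integrable f) :
    Integrable (fun ξ => (starRingEnd ℂ) (f ξ)) :=
  (Complex.conjCLE : ℂ ≃L[ℝ] ℂ).toContinuousLinearMap.integrable_comp hf

lemma memLp_conj_fun {f : ℝ × ℝ → ℂ} (hf : MemLp f 2) :
    MemLp (fun ξ => (starRingEnd ℂ) (f ξ)) 2 := by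
  refine hf.of_le (Complex.continuous_conj.comp_aestronglyMeasurable hf.1) ?_
  exact Filter.Eventually.of_forall fun x => by simp

/-- Bilinear Parseval identity: `∫ F⁻¹A · Fk = ∫ A k`. -/
lemma FT_pair {A k : ℝ × ℝ → ℂ} (hA : Integrable A) (hA2 : MemLp A 2) (hk : Integrable k)
    (hk2 : MemLp k 2) : ∫ x, FTinv A x * FT k x = ∫ ξ, A ξ * k ξ := by
  have := FT_inner (integrable_conj_fun hA) (memLp_conj_fun hA2) hk hk2
  simp only [Complex.conj_conj] at this
  simpa only [FTinv_eq] using this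

lemma FTinv_memLp {A : ℝ × ℝ → ℂ} (hA : Integrable A) (hA2 : MemLp A 2) : MemLp (FTinv A) 2 := by
  have := memLp_conj_fun (FT_memLp (integrable_conj_fun hA) (memLp_conj_fun hA2))
  refine (memLp_congr_ae ?_).1 this
  exact Filter.Eventually.of_forall fun x => (FTinv_eq A x).symm

/-! ### Local smoothing -/

/-- The change of frequency variables `(ξ₁, ξ₂) ↦ (φ(ξ)/2π, ξ₂)`. -/
def Psi (ξ : ℝ × ℝ) : ℝ × ℝ := (ph ξ / (2 * Real.pi), ξ.2)

/-- The Jacobian determinant of `Psi`. -/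
def Jac (ξ : ℝ × ℝ) : ℝ := (3 * ξ.1 ^ 2 + ξ.2 ^ 2) / (2 * Real.pi)

/-- The derivative of `Psi`. -/
def dPsi (ξ : ℝ × ℝ) : ℝ × ℝ →L[ℝ] ℝ × ℝ :=
  (Matrix.toLin (.finTwoProd ℝ) (.finTwoProd ℝ)
    !![Jac ξ, 2 * ξ.1 * ξ.2 / (2 * Real.pi); 0, 1]).toContinuousLinearMap

lemma det_dPsi (ξ : ℝ × ℝ) : (dPsi ξ).det = Jac ξ := by
  unfold dPsi
  simp only [LinearMap.det_toContinuousLinearMap, LinearMap.det_toLin, Matrix.det_fin_two_of]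
  ring

lemma hasFDerivAt_Psi (ξ : ℝ × ℝ) : HasFDerivAt Psi (dPsi ξ) ξ := by
  unfold dPsi
  rw [Matrix.toLin_finTwoProd_toContinuousLinearMap]
  have h1 : HasFDerivAt (fun ξ : ℝ × ℝ => ξ.1) (ContinuousLinearMap.fst ℝ ℝ ℝ) ξ := hasFDerivAt_fst
  have h2 : HasFDerivAt (fun ξ : ℝ × ℝ => ξ.2) (ContinuousLinearMap.snd ℝ ℝ ℝ) ξ := hasFDerivAt_snd
  have h := (((h1.mul ((h1.pow 2).add (h2.pow 2))).mul_const (2 * Real.pi)⁻¹)).prodMk h2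
  refine (show HasFDerivAt Psi _ ξ from h).congr_fderiv ?_
  ext <;> simp [Jac] <;> ring

lemma Psi_injective : Function.Injective Psi := by
  intro a b h
  have e2 := congrArg Prod.snd h
  have e1 := congrArg Prod.fst h
  have h2 : a.2 = b.2 := e2
  have h1 : ph a / (2 * Real.pi) = ph b / (2 * Real.pi) := e1
  have h1' : ph a = ph b := by
    have := Real.pi_pos
    field_simp at h1; linarith
  unfold ph at h1'
  rw [h2] at h1'
  refine Prod.ext ?_ h2
  by_contra hne
  have h3 : (a.1 - b.1) * (a.1 ^ 2 + a.1 * b.1 + b.1 ^ 2 + b.2 ^ 2) = 0 := by linarith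
  rcases mul_eq_zero.1 h3 with h | h
  · exact hne (by linarith)
  · have p : a.1 = 0 := by
      have : a.1 ^ 2 ≤ 0 := by nlinarith [sq_nonneg (a.1 + 2 * b.1), sq_nonneg (2 * a.1 + b.1), sq_nonneg b.2, sq_nonneg (a.1 + b.1), sq_nonneg a.1, sq_nonneg b.1]
      exact pow_eq_zero_iff (two_ne_zero) |>.1 (le_antisymm this (sq_nonneg _))
    have q : b.1 = 0 := by
      rw [p] at h
      have : b.1 ^ 2 ≤ 0 := by nlinarith [sq_nonneg b.2]
      exact pow_eq_zero_iff (two_ne_zero) |>.1 (le_antisymm this (sq_nonneg _))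
    exact hne (by rw [p, q])

lemma Psi_surjective : Function.Surjective Psi := by
  rintro ⟨a, b⟩
  have hc : Continuous (fun x : ℝ => ph (x, b) / (2 * Real.pi)) := by fun_prop
  have hp := Real.pi_pos
  have hge : ∀ x : ℝ, 1 ≤ x → x / (2 * Real.pi) ≤ ph (x, b) / (2 * Real.pi) := by
    intro x hx
    gcongr
    have : ph (x, b) = x * x ^ 2 + x * b ^ 2 := by unfold ph; ring
    rw [this]
    have : 0 ≤ x * b ^ 2 := by positivity
    nlinarith [mul_nonneg (by linarith : (0:ℝ) ≤ x) (by nlinarith : (0:ℝ) ≤ x ^ 2 - 1)]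
  have hodd : ∀ x : ℝ, ph (-x, b) / (2 * Real.pi) = -(ph (x, b) / (2 * Real.pi)) := by
    intro x; unfold ph; ring
  set X : ℝ := 1 + 2 * Real.pi * |a| with hX
  have hX1 : 1 ≤ X := by have : 0 ≤ 2 * Real.pi * |a| := by positivity
                         linarith
  have hX2 : |a| ≤ X / (2 * Real.pi) := by
    rw [le_div_iff₀ (by positivity)]; nlinarith [abs_nonneg a]
  have hv := intermediate_value_Icc (by linarith : -X ≤ X) hc.continuousOn
  have : a ∈ Set.Icc (ph (-X, b) / (2 * Real.pi)) (ph (X, b) / (2 * Real.pi)) := by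
    have := hge X hX1
    rw [hodd]
    constructor
    · linarith [neg_abs_le a]
    · linarith [le_abs_self a]
  obtain ⟨x, _, hx⟩ := hv this
  exact ⟨(x, b), Prod.ext hx rfl⟩

lemma Jac_nonneg (ξ : ℝ × ℝ) : 0 ≤ Jac ξ := by
  have := Real.pi_pos
  unfold Jac; positivity

lemma lintegral_Psi (p : ℝ × ℝ → ℝ≥0∞) :
    ∫⁻ y, p y = ∫⁻ ξ, ENNReal.ofReal (Jac ξ) * p (Psi ξ) := by
  have := lintegral_image_eq_lintegral_abs_det_fderiv_mul volume MeasurableSet.univ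
    (fun x _ => (hasFDerivAt_Psi x).hasFDerivWithinAt) Psi_injective.injOn p
  simpa [Set.image_univ, Psi_surjective.range_eq, det_dPsi, abs_of_nonneg (Jac_nonneg _)] using this

lemma integral_Psi (p : ℝ × ℝ → ℂ) :
    ∫ y, p y = ∫ ξ, (Jac ξ : ℂ) * p (Psi ξ) := by
  have := integral_image_eq_integral_abs_det_fderiv_smul volume MeasurableSet.univ
    (fun x _ => (hasFDerivAt_Psi x).hasFDerivWithinAt) Psi_injective.injOn p
  simpa [Set.image_univ, Psi_surjective.range_eq, det_dPsi, abs_of_nonneg (Jac_nonneg _)] using this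

lemma integrable_Psi {p : ℝ × ℝ → ℂ} (h : Integrable (fun ξ => (Jac ξ : ℂ) * p (Psi ξ))) :
    Integrable p := by
  have := integrableOn_image_iff_integrableOn_abs_det_fderiv_smul volume MeasurableSet.univ
    (fun x _ => (hasFDerivAt_Psi x).hasFDerivWithinAt) Psi_injective.injOn p
  simp only [Set.image_univ, Psi_surjective.range_eq, det_dPsi, abs_of_nonneg (Jac_nonneg _),
    integrableOn_univ] at this
  exact this.2 (by simpa using h)

/-- For fixed `x₁`, the local smoothing effect is Plancherel's theorem in `(τ, x₂)` after the change
of variables `Psi`, whose Jacobian dominates `ξ₁²`. -/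
lemma smoothing_slice {h : ℝ × ℝ → ℂ} (h1 : Integrable (fun ξ : ℝ × ℝ => (ξ.1 : ℂ) * h ξ))
    (h2 : MemLp h 2) (x₁ : ℝ) :
    ∫⁻ y : ℝ × ℝ, ‖FT (fun ξ => (ξ.1 : ℂ) * (ex (-(y.1 * ph ξ)) * h ξ)) (x₁, y.2)‖ₑ ^ (2:ℝ)
      ≤ ENNReal.ofReal (2 * Real.pi / 3) * ∫⁻ ξ, ‖h ξ‖ₑ ^ (2:ℝ) := by
  have hpi := Real.pi_pos
  obtain ⟨inv, hinv⟩ : ∃ inv : ℝ × ℝ → ℝ × ℝ, ∀ ξ, inv (Psi ξ) = ξ :=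
    ⟨_, Function.leftInverse_invFun Psi_injective⟩
  set q : ℝ × ℝ → ℂ := fun ξ => ex (-(2 * Real.pi * (x₁ * ξ.1))) * ((ξ.1 : ℂ) * h ξ / (Jac ξ : ℂ))
  have hJq : ∀ ξ, (Jac ξ : ℂ) * q ξ = ex (-(2 * Real.pi * (x₁ * ξ.1))) * ((ξ.1 : ℂ) * h ξ) := by
    intro ξ
    by_cases h0 : Jac ξ = 0
    · have : ξ.1 = 0 := by
        unfold Jac at h0
        rw [div_eq_zero_iff] at h0
        rcases h0 with h0 | h0
        · exact pow_eq_zero_iff (two_ne_zero) |>.1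
            (le_antisymm (by nlinarith [sq_nonneg ξ.2]) (sq_nonneg _))
        · exfalso; linarith
      simp [h0, this]
    · have : (Jac ξ : ℂ) ≠ 0 := by exact_mod_cast h0
      simp only [q]; field_simp
  set p : ℝ × ℝ → ℂ := fun y => q (inv y) with hp
  have hpP : ∀ ξ, p (Psi ξ) = q ξ := fun ξ => by simp only [hp, hinv]
  have pi : Integrable p := by
    refine integrable_Psi ?_
    simp only [hpP, hJq]
    refine h1.bdd_mul (c := 1) ?_ ?_
    · exact (by fun_prop : Continuous fun ξ : ℝ × ℝ => ex (-(2 * Real.pi * (x₁ * ξ.1)))).aestronglyMeasurable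
    · exact Filter.Eventually.of_forall fun ξ => by simp
  have pb : ∫⁻ y, ‖p y‖ₑ ^ (2:ℝ) ≤ ENNReal.ofReal (2 * Real.pi / 3) * ∫⁻ ξ, ‖h ξ‖ₑ ^ (2:ℝ) := by
    rw [lintegral_Psi, ← lintegral_const_mul' _ _ ENNReal.ofReal_ne_top]
    refine lintegral_mono fun ξ => ?_
    simp only [hpP, q]
    rw [← ofReal_norm, ← ofReal_norm, ENNReal.ofReal_rpow_of_nonneg (norm_nonneg _) (by norm_num),
      ENNReal.ofReal_rpow_of_nonneg (norm_nonneg _) (by norm_num),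
      ← ENNReal.ofReal_mul (Jac_nonneg ξ), ← ENNReal.ofReal_mul (by positivity)]
    refine ENNReal.ofReal_le_ofReal ?_
    rw [norm_mul, norm_ex, one_mul, norm_div, norm_mul, Complex.norm_real, Complex.norm_real,
      Real.norm_eq_abs, Real.norm_of_nonneg (Jac_nonneg ξ)]
    rw [Real.rpow_two, Real.rpow_two, div_pow, mul_pow, sq_abs]
    have hJ := Jac_nonneg ξ
    by_cases h0 : Jac ξ = 0
    · rw [h0]; simp; positivity
    · have hJ' : 0 < Jac ξ := lt_of_le_of_ne hJ (Ne.symm h0)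
      have : ξ.1 ^ 2 ≤ 2 * Real.pi / 3 * Jac ξ := by
        unfold Jac
        have : 2 * Real.pi / 3 * ((3 * ξ.1 ^ 2 + ξ.2 ^ 2) / (2 * Real.pi))
          = ξ.1 ^ 2 + ξ.2 ^ 2 / 3 := by field_simp
        rw [this]; nlinarith [sq_nonneg ξ.2]
      have e : Jac ξ * (ξ.1 ^ 2 * ‖h ξ‖ ^ 2 / Jac ξ ^ 2) = ξ.1 ^ 2 / Jac ξ * ‖h ξ‖ ^ 2 := by
        field_simp
      rw [e]
      refine mul_le_mul_of_nonneg_right ?_ (by positivity)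
      rwa [div_le_iff₀ hJ']
  have h2' : ∫⁻ ξ, ‖h ξ‖ₑ ^ (2:ℝ) < ⊤ := by
    have := (eLpNorm_lt_top_iff_lintegral_rpow_enorm_lt_top (p := 2) (by norm_num) (by norm_num)).1 h2.2
    simpa using this
  have p2 : MemLp p 2 := by
    refine ⟨pi.1, (eLpNorm_lt_top_iff_lintegral_rpow_enorm_lt_top (by norm_num) (by norm_num)).2 ?_⟩
    simp only [ENNReal.toReal_ofNat]
    exact lt_of_le_of_lt pb (ENNReal.mul_lt_top ENNReal.ofReal_lt_top h2')
  have e : ∀ y : ℝ × ℝ, FT (fun ξ => (ξ.1 : ℂ) * (ex (-(y.1 * ph ξ)) * h ξ)) (x₁, y.2) = FT p y := by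
    intro y
    unfold FT
    rw [integral_Psi (fun x => _ * p x)]
    congr 1; ext ξ
    simp only [hpP]
    rw [mul_left_comm (Jac ξ : ℂ), hJq]
    change ex _ * _ = ex _ * _
    have e3 : -(2 * Real.pi * (ξ.1 * x₁ + ξ.2 * y.2)) + -(y.1 * ph ξ)
      = -(2 * Real.pi * ((Psi ξ).1 * y.1 + (Psi ξ).2 * y.2)) + -(2 * Real.pi * (x₁ * ξ.1)) := by
      simp only [Psi]; field_simp; ring
    have e4 := congrArg ex e3
    rw [ex_add, ex_add] at e4
    linear_combination ((ξ.1 : ℂ) * h ξ) * e4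
  simp only [e]
  rw [FT_plancherel pi p2]
  exact pb

lemma lintegral_weight : ∫⁻ x : ℝ, ENNReal.ofReal ((1 + x ^ 2)⁻¹) = ENNReal.ofReal Real.pi := by
  rw [← ofReal_integral_eq_lintegral_ofReal integrable_inv_one_add_sq
    (Filter.Eventually.of_forall fun x => by positivity), integral_univ_inv_one_add_sq]

/-- Local smoothing, integrated against the weight `(1 + x₁²)⁻¹`. -/
lemma smoothing {h : ℝ × ℝ → ℂ} (hm : Measurable h)
    (h1 : Integrable (fun ξ : ℝ × ℝ => (ξ.1 : ℂ) * h ξ)) (h2 : MemLp h 2) :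
    ∫⁻ τ : ℝ, ∫⁻ x : ℝ × ℝ, ENNReal.ofReal ((1 + x.1 ^ 2)⁻¹) *
        ‖FT (fun ξ => (ξ.1 : ℂ) * (ex (-(τ * ph ξ)) * h ξ)) x‖ₑ ^ (2:ℝ)
      ≤ ENNReal.ofReal (2 * Real.pi ^ 2 / 3) * ∫⁻ ξ, ‖h ξ‖ₑ ^ (2:ℝ) := by
  have hpi := Real.pi_pos
  have hF : Measurable fun z : ℝ × ℝ × ℝ =>
      FT (fun ξ => (ξ.1 : ℂ) * (ex (-(z.1 * ph ξ)) * h ξ)) z.2 := by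
    unfold FT
    refine StronglyMeasurable.measurable (StronglyMeasurable.integral_prod_right
      (f := fun (z : ℝ × ℝ × ℝ) (ξ : ℝ × ℝ) =>
        Complex.exp (((-(2 * Real.pi * (ξ.1 * z.2.1 + ξ.2 * z.2.2)) : ℝ) : ℂ) * Complex.I) *
          ((ξ.1 : ℂ) * (ex (-(z.1 * ph ξ)) * h ξ))) ?_)
    refine Measurable.stronglyMeasurable ?_
    unfold Function.uncurry
    fun_prop
  calc _ = ∫⁻ τ : ℝ, ∫⁻ a : ℝ, ∫⁻ b : ℝ, ENNReal.ofReal ((1 + a ^ 2)⁻¹) *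
        ‖FT (fun ξ => (ξ.1 : ℂ) * (ex (-(τ * ph ξ)) * h ξ)) (a, b)‖ₑ ^ (2:ℝ) := by
        congr 1; ext τ
        rw [Measure.volume_eq_prod, lintegral_prod]
        refine Measurable.aemeasurable ?_
        have := hF.comp (measurable_prodMk_left (x := τ))
        simp only [Function.comp_def] at this
        fun_prop
    _ = ∫⁻ a : ℝ, ∫⁻ τ : ℝ, ∫⁻ b : ℝ, ENNReal.ofReal ((1 + a ^ 2)⁻¹) *
        ‖FT (fun ξ => (ξ.1 : ℂ) * (ex (-(τ * ph ξ)) * h ξ)) (a, b)‖ₑ ^ (2:ℝ) := by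
        refine lintegral_lintegral_swap ?_
        refine Measurable.aemeasurable ?_
        unfold Function.uncurry
        refine Measurable.lintegral_prod_right' (f := fun z : (ℝ × ℝ) × ℝ => ENNReal.ofReal ((1 + z.1.2 ^ 2)⁻¹) *
          ‖FT (fun ξ => (ξ.1 : ℂ) * (ex (-(z.1.1 * ph ξ)) * h ξ)) (z.1.2, z.2)‖ₑ ^ (2:ℝ)) ?_
        have := hF.comp (by fun_prop : Measurable fun z : (ℝ × ℝ) × ℝ => (z.1.1, z.1.2, z.2))
        simp only [Function.comp_def] at this
        fun_prop
    _ ≤ ∫⁻ a : ℝ, ENNReal.ofReal ((1 + a ^ 2)⁻¹) *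
          (ENNReal.ofReal (2 * Real.pi / 3) * ∫⁻ ξ, ‖h ξ‖ₑ ^ (2:ℝ)) := by
        refine lintegral_mono fun a => ?_
        simp only
        have hFa := hF.comp (by fun_prop : Measurable fun z : ℝ × ℝ => (z.1, a, z.2))
        simp only [Function.comp_def] at hFa
        rw [← lintegral_prod (fun z : ℝ × ℝ => ENNReal.ofReal ((1 + a ^ 2)⁻¹) *
          ‖FT (fun ξ => (ξ.1 : ℂ) * (ex (-(z.1 * ph ξ)) * h ξ)) (a, z.2)‖ₑ ^ (2:ℝ))
            ((hFa.enorm.pow_const _).const_mul _).aemeasurable,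
          ← Measure.volume_eq_prod, lintegral_const_mul' _ _ ENNReal.ofReal_ne_top]
        gcongr
        exact smoothing_slice h1 h2 a
    _ = _ := by
        rw [lintegral_mul_const _ (by fun_prop), lintegral_weight, ← mul_assoc,
          ← ENNReal.ofReal_mul hpi.le]
        congr 2; ring

/-! ### A Hardy–Littlewood–Sobolev bound on an interval -/

lemma lintegral_rpow_half (L : ℝ) (hL : 0 ≤ L) :
    ∫⁻ u in Set.Ioc 0 L, ENNReal.ofReal (|u| ^ (-(11/12) : ℝ)) = ENNReal.ofReal (12 * L ^ ((1:ℝ)/12)) := by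
  have hi : IntervalIntegrable (fun u : ℝ => u ^ (-(11/12) : ℝ)) volume 0 L :=
    intervalIntegral.intervalIntegrable_rpow' (by norm_num)
  have h1 : ∫⁻ u in Set.Ioc 0 L, ENNReal.ofReal (|u| ^ (-(11/12) : ℝ))
      = ∫⁻ u in Set.Ioc 0 L, ENNReal.ofReal (u ^ (-(11/12) : ℝ)) :=
    setLIntegral_congr_fun measurableSet_Ioc fun u hu => by simp only [abs_of_pos hu.1]
  rw [h1, ← ofReal_integral_eq_lintegral_ofReal
    ((intervalIntegrable_iff_integrableOn_Ioc_of_le hL).1 hi)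
    ((ae_restrict_mem measurableSet_Ioc).mono fun u hu => Real.rpow_nonneg hu.1.le _),
    ← intervalIntegral.integral_of_le hL, integral_rpow (Or.inl (by norm_num))]
  congr 1
  norm_num
  ring

lemma lintegral_rpow_sub {m b t : ℝ} (ht : t ∈ Set.Ioc m b) :
    ∫⁻ s in Set.Ioc m b, ENNReal.ofReal (|t - s| ^ (-(11/12) : ℝ))
      ≤ ENNReal.ofReal (24 * (b - m) ^ ((1:ℝ)/12)) := by
  have hL : 0 ≤ b - m := by linarith [ht.1, ht.2]
  set f : ℝ → ℝ≥0∞ := fun u => ENNReal.ofReal (|u| ^ (-(11/12) : ℝ)) with hf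
  have hfm : Measurable f := by fun_prop
  have e0 : (volume.restrict (Set.Ioc (-(b-m)) 0)) = volume.restrict (Set.Ico (-(b-m)) 0) := by
    exact (restrict_Ico_eq_restrict_Ioc).symm
  have h0 : ∫⁻ u in Set.Ico (-(b-m)) 0, f u = ENNReal.ofReal (12 * (b - m) ^ ((1:ℝ)/12)) := by
    rw [← lintegral_rpow_half _ hL]
    have := (Measure.measurePreserving_neg (volume : Measure ℝ)).setLIntegral_comp_preimage
      (s := Set.Ico (-(b-m)) 0) measurableSet_Ico hfm
    rw [← this]
    simp only [Set.neg_preimage, Set.neg_Ico, neg_neg, neg_zero, hf, abs_neg]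
  calc ∫⁻ s in Set.Ioc m b, f (t - s)
      ≤ ∫⁻ s in (fun s => t - s) ⁻¹' (Set.Ico (-(b-m)) 0 ∪ Set.Ico 0 (b - m)), f (t - s) := by
        refine lintegral_mono_set fun s hs => ?_
        rw [Set.Ico_union_Ico_eq_Ico (by linarith) hL]
        constructor <;> linarith [hs.1, hs.2, ht.1, ht.2]
    _ = ∫⁻ u in Set.Ico (-(b-m)) 0 ∪ Set.Ico 0 (b - m), f u := by
        exact (Measure.measurePreserving_sub_left (volume : Measure ℝ) t).setLIntegral_comp_preimage
          (measurableSet_Ico.union measurableSet_Ico) hfm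
    _ ≤ _ := lintegral_union_le _ _ _
    _ = _ := by
        rw [h0, restrict_Ico_eq_restrict_Ioc, lintegral_rpow_half _ hL,
          ← ENNReal.ofReal_add (by positivity) (by positivity)]
        congr 1; ring

/-- The Hardy–Littlewood–Sobolev type bound for the kernel `|t - s|^(-22/27)` on an interval, with
a gain of a small power of the length. It follows from Hölder's inequality, since the exponent
`9/5` is larger than the scale-invariant one. -/
lemma hls {m b : ℝ} (hmb : m ≤ b) {v : ℝ → ℝ≥0∞} (hv : Measurable v) :
    ∫⁻ t in Set.Ioc m b, ∫⁻ s in Set.Ioc m b,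
        v t * v s * ENNReal.ofReal (|t - s| ^ (-(22/27) : ℝ))
      ≤ ENNReal.ofReal (24 * (b - m) ^ ((2:ℝ)/27)) *
        (∫⁻ t in Set.Ioc m b, v t ^ ((9:ℝ)/5)) ^ ((10:ℝ)/9) := by
  have hL : 0 ≤ b - m := by linarith
  set μ := (volume : Measure ℝ).restrict (Set.Ioc m b) with hμ
  set W := ∫⁻ t, v t ^ ((9:ℝ)/5) ∂μ with hW
  set κ : ℝ × ℝ → ℝ≥0∞ := fun z => ENNReal.ofReal (|z.1 - z.2| ^ (-(11/12) : ℝ)) with hκ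
  have hκm : Measurable κ := by fun_prop
  have hvp : Measurable fun t => v t ^ ((9:ℝ)/5) := hv.pow_const _
  -- `v(t) v(s) |t-s|^(-22/27)` as a product of three factors, for Hölder with exponents `1/9`,
  -- `4/9`, `4/9`: `22/27 = 2 · (4/9) · (11/12)` and `|u|^(-11/12)` is locally integrable
  set F : Fin 3 → ℝ × ℝ → ℝ≥0∞ := ![fun z => v z.1 ^ ((9:ℝ)/5) * v z.2 ^ ((9:ℝ)/5),
    fun z => v z.1 ^ ((9:ℝ)/5) * κ z, fun z => v z.2 ^ ((9:ℝ)/5) * κ z] with hF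
  set p : Fin 3 → ℝ := ![1/9, 4/9, 4/9] with hp
  have H := ENNReal.lintegral_prod_norm_pow_le (μ := μ.prod μ) Finset.univ (f := F) (p := p)
    (by intro i _; fin_cases i <;> simp only [hF] <;> refine Measurable.aemeasurable ?_
        · exact (hvp.comp measurable_fst).mul (hvp.comp measurable_snd)
        · exact (hvp.comp measurable_fst).mul hκm
        · exact (hvp.comp measurable_snd).mul hκm)
    (by simp [hp, Fin.sum_univ_three]; norm_num)
    (by intro i _; fin_cases i <;> simp [hp] <;> norm_num)
  simp only [Fin.prod_univ_three] at H
  replace H : ∫⁻ z, (v z.1 ^ ((9:ℝ)/5) * v z.2 ^ ((9:ℝ)/5)) ^ ((1:ℝ)/9) *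
        (v z.1 ^ ((9:ℝ)/5) * κ z) ^ ((4:ℝ)/9) * (v z.2 ^ ((9:ℝ)/5) * κ z) ^ ((4:ℝ)/9) ∂(μ.prod μ)
      ≤ (∫⁻ z, v z.1 ^ ((9:ℝ)/5) * v z.2 ^ ((9:ℝ)/5) ∂(μ.prod μ)) ^ ((1:ℝ)/9) *
        (∫⁻ z, v z.1 ^ ((9:ℝ)/5) * κ z ∂(μ.prod μ)) ^ ((4:ℝ)/9) *
        (∫⁻ z, v z.2 ^ ((9:ℝ)/5) * κ z ∂(μ.prod μ)) ^ ((4:ℝ)/9) := H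
  have i1 : ∫⁻ z, v z.1 ^ ((9:ℝ)/5) * v z.2 ^ ((9:ℝ)/5) ∂(μ.prod μ) = W * W :=
    lintegral_prod_mul hvp.aemeasurable hvp.aemeasurable
  have i2 : ∫⁻ z, v z.1 ^ ((9:ℝ)/5) * κ z ∂(μ.prod μ)
      ≤ W * ENNReal.ofReal (24 * (b - m) ^ ((1:ℝ)/12)) := by
    rw [lintegral_prod (fun z : ℝ × ℝ => v z.1 ^ ((9:ℝ)/5) * κ z)
        ((hvp.comp measurable_fst).mul hκm).aemeasurable, hW,
      ← lintegral_mul_const _ hvp]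
    refine lintegral_mono_ae ((ae_restrict_mem measurableSet_Ioc).mono fun t ht => ?_)
    change ∫⁻ y, v t ^ ((9:ℝ)/5) * (fun y => κ (t, y)) y ∂μ ≤ _
    rw [lintegral_const_mul _ (f := fun y => κ (t, y)) (by fun_prop)]
    exact mul_le_mul_right (lintegral_rpow_sub ht) _
  have i3 : ∫⁻ z, v z.2 ^ ((9:ℝ)/5) * κ z ∂(μ.prod μ)
      ≤ W * ENNReal.ofReal (24 * (b - m) ^ ((1:ℝ)/12)) := by
    rw [lintegral_prod_symm (fun z : ℝ × ℝ => v z.2 ^ ((9:ℝ)/5) * κ z)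
        ((hvp.comp measurable_snd).mul hκm).aemeasurable, hW,
      ← lintegral_mul_const _ hvp]
    refine lintegral_mono_ae ((ae_restrict_mem measurableSet_Ioc).mono fun t ht => ?_)
    change ∫⁻ y, v t ^ ((9:ℝ)/5) * (fun y => κ (y, t)) y ∂μ ≤ _
    rw [lintegral_const_mul _ (f := fun y => κ (y, t)) (by fun_prop)]
    refine mul_le_mul_right ?_ _
    simp only [hκ, abs_sub_comm _ t]
    exact lintegral_rpow_sub ht
  have e : ∫⁻ t, ∫⁻ s, v t * v s * ENNReal.ofReal (|t - s| ^ (-(22/27) : ℝ)) ∂μ ∂μ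
      = ∫⁻ z, (v z.1 ^ ((9:ℝ)/5) * v z.2 ^ ((9:ℝ)/5)) ^ ((1:ℝ)/9) *
        (v z.1 ^ ((9:ℝ)/5) * κ z) ^ ((4:ℝ)/9) * (v z.2 ^ ((9:ℝ)/5) * κ z) ^ ((4:ℝ)/9)
        ∂(μ.prod μ) := by
    rw [← lintegral_prod (μ := μ) (ν := μ)
      (fun z : ℝ × ℝ => v z.1 * v z.2 * ENNReal.ofReal (|z.1 - z.2| ^ (-(22/27) : ℝ)))]
    · congr 1; ext z
      simp only [ENNReal.mul_rpow_of_nonneg _ _ (by norm_num : (0:ℝ) ≤ 1/9),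
        ENNReal.mul_rpow_of_nonneg _ _ (by norm_num : (0:ℝ) ≤ 4/9), ← ENNReal.rpow_mul, hκ]
      have a1 : ∀ x : ℝ≥0∞, x = x ^ ((9:ℝ)/5 * (1/9)) * x ^ ((9:ℝ)/5 * (4/9)) := by
        intro x
        rw [← ENNReal.rpow_add_of_nonneg _ _ (by norm_num) (by norm_num)]
        norm_num
      have a2 : ENNReal.ofReal (|z.1 - z.2| ^ (-(22/27) : ℝ))
          = ENNReal.ofReal (|z.1 - z.2| ^ (-(11/12) : ℝ)) ^ ((4:ℝ)/9) *
            ENNReal.ofReal (|z.1 - z.2| ^ (-(11/12) : ℝ)) ^ ((4:ℝ)/9) := by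
        rw [ENNReal.ofReal_rpow_of_nonneg (by positivity) (by norm_num),
          ← ENNReal.ofReal_mul (by positivity), ← Real.rpow_mul (abs_nonneg _)]
        congr 1
        rcases eq_or_ne (|z.1 - z.2|) 0 with h | h
        · rw [h, Real.zero_rpow (by norm_num), Real.zero_rpow (by norm_num)]; simp
        · rw [← Real.rpow_add (lt_of_le_of_ne (abs_nonneg _) h.symm)]; norm_num
      rw [a2]
      conv_lhs => rw [a1 (v z.1), a1 (v z.2)]
      ring
    · exact ((hv.comp measurable_fst).mul (hv.comp measurable_snd)).mul (by fun_prop) |>.aemeasurable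
  rw [e]
  refine H.trans ?_
  rw [i1]
  calc _ ≤ (W * W) ^ ((1:ℝ)/9) * (W * ENNReal.ofReal (24 * (b - m) ^ ((1:ℝ)/12))) ^ ((4:ℝ)/9) *
        (W * ENNReal.ofReal (24 * (b - m) ^ ((1:ℝ)/12))) ^ ((4:ℝ)/9) := by gcongr
    _ = (ENNReal.ofReal (24 * (b - m) ^ ((1:ℝ)/12))) ^ ((8:ℝ)/9) * W ^ ((10:ℝ)/9) := by
        simp only [ENNReal.mul_rpow_of_nonneg _ _ (by norm_num : (0:ℝ) ≤ 1/9),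
          ENNReal.mul_rpow_of_nonneg _ _ (by norm_num : (0:ℝ) ≤ 4/9)]
        have a1 : W ^ ((10:ℝ)/9) = W ^ ((1:ℝ)/9) * W ^ ((1:ℝ)/9) * W ^ ((4:ℝ)/9) * W ^ ((4:ℝ)/9) := by
          simp only [← ENNReal.rpow_add_of_nonneg _ _ (by norm_num : (0:ℝ) ≤ 1/9) (by norm_num : (0:ℝ) ≤ 1/9),
            ← ENNReal.rpow_add_of_nonneg _ _ (by norm_num : (0:ℝ) ≤ 1/9 + 1/9) (by norm_num : (0:ℝ) ≤ 4/9),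
            ← ENNReal.rpow_add_of_nonneg _ _ (by norm_num : (0:ℝ) ≤ 1/9 + 1/9 + 4/9) (by norm_num : (0:ℝ) ≤ 4/9)]
          norm_num
        have a2 : ∀ x : ℝ≥0∞, x ^ ((8:ℝ)/9) = x ^ ((4:ℝ)/9) * x ^ ((4:ℝ)/9) := by
          intro x; rw [← ENNReal.rpow_add_of_nonneg _ _ (by norm_num) (by norm_num)]; norm_num
        rw [a1, a2]; ring
    _ ≤ _ := by
        refine mul_le_mul_left ?_ _
        rw [ENNReal.ofReal_rpow_of_nonneg (by positivity) (by norm_num)]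
        refine ENNReal.ofReal_le_ofReal ?_
        rw [Real.mul_rpow (by norm_num) (by positivity), ← Real.rpow_mul hL]
        norm_num
        refine mul_le_mul_of_nonneg_right ?_ (by positivity)
        calc (24:ℝ) ^ ((8:ℝ)/9) ≤ 24 ^ (1:ℝ) :=
              Real.rpow_le_rpow_of_exponent_le (by norm_num) (by norm_num)
          _ = 24 := by norm_num

/-! ### Dual wave packets and the `TT*` bound -/

section

/-- The dual wave packet `ξ ↦ ∫ w(t) e^{i(tφ(ξ) + 2π y(t)·ξ)} dμ(t)`. -/
def Pw (μ : Measure ℝ) (w : ℝ → ℂ) (y : ℝ → ℝ × ℝ) (ξ : ℝ × ℝ) : ℂ :=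
  ∫ t, w t * ex (t * ph ξ + 2 * Real.pi * ((y t).1 * ξ.1 + (y t).2 * ξ.2)) ∂μ

variable {w : ℝ → ℂ} {y : ℝ → ℝ × ℝ}

lemma measurable_Pw (μ : Measure ℝ) [SFinite μ] (hw : Measurable w) (hy : Measurable y) :
    Measurable (Pw μ w y) := by
  have : StronglyMeasurable (Function.uncurry fun (ξ : ℝ × ℝ) (t : ℝ) =>
      w t * ex (t * ph ξ + 2 * Real.pi * ((y t).1 * ξ.1 + (y t).2 * ξ.2))) := by
    refine Measurable.stronglyMeasurable ?_
    unfold Function.uncurry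
    fun_prop
  exact (this.integral_prod_right).measurable

lemma norm_Pw_le (μ : Measure ℝ) [IsFiniteMeasure μ] {Ω : ℝ} (hΩ : ∀ t, ‖w t‖ ≤ Ω)
    (ξ : ℝ × ℝ) : ‖Pw μ w y ξ‖ ≤ Ω * μ.real Set.univ := by
  refine norm_integral_le_of_norm_le_const (Filter.Eventually.of_forall fun t => ?_)
  simpa using hΩ t

lemma integrable_phase (μ : Measure ℝ) [IsFiniteMeasure μ] (hw : Measurable w) (hy : Measurable y)
    {Ω : ℝ} (hΩ : ∀ t, ‖w t‖ ≤ Ω) (ξ : ℝ × ℝ) : Integrable (fun t =>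
      w t * ex (t * ph ξ + 2 * Real.pi * ((y t).1 * ξ.1 + (y t).2 * ξ.2))) μ := by
  refine Integrable.of_bound (C := Ω) (by fun_prop) (Filter.Eventually.of_forall fun t => ?_)
  simpa using hΩ t

/-- The localized dual function `|ξ₁|^r χ(ξ) Pw(ξ)`. -/
def hfun (r δ R : ℝ) (μ : Measure ℝ) (w : ℝ → ℂ) (y : ℝ → ℝ × ℝ) (ξ : ℝ × ℝ) : ℂ :=
  ((|ξ.1| ^ r * cut δ R ξ : ℝ) : ℂ) * Pw μ w y ξ

lemma measurable_hfun (r δ R : ℝ) (μ : Measure ℝ) [SFinite μ] (hw : Measurable w)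
    (hy : Measurable y) : Measurable (hfun r δ R μ w y) := by
  have := measurable_Pw μ hw hy
  unfold hfun
  fun_prop

lemma abs_rpow_two_mul (x r : ℝ) (hr : 0 ≤ r) : |x| ^ (2 * r) = |x| ^ r * |x| ^ r := by
  rw [two_mul, Real.rpow_add_of_nonneg (abs_nonneg _) hr hr]

/-- `TT*` bound: the kernel estimate and the Hardy–Littlewood–Sobolev inequality control the
`L²` norm of the dual function by `‖w‖_{L^{9/5}}`. -/
lemma hfun_bound {m b r δ R Ω : ℝ} (hmb : m ≤ b) (hb1 : b - m ≤ 1) (hr : 0 ≤ r) (hr2 : r ≤ 2/9)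
    (hδ : 0 < δ) (hR : 0 < R) (hw : Measurable w) (hy : Measurable y) (hΩ : ∀ t, ‖w t‖ ≤ Ω) :
    ∫⁻ ξ, ‖hfun r δ R (volume.restrict (Set.Ioc m b)) w y ξ‖ₑ ^ (2:ℝ)
      ≤ ENNReal.ofReal (92 * √Real.pi * (24 * (b - m) ^ ((2:ℝ)/27))) *
        (∫⁻ t in Set.Ioc m b, ‖w t‖ₑ ^ ((9:ℝ)/5)) ^ ((10:ℝ)/9) := by
  set μ := (volume : Measure ℝ).restrict (Set.Ioc m b) with hμ
  have hδ2 : 0 < 2 * δ := by positivity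
  have hΩ0 : 0 ≤ Ω := (norm_nonneg _).trans (hΩ 0)
  set θ : ℝ → ℝ × ℝ → ℝ := fun t ξ => t * ph ξ + 2 * Real.pi * ((y t).1 * ξ.1 + (y t).2 * ξ.2)
    with hθ
  set a : ℝ × ℝ → ℝ := fun ξ => |ξ.1| ^ (2 * r) * cut (2 * δ) R ξ with ha
  have ham : Measurable a := by fun_prop
  have hai : Integrable a := integrable_cut hδ2 R (2 * r) (by positivity)
  have ha0 : ∀ ξ, 0 ≤ a ξ := fun ξ => mul_nonneg (by positivity) (cut_nonneg _ _ _)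
  set Φ : ℝ × ℝ → ℝ × ℝ → ℂ := fun ξ z =>
    (a ξ : ℂ) * ((w z.1 * ex (θ z.1 ξ)) * (starRingEnd ℂ) (w z.2 * ex (θ z.2 ξ))) with hΦ
  have hΦm : Measurable (Function.uncurry Φ) := by
    have hc : Measurable (starRingEnd ℂ) := Complex.continuous_conj.measurable
    unfold Function.uncurry
    simp only [hΦ, hθ]
    fun_prop
  have hΦn : ∀ ξ z, ‖Φ ξ z‖ ≤ a ξ * (Ω * Ω) := by
    intro ξ z
    simp only [hΦ, norm_mul, Complex.norm_real, Real.norm_of_nonneg (ha0 ξ), norm_ex, mul_one,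
      RCLike.norm_conj]
    exact mul_le_mul_of_nonneg_left (mul_le_mul (hΩ _) (hΩ _) (norm_nonneg _) hΩ0) (ha0 ξ)
  have hΦi : Integrable (Function.uncurry Φ) (volume.prod (μ.prod μ)) := by
    refine Integrable.mono' (g := fun q => a q.1 * (Ω * Ω)) ?_ hΦm.aestronglyMeasurable
      (Filter.Eventually.of_forall fun q => hΦn q.1 q.2)
    exact hai.mul_prod (integrable_const (Ω * Ω))
  have hsq : ∀ ξ, ((‖hfun r δ R μ w y ξ‖ ^ 2 : ℝ) : ℂ) = ∫ z, Φ ξ z ∂(μ.prod μ) := by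
    intro ξ
    simp only [hΦ]
    rw [integral_const_mul, integral_prod_mul (fun t => w t * ex (θ t ξ))
      (fun t => (starRingEnd ℂ) (w t * ex (θ t ξ))), integral_conj]
    change _ = (a ξ : ℂ) * (Pw μ w y ξ * (starRingEnd ℂ) (Pw μ w y ξ))
    rw [Complex.mul_conj, Complex.normSq_eq_norm_sq, ← Complex.ofReal_mul]
    congr 1
    rw [hfun, norm_mul, mul_pow, Complex.norm_real, Real.norm_eq_abs, sq_abs, mul_pow, cut_sq, ha]
    simp only [abs_rpow_two_mul _ _ hr]
    ring
  have hsqInt : Integrable (fun ξ => ‖hfun r δ R μ w y ξ‖ ^ 2) := by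
    have := hΦi.integral_prod_left
    simp only [Function.uncurry, ← hsq] at this
    exact this.re
  have e1 : ∫⁻ ξ, ‖hfun r δ R μ w y ξ‖ₑ ^ (2:ℝ) = ‖∫ ξ, ∫ z, Φ ξ z ∂(μ.prod μ)‖ₑ := by
    simp only [← hsq]
    rw [integral_complex_ofReal, ← ofReal_norm, Complex.norm_real, Real.norm_of_nonneg
      (integral_nonneg fun _ => by positivity), ofReal_integral_eq_lintegral_ofReal hsqInt
      (Filter.Eventually.of_forall fun _ => by positivity)]
    congr 1; ext ξ
    rw [← ofReal_norm, ENNReal.ofReal_rpow_of_nonneg (norm_nonneg _) (by norm_num)]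
    norm_num
  have hk : ∀ t s, t ∈ Set.Ioc m b → s ∈ Set.Ioc m b → t ≠ s →
      ‖∫ ξ, Φ ξ (t, s)‖ₑ ≤ ENNReal.ofReal (92 * √Real.pi) *
        (‖w t‖ₑ * ‖w s‖ₑ * ENNReal.ofReal (|t - s| ^ (-(22/27) : ℝ))) := by
    intro t s ht hs hts
    have e : ∀ ξ, Φ ξ (t, s) = (w t * (starRingEnd ℂ) (w s)) *
        (((|ξ.1| ^ (2 * r) * cut (2 * δ) R ξ : ℝ) : ℂ) *
          ex ((t - s) * ph ξ + 2 * Real.pi *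
            (((y t).1 - (y s).1) * ξ.1 + ((y t).2 - (y s).2) * ξ.2))) := by
      intro ξ
      have : (t - s) * ph ξ + 2 * Real.pi *
            (((y t).1 - (y s).1) * ξ.1 + ((y t).2 - (y s).2) * ξ.2) = θ t ξ + -θ s ξ := by
        simp only [hθ]; ring
      rw [this, ex_add]
      simp only [hΦ, ha, map_mul, conj_ex]
      ring
    simp only [e]
    rw [integral_const_mul, enorm_mul, enorm_mul]
    have K := kernel_bound (s := t - s) (z := (y t).1 - (y s).1) (y := (y t).2 - (y s).2)
      hδ2 (sub_ne_zero.2 hts)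
      (by rw [abs_le]; constructor <;> linarith [ht.1, ht.2, hs.1, hs.2]) hr hr2 hR
    have K' : ‖∫ ξ : ℝ × ℝ, ((|ξ.1| ^ (2 * r) * cut (2 * δ) R ξ : ℝ) : ℂ) *
          ex ((t - s) * ph ξ + 2 * Real.pi *
            (((y t).1 - (y s).1) * ξ.1 + ((y t).2 - (y s).2) * ξ.2))‖ₑ
        ≤ ENNReal.ofReal (92 * √Real.pi) * ENNReal.ofReal (|t - s| ^ (-(22/27) : ℝ)) := by
      rw [← ENNReal.ofReal_mul (by positivity), ← ofReal_norm]
      exact ENNReal.ofReal_le_ofReal K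
    refine (mul_le_mul_right K' _).trans (le_of_eq ?_)
    have : ‖(starRingEnd ℂ) (w s)‖ₑ = ‖w s‖ₑ := by
      rw [← ofReal_norm, ← ofReal_norm, RCLike.norm_conj]
    rw [this]; ring
  rw [e1, integral_integral_swap hΦi]
  refine (enorm_integral_le_lintegral_enorm _).trans ((lintegral_prod_le _).trans ?_)
  calc ∫⁻ t, ∫⁻ s, ‖∫ ξ, Φ ξ (t, s)‖ₑ ∂μ ∂μ
      ≤ ∫⁻ t, ∫⁻ s, ENNReal.ofReal (92 * √Real.pi) *
        (‖w t‖ₑ * ‖w s‖ₑ * ENNReal.ofReal (|t - s| ^ (-(22/27) : ℝ))) ∂μ ∂μ := by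
        refine lintegral_mono_ae ((ae_restrict_mem measurableSet_Ioc).mono fun t ht => ?_)
        refine lintegral_mono_ae ?_
        have h1 : ∀ᵐ s ∂μ, s ≠ t := ae_restrict_of_ae (Measure.ae_ne volume t)
        filter_upwards [h1, ae_restrict_mem measurableSet_Ioc] with s hs hs'
        exact hk t s ht hs' hs.symm
    _ = ENNReal.ofReal (92 * √Real.pi) * ∫⁻ t, ∫⁻ s,
        ‖w t‖ₑ * ‖w s‖ₑ * ENNReal.ofReal (|t - s| ^ (-(22/27) : ℝ)) ∂μ ∂μ := by
        rw [← lintegral_const_mul' _ _ ENNReal.ofReal_ne_top]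
        congr 1; ext t
        rw [lintegral_const_mul' _ _ ENNReal.ofReal_ne_top]
    _ ≤ _ := by
        rw [ENNReal.ofReal_mul (p := 92 * √Real.pi) (by positivity), mul_assoc]
        exact mul_le_mul_right (hls hmb hw.enorm) _

end

/-! ### Rectangular blocks of times -/

section

/-- An integrable envelope on frequency space, with room for the weights `|ξ₁|^q`, `-1 < q ≤ 2`. -/
def env (ξ : ℝ × ℝ) : ℝ := ((1 + ξ.1 ^ 2) ^ 2)⁻¹ * ((1 + ξ.2 ^ 2) ^ 2)⁻¹

lemma env_nonneg (ξ : ℝ × ℝ) : 0 ≤ env ξ := by unfold env; positivity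

lemma env_le_one (ξ : ℝ × ℝ) : env ξ ≤ 1 := by
  unfold env
  have h : ∀ x : ℝ, ((1 + x ^ 2) ^ 2)⁻¹ ≤ 1 := fun x =>
    inv_le_one_of_one_le₀ (by nlinarith [sq_nonneg x, sq_nonneg (x ^ 2)])
  exact mul_le_one₀ (h _) (by positivity) (h _)

@[fun_prop] lemma measurable_env : Measurable env := by unfold env; fun_prop

lemma integrable_env_one {q : ℝ} (hq : -1 < q) (hq2 : q ≤ 2) :
    Integrable (fun x : ℝ => |x| ^ q * ((1 + x ^ 2) ^ 2)⁻¹) := by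
  have hi : IntegrableOn (fun x : ℝ => |x| ^ q) (Set.Ioc (-1) 1) := by
    have h1 : IntervalIntegrable (fun x : ℝ => |x| ^ q) volume 0 1 := by
      refine (intervalIntegral.intervalIntegrable_rpow' hq).congr ?_
      intro x hx
      rw [Set.uIoc_of_le zero_le_one] at hx
      simp only [abs_of_pos hx.1]
    have h2 : IntervalIntegrable (fun x : ℝ => |x| ^ q) volume (-1) 0 := by
      have := h1.comp_sub_left 0
      simp only [zero_sub, abs_neg, sub_zero] at this
      exact this.symm
    exact (intervalIntegrable_iff_integrableOn_Ioc_of_le (by norm_num)).1 (h2.trans h1)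
  have hi' := (integrable_indicator_iff measurableSet_Ioc).2 hi
  refine Integrable.mono' (hi'.add integrable_inv_one_add_sq) (by fun_prop)
    (Filter.Eventually.of_forall fun x => ?_)
  rw [Real.norm_of_nonneg (by positivity)]
  simp only [Pi.add_apply, Set.indicator]
  have hp : (1:ℝ) ≤ 1 + x ^ 2 := by nlinarith [sq_nonneg x]
  split_ifs with h
  · have : |x| ^ q * ((1 + x ^ 2) ^ 2)⁻¹ ≤ |x| ^ q * 1 := by
      refine mul_le_mul_of_nonneg_left (inv_le_one_of_one_le₀ (by nlinarith)) (by positivity)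
    have : 0 ≤ (1 + x ^ 2)⁻¹ := by positivity
    linarith
  · rw [zero_add]
    have hx : 1 ≤ |x| := by
      by_contra hc
      push Not at hc
      exact h ⟨(abs_lt.1 hc).1, (abs_lt.1 hc).2.le⟩
    have h1 : |x| ^ q ≤ 1 + x ^ 2 := by
      calc |x| ^ q ≤ |x| ^ (2:ℝ) := Real.rpow_le_rpow_of_exponent_le hx hq2
        _ = x ^ 2 := by norm_num
        _ ≤ _ := by linarith
    rw [sq (1 + x ^ 2), mul_inv, ← mul_assoc]
    refine mul_le_of_le_one_left (by positivity) ?_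
    rw [← div_eq_mul_inv, div_le_one (by positivity)]
    exact h1

lemma integrable_env {q : ℝ} (hq : -1 < q) (hq2 : q ≤ 2) :
    Integrable (fun ξ : ℝ × ℝ => |ξ.1| ^ q * env ξ) := by
  have h := (integrable_env_one hq hq2).mul_prod (integrable_env_one (q := 0) (by norm_num) (by norm_num))
  refine h.congr (Filter.Eventually.of_forall fun ξ => ?_)
  simp only [env, Real.rpow_zero, one_mul, mul_assoc]

lemma memLp_two_of {f : ℝ × ℝ → ℂ} {g : ℝ × ℝ → ℝ} (hf : AEStronglyMeasurable f)
    (hg : Integrable g) (h : ∀ ξ, ‖f ξ‖ ^ 2 ≤ g ξ) : MemLp f 2 := by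
  refine (memLp_two_iff_integrable_sq_norm hf).2 (hg.mono' (hf.norm.pow 2) ?_)
  exact Filter.Eventually.of_forall fun ξ => by
    rw [Real.norm_of_nonneg (by positivity)]; exact h ξ

variable {w : ℝ → ℂ} {y : ℝ → ℝ × ℝ}

lemma hfun_memLp {r δ R Ω p : ℝ} {μ : Measure ℝ} [IsFiniteMeasure μ] (hr : 0 ≤ r) (hp : 0 ≤ p)
    (hδ : 0 < δ) (hw : Measurable w) (hy : Measurable y) (hΩ : ∀ t, ‖w t‖ ≤ Ω) :
    Integrable (fun ξ => ((|ξ.1| ^ p : ℝ) : ℂ) * hfun r δ R μ w y ξ) ∧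
    MemLp (fun ξ => ((|ξ.1| ^ p : ℝ) : ℂ) * hfun r δ R μ w y ξ) 2 := by
  have hm := measurable_hfun r δ R μ hw hy
  set S := Ω * μ.real Set.univ with hS
  have hS0 : 0 ≤ S := (norm_nonneg _).trans (norm_Pw_le (y := y) μ hΩ 0)
  have hmm : AEStronglyMeasurable (fun ξ : ℝ × ℝ => ((|ξ.1| ^ p : ℝ) : ℂ) * hfun r δ R μ w y ξ) := by
    fun_prop
  have hn : ∀ ξ : ℝ × ℝ, ‖((|ξ.1| ^ p : ℝ) : ℂ) * hfun r δ R μ w y ξ‖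
      ≤ |ξ.1| ^ (p + r) * cut δ R ξ * S := by
    intro ξ
    have hc := cut_nonneg δ R ξ
    rw [hfun, norm_mul, norm_mul, Complex.norm_real, Complex.norm_real,
      Real.norm_of_nonneg (by positivity), Real.norm_of_nonneg (by positivity),
      Real.rpow_add_of_nonneg (abs_nonneg _) hp hr]
    calc |ξ.1| ^ p * (|ξ.1| ^ r * cut δ R ξ * ‖Pw μ w y ξ‖)
        ≤ |ξ.1| ^ p * (|ξ.1| ^ r * cut δ R ξ * S) := by
          refine mul_le_mul_of_nonneg_left ?_ (by positivity)
          exact mul_le_mul_of_nonneg_left (norm_Pw_le μ hΩ ξ) (by positivity)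
      _ = _ := by ring
  refine ⟨((integrable_cut hδ R (p + r) (by positivity)).mul_const S).mono' hmm
    (Filter.Eventually.of_forall hn), memLp_two_of hmm
    ((integrable_cut (δ := 2 * δ) (by positivity) R (2 * (p + r)) (by positivity)).mul_const (S ^ 2))
    fun ξ => ?_⟩
  calc _ ≤ (|ξ.1| ^ (p + r) * cut δ R ξ * S) ^ 2 := by
        exact pow_le_pow_left₀ (norm_nonneg _) (hn ξ) 2
    _ = _ := by rw [← cut_sq, abs_rpow_two_mul _ _ (by positivity)]; ring

variable {γ : ℝ → ℝ × ℝ → ℂ}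

/-- The source with the multiplier `|ξ₁|^{-r}`, in physical space. -/
def Gf (r : ℝ) (γ : ℝ → ℝ × ℝ → ℂ) (τ : ℝ) : ℝ × ℝ → ℂ :=
  FTinv fun ξ => ((|ξ.1| ^ (-r) : ℝ) : ℂ) * γ τ ξ

/-- The weighted `L²` norm (squared) of the source over the time interval `(a, b]`. -/
def Gn (r : ℝ) (γ : ℝ → ℝ × ℝ → ℂ) (a b : ℝ) : ℝ≥0∞ :=
  ∫⁻ τ in Set.Ioc a b, ∫⁻ x : ℝ × ℝ, ENNReal.ofReal (1 + x.1 ^ 2) * ‖Gf r γ τ x‖ₑ ^ (2:ℝ)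

lemma measurable_Gf (r : ℝ) (hγ : Measurable (Function.uncurry γ)) :
    Measurable (Function.uncurry (Gf r γ)) := by
  have hγ' : Measurable fun q : (ℝ × ℝ × ℝ) × ℝ × ℝ => γ q.1.1 q.2 :=
    hγ.comp (measurable_fst.fst.prodMk measurable_snd)
  have : StronglyMeasurable (Function.uncurry fun (p : ℝ × ℝ × ℝ) (ξ : ℝ × ℝ) =>
      Complex.exp ((((2 * Real.pi * (p.2.1 * ξ.1 + p.2.2 * ξ.2)) : ℝ) : ℂ) * Complex.I) *
        (((|ξ.1| ^ (-r) : ℝ) : ℂ) * γ p.1 ξ)) := by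
    refine Measurable.stronglyMeasurable ?_
    unfold Function.uncurry
    fun_prop
  exact (this.integral_prod_right).measurable

lemma amp_memLp {M r τ : ℝ} (hr : 0 ≤ r) (hr2 : r ≤ 2/9) (hγ : Measurable (Function.uncurry γ))
    (hM : ∀ τ ξ, ‖γ τ ξ‖ ≤ M * env ξ) :
    Integrable (fun ξ : ℝ × ℝ => ((|ξ.1| ^ (-r) : ℝ) : ℂ) * γ τ ξ) ∧
    MemLp (fun ξ : ℝ × ℝ => ((|ξ.1| ^ (-r) : ℝ) : ℂ) * γ τ ξ) 2 := by
  have hγτ : Measurable (γ τ) := hγ.comp measurable_prodMk_left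
  have hmm : AEStronglyMeasurable (fun ξ : ℝ × ℝ => ((|ξ.1| ^ (-r) : ℝ) : ℂ) * γ τ ξ) := by
    fun_prop
  have hn : ∀ ξ : ℝ × ℝ, ‖((|ξ.1| ^ (-r) : ℝ) : ℂ) * γ τ ξ‖ ≤ |ξ.1| ^ (-r) * env ξ * M := by
    intro ξ
    rw [norm_mul, Complex.norm_real, Real.norm_of_nonneg (by positivity), mul_assoc, mul_comm (env ξ)]
    exact mul_le_mul_of_nonneg_left (hM τ ξ) (by positivity)
  refine ⟨((integrable_env (by linarith) (by linarith)).mul_const M).mono' hmm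
    (Filter.Eventually.of_forall hn), memLp_two_of hmm
    ((integrable_env (q := -(2 * r)) (by linarith) (by linarith)).mul_const (M ^ 2)) fun ξ => ?_⟩
  calc _ ≤ (|ξ.1| ^ (-r) * env ξ * M) ^ 2 := pow_le_pow_left₀ (norm_nonneg _) (hn ξ) 2
    _ = (|ξ.1| ^ (-r)) ^ 2 * (env ξ * env ξ) * M ^ 2 := by ring
    _ ≤ (|ξ.1| ^ (-r)) ^ 2 * (1 * env ξ) * M ^ 2 := by
        have := mul_le_mul_of_nonneg_right (env_le_one ξ) (env_nonneg ξ)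
        gcongr
    _ = _ := by
        rw [← Real.rpow_natCast, ← Real.rpow_mul (abs_nonneg _), one_mul]
        congr 3; push_cast; ring

end

section

variable {w : ℝ → ℂ} {y : ℝ → ℝ × ℝ} {γ : ℝ → ℝ × ℝ → ℂ}

/-- Cauchy–Schwarz with the weight `1 + x₁²`. -/
lemma weighted_cs {ν : Measure ℝ} [SFinite ν] {P Q : ℝ × ℝ × ℝ → ℝ≥0∞} (hP : Measurable P)
    (hQ : Measurable Q) :
    ∫⁻ τ, (∫⁻ x, P (τ, x) * Q (τ, x)) ∂ν ≤
      (∫⁻ τ, (∫⁻ x : ℝ × ℝ, ENNReal.ofReal (1 + x.1 ^ 2) * P (τ, x) ^ (2:ℝ)) ∂ν) ^ ((1:ℝ)/2) *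
      (∫⁻ τ, (∫⁻ x : ℝ × ℝ, ENNReal.ofReal ((1 + x.1 ^ 2)⁻¹) * Q (τ, x) ^ (2:ℝ)) ∂ν) ^ ((1:ℝ)/2) := by
  set a : ℝ × ℝ × ℝ → ℝ≥0∞ := fun q => ENNReal.ofReal (1 + q.2.1 ^ 2) ^ ((1:ℝ)/2) * P q with ha
  set b : ℝ × ℝ × ℝ → ℝ≥0∞ := fun q => ENNReal.ofReal ((1 + q.2.1 ^ 2)⁻¹) ^ ((1:ℝ)/2) * Q q with hb
  have ham : Measurable a := by fun_prop
  have hbm : Measurable b := by fun_prop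
  have H := ENNReal.lintegral_mul_le_Lp_mul_Lq (ν.prod (volume : Measure (ℝ × ℝ)))
    Real.HolderConjugate.two_two ham.aemeasurable hbm.aemeasurable
  have e1 : ∀ q, (a * b) q = P q * Q q := by
    intro q
    have : ENNReal.ofReal (1 + q.2.1 ^ 2) ^ ((1:ℝ)/2) * ENNReal.ofReal ((1 + q.2.1 ^ 2)⁻¹) ^ ((1:ℝ)/2)
        = 1 := by
      rw [← ENNReal.mul_rpow_of_nonneg _ _ (by norm_num), ← ENNReal.ofReal_mul (by positivity),
        mul_inv_cancel₀ (by positivity)]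
      simp
    simp only [Pi.mul_apply, ha, hb]
    calc _ = (ENNReal.ofReal (1 + q.2.1 ^ 2) ^ ((1:ℝ)/2) *
          ENNReal.ofReal ((1 + q.2.1 ^ 2)⁻¹) ^ ((1:ℝ)/2)) * (P q * Q q) := by ring
      _ = _ := by rw [this, one_mul]
  have e2 : ∀ q, a q ^ (2:ℝ) = ENNReal.ofReal (1 + q.2.1 ^ 2) * P q ^ (2:ℝ) := by
    intro q
    simp only [ha]
    rw [ENNReal.mul_rpow_of_nonneg _ _ (by norm_num), ← ENNReal.rpow_mul]
    norm_num
  have e3 : ∀ q, b q ^ (2:ℝ) = ENNReal.ofReal ((1 + q.2.1 ^ 2)⁻¹) * Q q ^ (2:ℝ) := by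
    intro q
    simp only [hb]
    rw [ENNReal.mul_rpow_of_nonneg _ _ (by norm_num), ← ENNReal.rpow_mul]
    norm_num
  simp only [e1, e2, e3] at H
  rw [lintegral_prod _ (by fun_prop), lintegral_prod _ (by fun_prop),
    lintegral_prod _ (by fun_prop)] at H
  exact H

/-- The block estimate with a frequency cutoff, which makes all the integrals absolutely convergent.
For each `τ`, Parseval in `x` pairs `F⁻¹(|ξ₁|^{-r} γ)` with the Fourier transform of the dual packet;
weighted Cauchy–Schwarz, `smoothing` and `hfun_bound` then give the two factors. -/
lemma cut_block {a m b r δ R Ω M : ℝ} (hmb : m ≤ b) (hb1 : b - m ≤ 1) (hr : 0 ≤ r)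
    (hr2 : r ≤ 2/9) (hδ : 0 < δ) (hR : 0 < R) (hw : Measurable w) (hy : Measurable y)
    (hΩ : ∀ t, ‖w t‖ ≤ Ω) (hγ : Measurable (Function.uncurry γ))
    (hM : ∀ τ ξ, ‖γ τ ξ‖ ≤ M * env ξ) :
    ‖∫ τ in Set.Ioc a m, ∫ ξ : ℝ × ℝ, (cut δ R ξ : ℂ) * ((ξ.1 : ℂ) * γ τ ξ * ex (-(τ * ph ξ)) *
        Pw (volume.restrict (Set.Ioc m b)) w y ξ)‖ₑ
      ≤ Gn r γ a m ^ ((1:ℝ)/2) * (ENNReal.ofReal (2 * Real.pi ^ 2 / 3) *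
        (ENNReal.ofReal (92 * √Real.pi * (24 * (b - m) ^ ((2:ℝ)/27))) *
        (∫⁻ t in Set.Ioc m b, ‖w t‖ₑ ^ ((9:ℝ)/5)) ^ ((10:ℝ)/9))) ^ ((1:ℝ)/2) := by
  set μ := (volume : Measure ℝ).restrict (Set.Ioc m b) with hμ
  set h := hfun r δ R μ w y with hh
  have hhm : Measurable h := measurable_hfun r δ R μ hw hy
  obtain ⟨h1, h2⟩ := hfun_memLp (r := r) (R := R) (p := 1) (μ := μ) hr zero_le_one hδ hw hy hΩ
  obtain ⟨-, h3⟩ := hfun_memLp (r := r) (R := R) (p := 0) (μ := μ) hr le_rfl hδ hw hy hΩ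
  simp only [Real.rpow_zero, Complex.ofReal_one, one_mul, Real.rpow_one, ← hh] at h1 h2 h3
  set k : ℝ → ℝ × ℝ → ℂ := fun τ ξ => (ξ.1 : ℂ) * (ex (-(τ * ph ξ)) * h ξ) with hk
  have hkn : ∀ τ ξ, ‖k τ ξ‖ = ‖((|ξ.1| : ℝ) : ℂ) * h ξ‖ := by
    intro τ ξ; simp [hk]
  have hkm : ∀ τ, AEStronglyMeasurable (k τ) := fun τ => by simp only [hk]; fun_prop
  have hk1 : ∀ τ, Integrable (k τ) := fun τ =>
    h1.mono (hkm τ) (Filter.Eventually.of_forall fun ξ => (hkn τ ξ).le)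
  have hk2 : ∀ τ, MemLp (k τ) 2 := fun τ =>
    h2.of_le (hkm τ) (Filter.Eventually.of_forall fun ξ => (hkn τ ξ).le)
  have hxh : Integrable (fun ξ : ℝ × ℝ => (ξ.1 : ℂ) * h ξ) :=
    h1.mono (by fun_prop) (Filter.Eventually.of_forall fun ξ => by simp)
  have e : ∀ τ, ∫ ξ : ℝ × ℝ, (cut δ R ξ : ℂ) * ((ξ.1 : ℂ) * γ τ ξ * ex (-(τ * ph ξ)) *
        Pw μ w y ξ) = ∫ x, Gf r γ τ x * FT (k τ) x := by
    intro τ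
    obtain ⟨a1, a2⟩ := amp_memLp (τ := τ) hr hr2 hγ hM
    rw [Gf, FT_pair a1 a2 (hk1 τ) (hk2 τ)]
    congr 1; ext ξ
    simp only [hk, hh, hfun]
    rcases eq_or_ne ξ.1 0 with h0 | h0
    · simp [h0]
    · have : ((|ξ.1| ^ (-r) : ℝ) : ℂ) * ((|ξ.1| ^ r : ℝ) : ℂ) = 1 := by
        rw [← Complex.ofReal_mul, ← Real.rpow_add (abs_pos.2 h0)]; simp
      push_cast at this ⊢
      linear_combination (-(ξ.1 : ℂ) * γ τ ξ * ex (-(τ * ph ξ)) * (cut δ R ξ : ℂ) *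
        Pw μ w y ξ) * this
  simp only [e]
  have hGm := measurable_Gf r hγ
  have hFm : Measurable fun p : ℝ × ℝ × ℝ => FT (k p.1) p.2 := by
    have : StronglyMeasurable (Function.uncurry fun (p : ℝ × ℝ × ℝ) (ξ : ℝ × ℝ) =>
      Complex.exp (((-(2 * Real.pi * (ξ.1 * p.2.1 + ξ.2 * p.2.2)) : ℝ) : ℂ) * Complex.I) *
        ((ξ.1 : ℂ) * (ex (-(p.1 * ph ξ)) * h ξ))) := by
      refine Measurable.stronglyMeasurable ?_
      unfold Function.uncurry
      fun_prop
    exact (this.integral_prod_right).measurable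
  refine (enorm_integral_le_lintegral_enorm _).trans ?_
  calc _ ≤ ∫⁻ τ in Set.Ioc a m, ∫⁻ x, ‖Gf r γ τ x‖ₑ * ‖FT (k τ) x‖ₑ := by
        refine lintegral_mono fun τ => (enorm_integral_le_lintegral_enorm _).trans ?_
        simp only [enorm_mul]; exact le_rfl
    _ ≤ _ := weighted_cs (P := fun q => ‖Gf r γ q.1 q.2‖ₑ) (Q := fun q => ‖FT (k q.1) q.2‖ₑ)
        hGm.enorm hFm.enorm
    _ ≤ _ := by
        refine mul_le_mul' le_rfl (ENNReal.rpow_le_rpow ?_ (by norm_num))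
        calc _ ≤ ∫⁻ τ, ∫⁻ x : ℝ × ℝ, ENNReal.ofReal ((1 + x.1 ^ 2)⁻¹) * ‖FT (k τ) x‖ₑ ^ (2:ℝ) :=
              lintegral_mono' Measure.restrict_le_self le_rfl
          _ ≤ _ := smoothing hhm hxh h3
          _ ≤ _ := mul_le_mul' le_rfl (hfun_bound hmb hb1 hr hr2 hδ hR hw hy hΩ)

end

section

variable {w : ℝ → ℂ} {y : ℝ → ℝ × ℝ} {γ : ℝ → ℝ × ℝ → ℂ}

/-- The propagator acting on the source at time `τ`, after one derivative in `x₁`, evaluated at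
time `t` and at the point `y t` (up to the factor `2πi`). -/
def kk (y : ℝ → ℝ × ℝ) (γ : ℝ → ℝ × ℝ → ℂ) (t τ : ℝ) : ℂ :=
  ∫ ξ : ℝ × ℝ, (ξ.1 : ℂ) * γ τ ξ *
    ex ((t - τ) * ph ξ + 2 * Real.pi * ((y t).1 * ξ.1 + (y t).2 * ξ.2))

lemma integrable_dom (M : ℝ) : Integrable (fun ξ : ℝ × ℝ => |ξ.1| * (M * env ξ)) := by
  have := (integrable_env (q := 1) (by norm_num) (by norm_num)).mul_const M
  refine this.congr (Filter.Eventually.of_forall fun ξ => ?_)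
  simp only [Real.rpow_one]; ring

lemma norm_kk_le {M : ℝ} (hM : ∀ τ ξ, ‖γ τ ξ‖ ≤ M * env ξ) (t τ : ℝ) :
    ‖kk y γ t τ‖ ≤ ∫ ξ : ℝ × ℝ, |ξ.1| * (M * env ξ) := by
  refine norm_integral_le_of_norm_le (integrable_dom M) (Filter.Eventually.of_forall fun ξ => ?_)
  rw [norm_mul, norm_mul, norm_ex, mul_one, Complex.norm_real, Real.norm_eq_abs]
  exact mul_le_mul_of_nonneg_left (hM τ ξ) (abs_nonneg _)

lemma measurable_kk (hy : Measurable y) (hγ : Measurable (Function.uncurry γ)) :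
    Measurable (Function.uncurry (kk y γ)) := by
  have hγ' : Measurable fun q : (ℝ × ℝ) × ℝ × ℝ => γ q.1.2 q.2 :=
    hγ.comp (measurable_fst.snd.prodMk measurable_snd)
  have : StronglyMeasurable (Function.uncurry fun (p : ℝ × ℝ) (ξ : ℝ × ℝ) =>
      (ξ.1 : ℂ) * γ p.2 ξ *
        ex ((p.1 - p.2) * ph ξ + 2 * Real.pi * ((y p.1).1 * ξ.1 + (y p.1).2 * ξ.2))) := by
    refine Measurable.stronglyMeasurable ?_
    unfold Function.uncurry
    fun_prop
  exact (this.integral_prod_right).measurable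

lemma tendsto_cut (ξ : ℝ × ℝ) :
    Filter.Tendsto (fun n : ℕ => cut (1 / ((n:ℝ) + 1)) ((n:ℝ) + 1) ξ) Filter.atTop (nhds 1) := by
  have h1 : Filter.Tendsto (fun n : ℕ => Real.exp (-(1 / ((n:ℝ) + 1) * |ξ.1| * ξ.2 ^ 2)))
      Filter.atTop (nhds 1) := by
    have h := (tendsto_one_div_add_atTop_nhds_zero_nat (𝕜 := ℝ)).mul_const (|ξ.1| * ξ.2 ^ 2)
    have h2 := (Real.continuous_exp.tendsto _).comp h.neg
    simp only [zero_mul, neg_zero, Real.exp_zero] at h2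
    refine h2.congr fun n => ?_
    simp only [Function.comp, mul_assoc]
  refine h1.congr' ?_
  filter_upwards [Filter.eventually_ge_atTop ⌈|ξ.1|⌉₊] with n hn
  have : |ξ.1| ≤ (n:ℝ) + 1 := by
    have := Nat.ceil_le.1 hn
    linarith
  simp only [cut, if_pos this]

/-- The estimate for a rectangular block of times `t ∈ (m, b]`, `τ ∈ (a, m]`, by duality. -/
lemma block {a m b r Ω M : ℝ} (hmb : m ≤ b) (hb1 : b - m ≤ 1) (hr : 0 ≤ r)
    (hr2 : r ≤ 2/9) (hw : Measurable w) (hy : Measurable y)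
    (hΩ : ∀ t, ‖w t‖ ≤ Ω) (hγ : Measurable (Function.uncurry γ))
    (hM : ∀ τ ξ, ‖γ τ ξ‖ ≤ M * env ξ) :
    ‖∫ t in Set.Ioc m b, ∫ τ in Set.Ioc a m, w t * kk y γ t τ‖ₑ
      ≤ Gn r γ a m ^ ((1:ℝ)/2) * (ENNReal.ofReal (2 * Real.pi ^ 2 / 3) *
        (ENNReal.ofReal (92 * √Real.pi * (24 * (b - m) ^ ((2:ℝ)/27))) *
        (∫⁻ t in Set.Ioc m b, ‖w t‖ₑ ^ ((9:ℝ)/5)) ^ ((10:ℝ)/9))) ^ ((1:ℝ)/2) := by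
  set μ := (volume : Measure ℝ).restrict (Set.Ioc m b) with hμ
  set ν := (volume : Measure ℝ).restrict (Set.Ioc a m) with hν
  have hΩ0 : 0 ≤ Ω := (norm_nonneg _).trans (hΩ 0)
  have hγ' : Measurable fun q : ℝ × ℝ × ℝ => γ q.1 q.2 := hγ
  have hγ'' : Measurable fun q : ℝ × ℝ × ℝ × ℝ => γ q.2.1 q.2.2 := hγ'.comp measurable_snd
  set N : ℝ × ℝ × ℝ → ℂ := fun q => (q.2.1 : ℂ) * γ q.1 q.2 * ex (-(q.1 * ph q.2)) with hN
  have hNm : Measurable N := by fun_prop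
  have hNn : ∀ q, ‖N q‖ ≤ |q.2.1| * (M * env q.2) := by
    intro q
    simp only [hN]
    rw [norm_mul, norm_mul, norm_ex, mul_one, Complex.norm_real, Real.norm_eq_abs]
    exact mul_le_mul_of_nonneg_left (hM q.1 q.2) (abs_nonneg _)
  have hD : Integrable (fun q : ℝ × ℝ × ℝ => |q.2.1| * (M * env q.2))
      (ν.prod (volume : Measure (ℝ × ℝ))) := (integrable_dom M).comp_snd ν
  set F : ℝ → ℝ × ℝ × ℝ → ℂ := fun t q => N q *
    (w t * ex (t * ph q.2 + 2 * Real.pi * ((y t).1 * q.2.1 + (y t).2 * q.2.2))) with hF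
  have hFm : Measurable (Function.uncurry F) := by
    unfold Function.uncurry
    simp only [hF, hN]
    fun_prop
  have hFn : ∀ t q, ‖F t q‖ ≤ |q.2.1| * (M * env q.2) * Ω := by
    intro t q
    change ‖N q * _‖ ≤ _
    rw [norm_mul (N q), norm_mul (w t), norm_ex, mul_one]
    exact mul_le_mul (hNn q) (hΩ t) (norm_nonneg _) ((norm_nonneg _).trans (hNn q))
  have hFi : Integrable (Function.uncurry F) (μ.prod (ν.prod (volume : Measure (ℝ × ℝ)))) :=
    Integrable.mono' ((hD.mul_const Ω).comp_snd μ) hFm.aestronglyMeasurable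
      (Filter.Eventually.of_forall fun q => hFn q.1 q.2)
  have hFt : ∀ t, Integrable (F t) (ν.prod (volume : Measure (ℝ × ℝ))) := fun t =>
    Integrable.mono' (hD.mul_const Ω) (hFm.comp measurable_prodMk_left).aestronglyMeasurable
      (Filter.Eventually.of_forall fun q => hFn t q)
  have e1 : ∀ t, ∫ τ, w t * kk y γ t τ ∂ν = ∫ q, F t q ∂(ν.prod (volume : Measure (ℝ × ℝ))) := by
    intro t
    rw [integral_prod _ (hFt t)]
    congr 1; ext τ
    rw [kk, ← integral_const_mul]
    congr 1; ext ξ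
    have : (t - τ) * ph ξ + 2 * Real.pi * ((y t).1 * ξ.1 + (y t).2 * ξ.2)
      = -(τ * ph ξ) + (t * ph ξ + 2 * Real.pi * ((y t).1 * ξ.1 + (y t).2 * ξ.2)) := by ring
    rw [this, ex_add]
    simp only [hF, hN]
    ring
  have e2 : ∀ q, ∫ t, F t q ∂μ = N q * Pw μ w y q.2 := fun q => integral_const_mul _ _
  have e3 : ∫ t, ∫ τ, w t * kk y γ t τ ∂ν ∂μ
      = ∫ q, N q * Pw μ w y q.2 ∂(ν.prod (volume : Measure (ℝ × ℝ))) := by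
    simp only [e1]
    rw [integral_integral_swap hFi]
    simp only [e2]
  have hPm := measurable_Pw μ hw hy
  have hc0 : ∀ (n : ℕ), 0 < 1 / ((n:ℝ) + 1) := fun n => by positivity
  have hNP : Integrable (fun q => N q * Pw μ w y q.2) (ν.prod (volume : Measure (ℝ × ℝ))) := by
    have := hFi.integral_prod_right
    simp only [Function.uncurry, e2] at this
    exact this
  have hcn : ∀ (n : ℕ) (q : ℝ × ℝ × ℝ), ‖(cut (1 / ((n:ℝ) + 1)) ((n:ℝ) + 1) q.2 : ℂ) *
      (N q * Pw μ w y q.2)‖ ≤ ‖N q * Pw μ w y q.2‖ := by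
    intro n q
    rw [norm_mul, Complex.norm_real, Real.norm_of_nonneg (cut_nonneg _ _ _)]
    exact mul_le_of_le_one_left (norm_nonneg _) (cut_le_one (hc0 n) _ _)
  have hcm : ∀ n : ℕ, AEStronglyMeasurable (fun q : ℝ × ℝ × ℝ =>
      (cut (1 / ((n:ℝ) + 1)) ((n:ℝ) + 1) q.2 : ℂ) * (N q * Pw μ w y q.2))
      (ν.prod (volume : Measure (ℝ × ℝ))) := by
    intro n; fun_prop
  -- the frequency cutoff is removed by dominated convergence
  have lim := tendsto_integral_of_dominated_convergence _ hcm hNP.norm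
    (fun n => Filter.Eventually.of_forall (hcn n))
    (Filter.Eventually.of_forall fun q => by
      have := ((Complex.continuous_ofReal.tendsto _).comp (tendsto_cut q.2)).mul_const
        (N q * Pw μ w y q.2)
      rwa [Complex.ofReal_one, one_mul] at this)
  rw [e3]
  refine le_of_tendsto lim.enorm (Filter.Eventually.of_forall fun n => ?_)
  have hi : Integrable (fun q : ℝ × ℝ × ℝ =>
      (cut (1 / ((n:ℝ) + 1)) ((n:ℝ) + 1) q.2 : ℂ) * (N q * Pw μ w y q.2))
      (ν.prod (volume : Measure (ℝ × ℝ))) := hNP.mono (hcm n) (Filter.Eventually.of_forall (hcn n))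
  rw [integral_prod _ hi]
  exact cut_block hmb hb1 hr hr2 (hc0 n) (by positivity) hw hy hΩ hγ hM

end

/-! ### From blocks to the causal triangle -/

/-- Since `5/9 + 1/2 ≥ 1`, products of norms over adjacent intervals are superadditive. -/
lemma holder_two {W₁ W₂ G₁ G₂ : ℝ} (h1 : 0 ≤ W₁) (h2 : 0 ≤ W₂) (h3 : 0 ≤ G₁) (h4 : 0 ≤ G₂) :
    W₁ ^ ((5:ℝ)/9) * G₁ ^ ((1:ℝ)/2) + W₂ ^ ((5:ℝ)/9) * G₂ ^ ((1:ℝ)/2)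
      ≤ (W₁ + W₂) ^ ((5:ℝ)/9) * (G₁ + G₂) ^ ((1:ℝ)/2) := by
  have key : ∀ {W : ℝ}, 0 ≤ W → W ^ ((5:ℝ)/9) = W ^ ((1:ℝ)/18) * √W := by
    intro W hW
    rw [Real.sqrt_eq_rpow, ← Real.rpow_add_of_nonneg hW (by norm_num) (by norm_num)]
    norm_num
  rw [key h1, key h2, key (add_nonneg h1 h2)]
  simp only [← Real.sqrt_eq_rpow]
  have m1 : W₁ ^ ((1:ℝ)/18) ≤ (W₁ + W₂) ^ ((1:ℝ)/18) :=
    Real.rpow_le_rpow h1 (by linarith) (by norm_num)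
  have m2 : W₂ ^ ((1:ℝ)/18) ≤ (W₁ + W₂) ^ ((1:ℝ)/18) :=
    Real.rpow_le_rpow h2 (by linarith) (by norm_num)
  have cs : √W₁ * √G₁ + √W₂ * √G₂ ≤ √(W₁ + W₂) * √(G₁ + G₂) := by
    rw [← Real.sqrt_mul (add_nonneg h1 h2)]
    refine Real.le_sqrt_of_sq_le ?_
    nlinarith [Real.sq_sqrt h1, Real.sq_sqrt h2, Real.sq_sqrt h3, Real.sq_sqrt h4,
      sq_nonneg (√W₁ * √G₂ - √W₂ * √G₁)]
  calc _ ≤ (W₁ + W₂) ^ ((1:ℝ)/18) * √W₁ * √G₁ + (W₁ + W₂) ^ ((1:ℝ)/18) * √W₂ * √G₂ := by gcongr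
    _ = (W₁ + W₂) ^ ((1:ℝ)/18) * (√W₁ * √G₁ + √W₂ * √G₂) := by ring
    _ ≤ (W₁ + W₂) ^ ((1:ℝ)/18) * (√(W₁ + W₂) * √(G₁ + G₂)) := by gcongr
    _ = _ := by ring

/-- The kernel restricted to the causal region `τ ≤ t`. -/
def causal (K : ℝ → ℝ → ℂ) (t τ : ℝ) : ℂ := if τ ≤ t then K t τ else 0

/-- Integral of a kernel over the rectangle `(a, b] × (c, d]`. -/
def rect (K : ℝ → ℝ → ℂ) (a b c d : ℝ) : ℂ := ∫ t in Set.Ioc a b, ∫ τ in Set.Ioc c d, K t τ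

section
variable {K : ℝ → ℝ → ℂ} {E : ℝ}

lemma integrableOn_inner (hK : Measurable (Function.uncurry K)) (hE : ∀ t τ, ‖K t τ‖ ≤ E)
    (t c d : ℝ) : IntegrableOn (K t) (Set.Ioc c d) :=
  Integrable.of_bound (C := E) (hK.comp measurable_prodMk_left).aestronglyMeasurable
    (Filter.Eventually.of_forall fun τ => hE t τ)

lemma integrableOn_outer (hK : Measurable (Function.uncurry K)) (hE : ∀ t τ, ‖K t τ‖ ≤ E)
    (a b c d : ℝ) : IntegrableOn (fun t => ∫ τ in Set.Ioc c d, K t τ) (Set.Ioc a b) := by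
  refine Integrable.of_bound (C := E * (volume.restrict (Set.Ioc c d)).real Set.univ) ?_
    (Filter.Eventually.of_forall fun t => ?_)
  · exact (hK.stronglyMeasurable.integral_prod_right (ν := volume.restrict (Set.Ioc c d))).aestronglyMeasurable
  · exact norm_integral_le_of_norm_le_const (Filter.Eventually.of_forall fun τ => hE t τ)

lemma rect_add_left (hK : Measurable (Function.uncurry K)) (hE : ∀ t τ, ‖K t τ‖ ≤ E)
    {a m b : ℝ} (h1 : a ≤ m) (h2 : m ≤ b) (c d : ℝ) :
    rect K a b c d = rect K a m c d + rect K m b c d := by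
  unfold rect
  rw [← Set.Ioc_union_Ioc_eq_Ioc h1 h2]
  exact setIntegral_union (Set.Ioc_disjoint_Ioc_of_le le_rfl) measurableSet_Ioc
    (integrableOn_outer hK hE _ _ _ _) (integrableOn_outer hK hE _ _ _ _)

lemma rect_add_right (hK : Measurable (Function.uncurry K)) (hE : ∀ t τ, ‖K t τ‖ ≤ E)
    {c m d : ℝ} (h1 : c ≤ m) (h2 : m ≤ d) (a b : ℝ) :
    rect K a b c d = rect K a b c m + rect K a b m d := by
  unfold rect
  rw [← integral_add (integrableOn_outer hK hE _ _ _ _) (integrableOn_outer hK hE _ _ _ _)]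
  congr 1; ext t
  rw [← Set.Ioc_union_Ioc_eq_Ioc h1 h2]
  exact setIntegral_union (Set.Ioc_disjoint_Ioc_of_le le_rfl) measurableSet_Ioc
    (integrableOn_inner hK hE _ _ _) (integrableOn_inner hK hE _ _ _)

lemma measurable_causal (hK : Measurable (Function.uncurry K)) :
    Measurable (Function.uncurry (causal K)) :=
  Measurable.ite (measurableSet_le measurable_snd measurable_fst) hK measurable_const

lemma norm_causal_le (hE : ∀ t τ, ‖K t τ‖ ≤ E) (t τ : ℝ) : ‖causal K t τ‖ ≤ E := by
  unfold causal
  split_ifs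
  · exact hE t τ
  · simpa using (norm_nonneg _).trans (hE t τ)

/-- The triangle `τ ≤ t` over `(a, b]` consists of two smaller triangles and the rectangle
`t ∈ (m, b]`, `τ ∈ (a, m]`. -/
lemma causal_split (hK : Measurable (Function.uncurry K)) (hE : ∀ t τ, ‖K t τ‖ ≤ E)
    {a m b : ℝ} (h1 : a ≤ m) (h2 : m ≤ b) :
    rect (causal K) a b a b = rect (causal K) a m a m + rect (causal K) m b m b + rect K m b a m := by
  have hc := measurable_causal hK
  have hc' := norm_causal_le hE
  rw [rect_add_left hc hc' h1 h2, rect_add_right hc hc' h1 h2 a m, rect_add_right hc hc' h1 h2 m b]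
  have z : rect (causal K) a m m b = 0 := by
    unfold rect
    refine (setIntegral_congr_fun measurableSet_Ioc fun t ht => ?_).trans
      (integral_zero _ _)
    refine (setIntegral_congr_fun measurableSet_Ioc fun τ hτ => ?_).trans (integral_zero _ _)
    exact if_neg (by linarith [ht.2, hτ.1])
  have z' : rect (causal K) m b a m = rect K m b a m := by
    unfold rect
    refine setIntegral_congr_fun measurableSet_Ioc fun t ht => ?_
    refine setIntegral_congr_fun measurableSet_Ioc fun τ hτ => ?_
    exact if_pos (by linarith [ht.1, hτ.2])
  rw [z, z']; ring

lemma rect_norm_le (hE : ∀ t τ, ‖K t τ‖ ≤ E) {a b : ℝ} (hab : a ≤ b) :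
    ‖rect K a b a b‖ ≤ E * (b - a) ^ 2 := by
  have e : (volume.restrict (Set.Ioc a b)).real Set.univ = b - a := by
    simp [Measure.real, hab]
  have h1 : ∀ t, ‖∫ τ in Set.Ioc a b, K t τ‖ ≤ E * (b - a) := fun t => by
    have := norm_integral_le_of_norm_le_const (μ := volume.restrict (Set.Ioc a b))
      (Filter.Eventually.of_forall fun τ => hE t τ)
    rwa [e] at this
  have h2 := norm_integral_le_of_norm_le_const (μ := volume.restrict (Set.Ioc a b))
      (Filter.Eventually.of_forall h1)
  rw [e] at h2
  exact h2.trans_eq (by ring)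

/-- Passing from rectangular blocks to the causal triangle by repeated bisection. Since the
block bound gains a power of the length and the products of norms are superadditive, the
contributions of the successive scales form a geometric series. -/
lemma causal_bound_aux (hK : Measurable (Function.uncurry K)) (hE : ∀ t τ, ‖K t τ‖ ≤ E)
    {W G : ℝ → ℝ → ℝ} (hW : ∀ a b, 0 ≤ W a b) (hG : ∀ a b, 0 ≤ G a b)
    (hWa : ∀ a m b, a ≤ m → m ≤ b → W a m + W m b = W a b)
    (hGa : ∀ a m b, a ≤ m → m ≤ b → G a m + G m b = G a b) {C A : ℝ} (hC : 0 ≤ C) (hA : 0 ≤ A)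
    (hCA : A * (1/2 : ℝ) ^ ((1:ℝ)/27) + C = A)
    (hB : ∀ a m b, a ≤ m → m ≤ b → b - m ≤ 1 → ‖rect K m b a m‖ ≤
      C * (b - m) ^ ((1:ℝ)/27) * (W m b ^ ((5:ℝ)/9) * G a m ^ ((1:ℝ)/2))) (n : ℕ) :
    ∀ a b, a ≤ b → b - a ≤ 1 → ‖rect (causal K) a b a b‖ ≤
      A * (b - a) ^ ((1:ℝ)/27) * (W a b ^ ((5:ℝ)/9) * G a b ^ ((1:ℝ)/2))
        + E * (b - a) ^ 2 / 2 ^ n := by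
  induction n with
  | zero =>
    intro a b hab _
    have h := rect_norm_le (norm_causal_le hE) hab
    have : 0 ≤ A * (b - a) ^ ((1:ℝ)/27) * (W a b ^ ((5:ℝ)/9) * G a b ^ ((1:ℝ)/2)) := by
      have := hW a b
      have := hG a b
      have : 0 ≤ b - a := by linarith
      positivity
    simp only [pow_zero, div_one]
    linarith
  | succ n ih =>
    intro a b hab hb1
    set m := (a + b) / 2 with hm
    have h1 : a ≤ m := by rw [hm]; linarith
    have h2 : m ≤ b := by rw [hm]; linarith
    have l1 : m - a = (b - a) * (1/2) := by rw [hm]; ring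
    have l2 : b - m = (b - a) * (1/2) := by rw [hm]; ring
    have hL : 0 ≤ b - a := by linarith
    have i1 := ih a m h1 (by linarith)
    have i2 := ih m b h2 (by linarith)
    have i3 := hB a m b h1 h2 (by linarith)
    set q : ℝ := (1/2 : ℝ) ^ ((1:ℝ)/27) with hq
    set L := (b - a) ^ ((1:ℝ)/27) with hL'
    have hq0 : 0 ≤ q := by positivity
    have hL0 : 0 ≤ L := by positivity
    have hq1 : q ≤ 1 := Real.rpow_le_one (by norm_num) (by norm_num) (by norm_num)
    rw [l1, Real.mul_rpow hL (by norm_num)] at i1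
    rw [l2, Real.mul_rpow hL (by norm_num)] at i2 i3
    have hw1 := hW a m
    have hw2 := hW m b
    have hg1 := hG a m
    have hg2 := hG m b
    have hol := holder_two hw1 hw2 hg1 hg2
    rw [hWa a m b h1 h2, hGa a m b h1 h2] at hol
    set X := W a b ^ ((5:ℝ)/9) * G a b ^ ((1:ℝ)/2) with hX
    have hX0 : 0 ≤ X := by
      have := hW a b
      have := hG a b
      positivity
    have hcross : W m b ^ ((5:ℝ)/9) * G a m ^ ((1:ℝ)/2) ≤ X := by
      have e1 := hWa a m b h1 h2
      have e2 := hGa a m b h1 h2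
      rw [hX]
      exact mul_le_mul (Real.rpow_le_rpow hw2 (by linarith) (by norm_num))
        (Real.rpow_le_rpow hg1 (by linarith) (by norm_num)) (by positivity)
        (Real.rpow_nonneg (hW a b) _)
    have hcr0 : 0 ≤ W m b ^ ((5:ℝ)/9) * G a m ^ ((1:ℝ)/2) := by positivity
    rw [causal_split hK hE h1 h2]
    have tri := norm_add₃_le (a := rect (causal K) a m a m) (b := rect (causal K) m b m b)
      (c := rect K m b a m)
    have s1 : A * (L * q) * (W a m ^ ((5:ℝ)/9) * G a m ^ ((1:ℝ)/2)) +
        A * (L * q) * (W m b ^ ((5:ℝ)/9) * G m b ^ ((1:ℝ)/2)) ≤ A * (L * q) * X := by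
      rw [← mul_add]; exact mul_le_mul_of_nonneg_left hol (by positivity)
    have s2 : C * (L * q) * (W m b ^ ((5:ℝ)/9) * G a m ^ ((1:ℝ)/2)) ≤ C * L * X := by
      have : C * (L * q) ≤ C * L := by
        rw [← mul_assoc]; exact mul_le_of_le_one_right (by positivity) hq1
      exact mul_le_mul this hcross hcr0 (by positivity)
    have s3 : E * ((b - a) * (1/2)) ^ 2 / 2 ^ n + E * ((b - a) * (1/2)) ^ 2 / 2 ^ n
        = E * (b - a) ^ 2 / 2 ^ (n + 1) := by
      rw [pow_succ]; field_simp; ring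
    have s4 : A * (L * q) * X + C * L * X = A * L * X := by
      have : A * (L * q) * X + C * L * X = (A * q + C) * (L * X) := by ring
      rw [this, hCA]; ring
    linarith

/-- The limit `n → ∞` of `causal_bound_aux`, with the power of the length (at most `1`) dropped. -/
lemma causal_bound (hK : Measurable (Function.uncurry K)) (hE : ∀ t τ, ‖K t τ‖ ≤ E)
    {W G : ℝ → ℝ → ℝ} (hW : ∀ a b, 0 ≤ W a b) (hG : ∀ a b, 0 ≤ G a b)
    (hWa : ∀ a m b, a ≤ m → m ≤ b → W a m + W m b = W a b)
    (hGa : ∀ a m b, a ≤ m → m ≤ b → G a m + G m b = G a b) {C A : ℝ} (hC : 0 ≤ C) (hA : 0 ≤ A)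
    (hCA : A * (1/2 : ℝ) ^ ((1:ℝ)/27) + C = A)
    (hB : ∀ a m b, a ≤ m → m ≤ b → b - m ≤ 1 → ‖rect K m b a m‖ ≤
      C * (b - m) ^ ((1:ℝ)/27) * (W m b ^ ((5:ℝ)/9) * G a m ^ ((1:ℝ)/2)))
    {a b : ℝ} (hab : a ≤ b) (hb1 : b - a ≤ 1) : ‖rect (causal K) a b a b‖ ≤
      A * (W a b ^ ((5:ℝ)/9) * G a b ^ ((1:ℝ)/2)) := by
  have hL : 0 ≤ b - a := by linarith
  have h0 : 0 ≤ W a b ^ ((5:ℝ)/9) * G a b ^ ((1:ℝ)/2) := by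
    have := hW a b
    have := hG a b
    positivity
  have h1 : ‖rect (causal K) a b a b‖ ≤
      A * (b - a) ^ ((1:ℝ)/27) * (W a b ^ ((5:ℝ)/9) * G a b ^ ((1:ℝ)/2)) := by
    have lim : Filter.Tendsto (fun n : ℕ => A * (b - a) ^ ((1:ℝ)/27) *
        (W a b ^ ((5:ℝ)/9) * G a b ^ ((1:ℝ)/2)) + E * (b - a) ^ 2 * (1/2) ^ n) Filter.atTop
        (nhds (A * (b - a) ^ ((1:ℝ)/27) * (W a b ^ ((5:ℝ)/9) * G a b ^ ((1:ℝ)/2)) +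
          E * (b - a) ^ 2 * 0)) :=
      ((tendsto_pow_atTop_nhds_zero_of_lt_one (by norm_num) (by norm_num)).const_mul _).const_add _
    rw [mul_zero, add_zero] at lim
    refine ge_of_tendsto' lim fun n => ?_
    have := causal_bound_aux hK hE hW hG hWa hGa hC hA hCA hB n a b hab hb1
    have e : E * (b - a) ^ 2 / 2 ^ n = E * (b - a) ^ 2 * (1/2) ^ n := by
      rw [one_div, inv_pow, div_eq_mul_inv]
    rwa [e] at this
  refine h1.trans (mul_le_mul_of_nonneg_right ?_ h0)
  exact mul_le_of_le_one_right hA (Real.rpow_le_one hL hb1 (by norm_num))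

end

/-! ### The causal bound along measurable selections -/

section
variable {w : ℝ → ℂ} {y : ℝ → ℝ × ℝ} {γ : ℝ → ℝ × ℝ → ℂ}

/-- The constant of the block estimate. -/
def blockC : ℝ := (2 * Real.pi ^ 2 / 3 * (92 * √Real.pi * 24)) ^ ((1:ℝ)/2)

/-- The constant of the causal estimate: the sum of the geometric series over dyadic scales. -/
def causalC : ℝ := blockC / (1 - (1/2 : ℝ) ^ ((1:ℝ)/27))

lemma half_rpow_lt_one : (1/2 : ℝ) ^ ((1:ℝ)/27) < 1 :=
  Real.rpow_lt_one (by norm_num) (by norm_num) (by norm_num)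

lemma blockC_nonneg : 0 ≤ blockC := by unfold blockC; positivity

lemma blockC_pos : 0 < blockC := by unfold blockC; positivity

lemma causalC_pos : 0 < causalC :=
  div_pos blockC_pos (by linarith [half_rpow_lt_one])

lemma causalC_eq : causalC * (1/2 : ℝ) ^ ((1:ℝ)/27) + blockC = causalC := by
  have : (1 - (1/2 : ℝ) ^ ((1:ℝ)/27)) ≠ 0 := by linarith [half_rpow_lt_one]
  unfold causalC
  field_simp
  ring

/-- The `9/5`-th power of the `L^{9/5}` norm of `w` over `(a, b]`. -/
def Wn (w : ℝ → ℂ) (a b : ℝ) : ℝ≥0∞ := ∫⁻ t in Set.Ioc a b, ‖w t‖ₑ ^ ((9:ℝ)/5)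

lemma Wn_ne_top {Ω : ℝ} (hΩ : ∀ t, ‖w t‖ ≤ Ω) (a b : ℝ) : Wn w a b ≠ ∞ := by
  have h : Wn w a b ≤ ENNReal.ofReal Ω ^ ((9:ℝ)/5) * volume (Set.Ioc a b) := by
    unfold Wn
    rw [← setLIntegral_const]
    refine lintegral_mono fun t => ENNReal.rpow_le_rpow ?_ (by norm_num)
    rw [← ofReal_norm]
    exact ENNReal.ofReal_le_ofReal (hΩ t)
  refine ne_top_of_le_ne_top (ENNReal.mul_ne_top ?_ (by simp)) h
  exact ENNReal.rpow_ne_top_of_nonneg (by norm_num) ENNReal.ofReal_ne_top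

lemma lintegral_Ioc_add (f : ℝ → ℝ≥0∞) {a m b : ℝ} (h1 : a ≤ m) (h2 : m ≤ b) :
    (∫⁻ t in Set.Ioc a m, f t) + ∫⁻ t in Set.Ioc m b, f t = ∫⁻ t in Set.Ioc a b, f t := by
  rw [← Set.Ioc_union_Ioc_eq_Ioc h1 h2]
  exact (lintegral_union measurableSet_Ioc (Set.Ioc_disjoint_Ioc_of_le le_rfl)).symm

/-- `block` in the real-valued form that the bisection argument takes as input. -/
lemma block_real {a m b r Ω M : ℝ} (hmb : m ≤ b) (hb1 : b - m ≤ 1) (hr : 0 ≤ r)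
    (hr2 : r ≤ 2/9) (hw : Measurable w) (hy : Measurable y)
    (hΩ : ∀ t, ‖w t‖ ≤ Ω) (hγ : Measurable (Function.uncurry γ))
    (hM : ∀ τ ξ, ‖γ τ ξ‖ ≤ M * env ξ) (hG : ∀ a b, Gn r γ a b ≠ ∞) :
    ‖rect (fun t τ => w t * kk y γ t τ) m b a m‖ ≤ blockC * (b - m) ^ ((1:ℝ)/27) *
      ((Wn w m b).toReal ^ ((5:ℝ)/9) * (Gn r γ a m).toReal ^ ((1:ℝ)/2)) := by
  have hb := block (a := a) hmb hb1 hr hr2 hw hy hΩ hγ hM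
  change ‖rect (fun t τ => w t * kk y γ t τ) m b a m‖ₑ ≤ _ at hb
  set W := (Wn w m b).toReal with hW
  set G := (Gn r γ a m).toReal with hG'
  have hW0 : 0 ≤ W := ENNReal.toReal_nonneg
  have hG0 : 0 ≤ G := ENNReal.toReal_nonneg
  have hL : 0 ≤ b - m := by linarith
  rw [← ENNReal.ofReal_toReal (hG a m), show (∫⁻ t in Set.Ioc m b, ‖w t‖ₑ ^ ((9:ℝ)/5)) = Wn w m b
    from rfl, ← ENNReal.ofReal_toReal (Wn_ne_top hΩ m b), ← hW, ← hG',
    ENNReal.ofReal_rpow_of_nonneg hW0 (by norm_num), ← ENNReal.ofReal_mul (by positivity),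
    ← ENNReal.ofReal_mul (by positivity), ENNReal.ofReal_rpow_of_nonneg hG0 (by norm_num),
    ENNReal.ofReal_rpow_of_nonneg (by positivity) (by norm_num), ← ENNReal.ofReal_mul (by positivity),
    ← ofReal_norm] at hb
  refine ((ENNReal.ofReal_le_ofReal_iff (by positivity)).1 hb).trans_eq ?_
  have e : 2 * Real.pi ^ 2 / 3 * (92 * √Real.pi * (24 * (b - m) ^ ((2:ℝ)/27)) * W ^ ((10:ℝ)/9))
      = (2 * Real.pi ^ 2 / 3 * (92 * √Real.pi * 24)) * ((b - m) ^ ((2:ℝ)/27) * W ^ ((10:ℝ)/9)) := by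
    ring
  rw [e, Real.mul_rpow (x := 2 * Real.pi ^ 2 / 3 * (92 * √Real.pi * 24)) (by positivity)
    (by positivity), Real.mul_rpow (x := (b - m) ^ ((2:ℝ)/27)) (by positivity) (by positivity),
    ← Real.rpow_mul hL, ← Real.rpow_mul hW0, blockC]
  norm_num
  ring

/-- The dual form of the estimate: the causal double integral is bounded by the `L^{9/5}` norm of `w`
and the weighted norm of the source. -/
lemma causal_dual {T r Ω M : ℝ} (hT : 0 ≤ T) (hT1 : T ≤ 1) (hr : 0 ≤ r)
    (hr2 : r ≤ 2/9) (hw : Measurable w) (hy : Measurable y)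
    (hΩ : ∀ t, ‖w t‖ ≤ Ω) (hγ : Measurable (Function.uncurry γ))
    (hM : ∀ τ ξ, ‖γ τ ξ‖ ≤ M * env ξ) (hG : ∀ a b, Gn r γ a b ≠ ∞) :
    ‖rect (causal fun t τ => w t * kk y γ t τ) 0 T 0 T‖ ≤ causalC *
      ((Wn w 0 T).toReal ^ ((5:ℝ)/9) * (Gn r γ 0 T).toReal ^ ((1:ℝ)/2)) := by
  have hΩ0 : 0 ≤ Ω := (norm_nonneg _).trans (hΩ 0)
  have hk := measurable_kk hy hγ
  have hK : Measurable (Function.uncurry fun t τ => w t * kk y γ t τ) := by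
    have h2 : Measurable fun p : ℝ × ℝ => kk y γ p.1 p.2 := hk
    exact (hw.comp measurable_fst).mul h2
  refine causal_bound (W := fun a b => (Wn w a b).toReal) (G := fun a b => (Gn r γ a b).toReal)
    (E := Ω * ∫ ξ : ℝ × ℝ, |ξ.1| * (M * env ξ)) hK (fun t τ => ?_)
    (fun _ _ => ENNReal.toReal_nonneg) (fun _ _ => ENNReal.toReal_nonneg) (fun a m b h1 h2 => ?_)
    (fun a m b h1 h2 => ?_) blockC_nonneg causalC_pos.le causalC_eq
    (fun a m b _ h2 h3 => block_real h2 h3 hr hr2 hw hy hΩ hγ hM hG) hT (by linarith)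
  · rw [norm_mul]
    exact mul_le_mul (hΩ t) (norm_kk_le hM t τ) (norm_nonneg _) hΩ0
  · rw [← ENNReal.toReal_add (Wn_ne_top hΩ _ _) (Wn_ne_top hΩ _ _)]
    exact congrArg _ (lintegral_Ioc_add _ h1 h2)
  · rw [← ENNReal.toReal_add (hG _ _) (hG _ _)]
    exact congrArg _ (lintegral_Ioc_add _ h1 h2)

/-- The `x₁`-derivative of the Duhamel term at time `t` and position `x`, up to the factor `2πi`. -/
def Phi (γ : ℝ → ℝ × ℝ → ℂ) (T t : ℝ) (x : ℝ × ℝ) : ℂ :=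
  ∫ τ in Set.Ioc 0 T, causal (kk (fun _ => x) γ) t τ

lemma Phi_sel (T t : ℝ) :
    Phi γ T t (y t) = ∫ τ in Set.Ioc 0 T, causal (kk y γ) t τ := rfl

lemma measurable_Phi (T : ℝ) (hy : Measurable y) (hγ : Measurable (Function.uncurry γ)) :
    Measurable fun t => Phi γ T t (y t) := by
  simp only [Phi_sel]
  exact ((measurable_causal (measurable_kk hy hγ)).stronglyMeasurable.integral_prod_right
    (ν := volume.restrict (Set.Ioc 0 T))).measurable

lemma norm_Phi_le {M : ℝ} (hM : ∀ τ ξ, ‖γ τ ξ‖ ≤ M * env ξ) (T t : ℝ) (x : ℝ × ℝ) :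
    ‖Phi γ T t x‖ ≤ (∫ ξ : ℝ × ℝ, |ξ.1| * (M * env ξ)) *
      (volume.restrict (Set.Ioc 0 T)).real Set.univ :=
  norm_integral_le_of_norm_le_const
    (Filter.Eventually.of_forall fun τ => norm_causal_le (norm_kk_le hM) t τ)

/-- The `L^{9/4}` bound along a measurable choice of points, by testing against the extremal
`w = conj F · |F|^{1/4}`. -/
lemma sel_bound {T r M : ℝ} (hT : 0 ≤ T) (hT1 : T ≤ 1) (hr : 0 ≤ r)
    (hr2 : r ≤ 2/9) (hy : Measurable y) (hγ : Measurable (Function.uncurry γ))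
    (hM : ∀ τ ξ, ‖γ τ ξ‖ ≤ M * env ξ) (hG : ∀ a b, Gn r γ a b ≠ ∞) :
    (∫⁻ t in Set.Ioc 0 T, ‖Phi γ T t (y t)‖ₑ ^ ((9:ℝ)/4)) ≤
      (ENNReal.ofReal causalC * Gn r γ 0 T ^ ((1:ℝ)/2)) ^ ((9:ℝ)/4) := by
  set F : ℝ → ℂ := fun t => Phi γ T t (y t) with hF
  have hFm : Measurable F := measurable_Phi T hy hγ
  set B := (∫ ξ : ℝ × ℝ, |ξ.1| * (M * env ξ)) * (volume.restrict (Set.Ioc 0 T)).real Set.univ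
  have hFB : ∀ t, ‖F t‖ ≤ B := fun t => norm_Phi_le hM T t (y t)
  have hB0 : 0 ≤ B := (norm_nonneg _).trans (hFB 0)
  set w : ℝ → ℂ := fun t => (starRingEnd ℂ) (F t) * ((‖F t‖ ^ ((1:ℝ)/4) : ℝ) : ℂ) with hw
  have hwn : ∀ t, ‖w t‖ = ‖F t‖ ^ ((5:ℝ)/4) := fun t => by
    simp only [hw]
    rw [norm_mul, Complex.norm_real, RCLike.norm_conj, Real.norm_of_nonneg (by positivity),
      ← Real.rpow_one_add' (norm_nonneg _) (by norm_num)]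
    norm_num
  have hwm : Measurable w :=
    (Complex.continuous_conj.measurable.comp hFm).mul
      (Complex.measurable_ofReal.comp (hFm.norm.pow_const _))
  have hΩ : ∀ t, ‖w t‖ ≤ B ^ ((5:ℝ)/4) := fun t => by
    rw [hwn]
    exact Real.rpow_le_rpow (norm_nonneg _) (hFB t) (by norm_num)
  have hmain := causal_dual hT hT1 hr hr2 hwm hy hΩ hγ hM hG
  have hwF : ∀ t, w t * F t = ((‖F t‖ ^ ((9:ℝ)/4) : ℝ) : ℂ) := fun t => by
    simp only [hw]
    rw [mul_right_comm, mul_comm ((starRingEnd ℂ) (F t)), Complex.mul_conj, ← Complex.ofReal_mul,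
      Complex.normSq_eq_norm_sq]
    congr 1
    rw [← Real.rpow_natCast, ← Real.rpow_add_of_nonneg (norm_nonneg _) (by norm_num) (by norm_num)]
    norm_num
  have hrect : rect (causal fun t τ => w t * kk y γ t τ) 0 T 0 T
      = ((∫ t in Set.Ioc 0 T, ‖F t‖ ^ ((9:ℝ)/4) : ℝ) : ℂ) := by
    unfold rect
    rw [← integral_complex_ofReal]
    congr 1; ext t
    rw [← hwF]
    simp only [hF, Phi_sel]
    rw [← integral_const_mul]
    congr 1; ext τ
    simp only [causal]
    split_ifs <;> simp
  set S := ∫⁻ t in Set.Ioc 0 T, ‖F t‖ₑ ^ ((9:ℝ)/4) with hS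
  have hSW : Wn w 0 T = S := by
    unfold Wn
    refine lintegral_congr fun t => ?_
    rw [← ofReal_norm, hwn, ← ENNReal.ofReal_rpow_of_nonneg (norm_nonneg _) (by norm_num),
      ← ENNReal.rpow_mul, ofReal_norm]
    norm_num
  have hST : S ≠ ∞ := hSW ▸ Wn_ne_top hΩ 0 T
  have hSi : ∫ t in Set.Ioc 0 T, ‖F t‖ ^ ((9:ℝ)/4) = S.toReal := by
    rw [integral_eq_lintegral_of_nonneg_ae (Filter.Eventually.of_forall fun t => by positivity)
      (hFm.norm.pow_const _).aestronglyMeasurable]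
    congr 1
    refine lintegral_congr fun t => ?_
    rw [← ENNReal.ofReal_rpow_of_nonneg (norm_nonneg _) (by norm_num), ofReal_norm]
  rw [hrect, hSi, hSW, Complex.norm_real, Real.norm_of_nonneg ENNReal.toReal_nonneg] at hmain
  set G := Gn r γ 0 T with hGd
  rw [← ENNReal.ofReal_toReal hST, ← ENNReal.ofReal_toReal (show G ≠ ∞ from hG 0 T)]
  set s := S.toReal with hs
  set g := G.toReal with hg
  have hs0 : 0 ≤ s := ENNReal.toReal_nonneg
  have hg0 : 0 ≤ g := ENNReal.toReal_nonneg
  have hc := causalC_pos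
  rw [ENNReal.ofReal_rpow_of_nonneg hg0 (by norm_num), ← ENNReal.ofReal_mul hc.le,
    ENNReal.ofReal_rpow_of_nonneg (by positivity) (by norm_num)]
  refine ENNReal.ofReal_le_ofReal ?_
  rcases hs0.eq_or_lt with h0 | hpos
  · rw [← h0]; positivity
  have hp : 0 < s ^ ((5:ℝ)/9) := by positivity
  have e : s = s ^ ((4:ℝ)/9) * s ^ ((5:ℝ)/9) := by
    rw [← Real.rpow_add hpos]; norm_num
  have h49 : s ^ ((4:ℝ)/9) ≤ causalC * g ^ ((1:ℝ)/2) := by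
    refine le_of_mul_le_mul_right ?_ hp
    rw [← e]
    linarith
  calc s = (s ^ ((4:ℝ)/9)) ^ ((9:ℝ)/4) := by rw [← Real.rpow_mul hs0]; norm_num
    _ ≤ _ := Real.rpow_le_rpow (by positivity) h49 (by norm_num)

/-- A measurable choice, for each `t`, of a point among `d 0, …, d N` where `|Phi|` is largest. -/
lemma exists_sel {T : ℝ} (hγ : Measurable (Function.uncurry γ)) (d : ℕ → ℝ × ℝ) (N : ℕ) :
    ∃ y : ℝ → ℝ × ℝ, Measurable y ∧ ∀ t, ∀ n ≤ N, ‖Phi γ T t (d n)‖ₑ ≤ ‖Phi γ T t (y t)‖ₑ := by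
  induction N with
  | zero => exact ⟨fun _ => d 0, measurable_const, fun t n hn => by rw [Nat.le_zero.1 hn]⟩
  | succ N ih =>
    obtain ⟨y, hy, h⟩ := ih
    refine ⟨fun t => if ‖Phi γ T t (y t)‖ₑ ≤ ‖Phi γ T t (d (N+1))‖ₑ then d (N+1) else y t,
      Measurable.ite (measurableSet_le (measurable_Phi T hy hγ).enorm
        (measurable_Phi T measurable_const hγ).enorm) measurable_const hy, fun t n hn => ?_⟩
    dsimp only
    split_ifs with hc
    · rcases Nat.le_succ_iff.1 hn with h1 | h1
      · exact (h t n h1).trans hc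
      · rw [h1]
    · rcases Nat.le_succ_iff.1 hn with h1 | h1
      · exact h t n h1
      · rw [h1]; exact (not_le.1 hc).le

/-- The supremum over a sequence of points is the monotone limit of maxima over finitely many points,
and these are covered by `sel_bound` along a measurable selection. -/
lemma sup_bound {T r M : ℝ} (hT : 0 ≤ T) (hT1 : T ≤ 1) (hr : 0 ≤ r)
    (hr2 : r ≤ 2/9) (hγ : Measurable (Function.uncurry γ))
    (hM : ∀ τ ξ, ‖γ τ ξ‖ ≤ M * env ξ) (hG : ∀ a b, Gn r γ a b ≠ ∞) (d : ℕ → ℝ × ℝ) :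
    (∫⁻ t in Set.Ioc 0 T, (⨆ n, ‖Phi γ T t (d n)‖ₑ) ^ ((9:ℝ)/4)) ≤
      (ENNReal.ofReal causalC * Gn r γ 0 T ^ ((1:ℝ)/2)) ^ ((9:ℝ)/4) := by
  set f : ℕ → ℝ → ℝ≥0∞ := fun N t => (⨆ n ≤ N, ‖Phi γ T t (d n)‖ₑ) ^ ((9:ℝ)/4) with hf
  have hmono : Monotone f := fun a b hab t =>
    ENNReal.rpow_le_rpow (biSup_mono fun i hi => hi.trans hab) (by norm_num)
  have hfm : ∀ N, Measurable (f N) := fun N => by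
    refine Measurable.pow_const ?_ _
    exact Measurable.iSup fun n => Measurable.iSup fun _ =>
      (measurable_Phi T (y := fun _ => d n) measurable_const hγ).enorm
  have hsup : ∀ t, (⨆ n, ‖Phi γ T t (d n)‖ₑ) ^ ((9:ℝ)/4) = ⨆ N, f N t := by
    intro t
    have h1 := (ENNReal.orderIsoRpow ((9:ℝ)/4) (by norm_num)).map_iSup
      (fun N => ⨆ n ≤ N, ‖Phi γ T t (d n)‖ₑ)
    have h2 : (⨆ n, ‖Phi γ T t (d n)‖ₑ) = ⨆ N, ⨆ n ≤ N, ‖Phi γ T t (d n)‖ₑ :=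
      le_antisymm (iSup_le fun n => le_iSup_of_le n (le_iSup₂_of_le n le_rfl le_rfl))
        (iSup_le fun N => iSup₂_le fun n _ => le_iSup (fun n => ‖Phi γ T t (d n)‖ₑ) n)
    rw [h2]
    exact h1
  simp only [hsup]
  rw [lintegral_iSup hfm hmono]
  refine iSup_le fun N => ?_
  obtain ⟨y, hy, h⟩ := exists_sel (T := T) hγ d N
  refine le_trans (lintegral_mono fun t => ?_) (sel_bound hT hT1 hr hr2 hy hγ hM hG)
  exact ENNReal.rpow_le_rpow (iSup₂_le fun n hn => h t n hn) (by norm_num)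

end

/-! ### Schwartz sources -/

section
open FourierTransform SchwartzMap

lemma FTinv_eq_fourierInv (f : ℝ × ℝ → ℂ) (x : WithLp 2 (ℝ × ℝ)) :
    FTinv f (WithLp.ofLp x) = 𝓕⁻ (fun ξ : WithLp 2 (ℝ × ℝ) => f (WithLp.ofLp ξ)) x := by
  unfold FTinv
  rw [Real.fourierInv_eq', ← (WithLp.volume_preserving_ofLp ℝ ℝ).integral_comp
    (MeasurableEquiv.toLp 2 (ℝ × ℝ)).symm.measurableEmbedding]
  congr 1

/-- The Fourier transform of a Schwartz function on `ℝ × ℝ`, as a Schwartz function on the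
Euclidean plane. -/
def hatS (f : 𝓢(ℝ × ℝ, ℂ)) : 𝓢(WithLp 2 (ℝ × ℝ), ℂ) :=
  𝓕 (compCLMOfContinuousLinearEquiv ℂ (WithLp.prodContinuousLinearEquiv 2 ℝ ℝ ℝ) f)

lemma continuous_hatS : Continuous hatS :=
  (ContinuousFourier.continuous_fourier).comp (ContinuousLinearMap.continuous _)

lemma hatS_apply (f : 𝓢(ℝ × ℝ, ℂ)) (ξ : ℝ × ℝ) : FT f ξ = hatS f (WithLp.toLp 2 ξ) :=
  FT_eq_fourier f (WithLp.toLp 2 ξ)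

lemma FTinv_FT (f : 𝓢(ℝ × ℝ, ℂ)) : FTinv (FT f) = f := by
  ext x
  have h1 := FTinv_eq_fourierInv (FT f) (WithLp.toLp 2 x)
  have h2 : (fun ξ : WithLp 2 (ℝ × ℝ) => FT f (WithLp.ofLp ξ)) = hatS f := by
    ext ξ; exact hatS_apply f _
  rw [h2, ← fourierInv_coe, hatS, FourierTransform.fourierInv_fourier_eq] at h1
  exact h1

/-- The envelope decays no faster than a power of the norm, so Schwartz functions are bounded by it. -/
lemma inv_env_le (ξ : ℝ × ℝ) : (env ξ)⁻¹ ≤ 8 * (1 + ‖WithLp.toLp 2 ξ‖ ^ 8) := by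
  have hn : ‖WithLp.toLp 2 ξ‖ ^ 2 = ξ.1 ^ 2 + ξ.2 ^ 2 := by
    rw [WithLp.prod_norm_sq_eq_of_L2]; simp
  set n := ‖WithLp.toLp 2 ξ‖
  have h1 : (1 + ξ.1 ^ 2) ^ 2 * (1 + ξ.2 ^ 2) ^ 2 ≤ (1 + n ^ 2) ^ 4 := by
    rw [hn, show 4 = 2 * 2 from rfl, pow_mul, ← mul_pow]
    have := sq_nonneg ξ.1
    have := sq_nonneg ξ.2
    refine pow_le_pow_left₀ (by positivity) ?_ 2
    nlinarith
  have h2 := add_pow_le zero_le_one (sq_nonneg n) 4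
  unfold env
  rw [mul_inv, inv_inv, inv_inv]
  refine h1.trans (h2.trans_eq ?_)
  ring

/-- The Fourier transforms of a compact family of Schwartz functions share a multiple of `env` as
a common envelope. -/
lemma exists_env_bound {T : ℝ} {g : ℝ → 𝓢(ℝ × ℝ, ℂ)} (hg : ContinuousOn g (Set.Icc 0 T)) :
    ∃ M : ℝ, 0 ≤ M ∧ ∀ τ ∈ Set.Icc 0 T, ∀ ξ, ‖FT (g τ) ξ‖ ≤ M * env ξ := by
  have hc : ContinuousOn (fun τ => hatS (g τ)) (Set.Icc 0 T) := continuous_hatS.comp_continuousOn hg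
  have hp := fun k : ℕ => isCompact_Icc.exists_bound_of_continuousOn
    (((schwartz_withSeminorms ℝ (WithLp 2 (ℝ × ℝ)) ℂ).continuous_seminorm (k, 0)).comp_continuousOn hc)
  obtain ⟨M₀, h0⟩ := hp 0
  obtain ⟨M₈, h8⟩ := hp 8
  refine ⟨8 * (max M₀ 0 + max M₈ 0), by positivity, fun τ hτ ξ => ?_⟩
  have b0 : ‖FT (g τ) ξ‖ ≤ max M₀ 0 := by
    rw [hatS_apply]
    exact (norm_le_seminorm ℝ _ _).trans (((le_abs_self _).trans (h0 τ hτ)).trans (le_max_left _ _))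
  have b8 : ‖WithLp.toLp 2 ξ‖ ^ 8 * ‖FT (g τ) ξ‖ ≤ max M₈ 0 := by
    rw [hatS_apply]
    exact (norm_pow_mul_le_seminorm ℝ _ _ _).trans
      (((le_abs_self _).trans (h8 τ hτ)).trans (le_max_left _ _))
  have he : 0 < env ξ := by unfold env; positivity
  rw [← div_le_iff₀ he, div_eq_mul_inv]
  calc _ ≤ ‖FT (g τ) ξ‖ * (8 * (1 + ‖WithLp.toLp 2 ξ‖ ^ 8)) :=
        mul_le_mul_of_nonneg_left (inv_env_le ξ) (norm_nonneg _)
    _ = 8 * (‖FT (g τ) ξ‖ + ‖WithLp.toLp 2 ξ‖ ^ 8 * ‖FT (g τ) ξ‖) := by ring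
    _ ≤ _ := by linarith

/-- The Fourier transform of the source, cut off to the time interval `(0, T]`. -/
def src (T : ℝ) (g : ℝ → 𝓢(ℝ × ℝ, ℂ)) (τ : ℝ) (ξ : ℝ × ℝ) : ℂ :=
  if τ ∈ Set.Ioc 0 T then FT (g τ) ξ else 0

lemma norm_src_le {T M : ℝ} {g : ℝ → 𝓢(ℝ × ℝ, ℂ)} (hM : 0 ≤ M)
    (h : ∀ τ ∈ Set.Icc 0 T, ∀ ξ, ‖FT (g τ) ξ‖ ≤ M * env ξ) (τ : ℝ) (ξ : ℝ × ℝ) :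
    ‖src T g τ ξ‖ ≤ M * env ξ := by
  unfold src
  split_ifs with hτ
  · exact h τ (Set.Ioc_subset_Icc_self hτ) ξ
  · simpa using mul_nonneg hM (env_nonneg ξ)

lemma measurable_src {T : ℝ} {g : ℝ → 𝓢(ℝ × ℝ, ℂ)} (hg : ContinuousOn g (Set.Icc 0 T)) :
    Measurable (Function.uncurry (src T g)) := by
  classical
  have hs : MeasurableSet ((Set.Ioc 0 T) ×ˢ (Set.univ : Set (ℝ × ℝ))) :=
    measurableSet_Ioc.prod MeasurableSet.univ
  have hc : ContinuousOn (fun p : ℝ × ℝ × ℝ => FT (g p.1) p.2) ((Set.Ioc 0 T) ×ˢ Set.univ) := by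
    have h1 : ContinuousOn (fun τ => toBoundedContinuousFunctionCLM ℝ _ ℂ (hatS (g τ))) (Set.Ioc 0 T) :=
      ((ContinuousLinearMap.continuous _).comp continuous_hatS).comp_continuousOn
        (hg.mono Set.Ioc_subset_Icc_self)
    have h2 : ContinuousOn (fun p : ℝ × ℝ × ℝ =>
        (toBoundedContinuousFunctionCLM ℝ _ ℂ (hatS (g p.1)), WithLp.toLp 2 p.2))
        ((Set.Ioc 0 T) ×ˢ Set.univ) :=
      (h1.comp continuousOn_fst fun p hp => hp.1).prodMk
        ((WithLp.prod_continuous_toLp 2 ℝ ℝ).comp continuous_snd).continuousOn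
    have h3 := (ContinuousEval.continuous_eval (F := BoundedContinuousFunction (WithLp 2 (ℝ × ℝ)) ℂ)).comp_continuousOn h2
    refine h3.congr fun p _ => ?_
    exact hatS_apply (g p.1) p.2
  have := hc.measurable_piecewise (g := fun _ => (0:ℂ)) continuousOn_const hs
  convert this using 1
  ext p
  simp [Function.uncurry, src, Set.piecewise]

lemma Gf_src_of_mem {T r τ : ℝ} {g : ℝ → 𝓢(ℝ × ℝ, ℂ)} (hτ : τ ∈ Set.Ioc 0 T) :
    Gf r (src T g) τ = Dx1 (-r) (g τ) := by
  unfold Gf Dx1 src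
  simp only [if_pos hτ]

lemma Gf_src_of_notMem {T r τ : ℝ} {g : ℝ → 𝓢(ℝ × ℝ, ℂ)} (hτ : τ ∉ Set.Ioc 0 T) :
    Gf r (src T g) τ = 0 := by
  unfold Gf src
  simp only [if_neg hτ]
  ext x
  simp [FTinv]

lemma Dx1_zero (f : 𝓢(ℝ × ℝ, ℂ)) : Dx1 (-0) f = f := by
  unfold Dx1
  simp only [neg_zero, Real.rpow_zero, Complex.ofReal_one, one_mul]
  exact FTinv_FT f

lemma Gn_src {T r : ℝ} {g : ℝ → 𝓢(ℝ × ℝ, ℂ)} :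
    Gn r (src T g) 0 T = ∫⁻ t in Set.Icc (0:ℝ) T, ∫⁻ x : ℝ × ℝ,
      ENNReal.ofReal (1 + x.1 ^ 2) * (‖Dx1 (-r) (⇑(g t)) x‖₊ : ℝ≥0∞) ^ (2:ℝ) := by
  rw [← restrict_Ioc_eq_restrict_Icc]
  unfold Gn
  refine setLIntegral_congr_fun measurableSet_Ioc fun τ hτ => ?_
  simp only [Gf_src_of_mem hτ]
  rfl

lemma Gn_src_le {T r : ℝ} {g : ℝ → 𝓢(ℝ × ℝ, ℂ)} (a b : ℝ) :
    Gn r (src T g) a b ≤ Gn r (src T g) 0 T := by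
  unfold Gn
  rw [← lintegral_indicator measurableSet_Ioc (s := Set.Ioc 0 T)]
  refine (setLIntegral_le_lintegral _ _).trans (lintegral_mono fun τ => ?_)
  by_cases hτ : τ ∈ Set.Ioc 0 T
  · rw [Set.indicator_of_mem hτ]
  · rw [Set.indicator_of_notMem hτ]
    simp [Gf_src_of_notMem hτ]

end

/-! ### The Duhamel term -/

section
variable {γ : ℝ → ℝ × ℝ → ℂ}

lemma continuous_kk_const {M : ℝ} (hγ : Measurable (Function.uncurry γ))
    (hM : ∀ τ ξ, ‖γ τ ξ‖ ≤ M * env ξ) (t τ : ℝ) :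
    Continuous fun x : ℝ × ℝ => kk (fun _ => x) γ t τ := by
  have hγτ : Measurable (γ τ) := hγ.comp measurable_prodMk_left
  refine continuous_of_dominated (fun x => ?_) (fun x => Filter.Eventually.of_forall fun ξ => ?_)
    (integrable_dom M) (Filter.Eventually.of_forall fun ξ => ?_)
  · exact Measurable.aestronglyMeasurable (by fun_prop)
  · rw [norm_mul, norm_mul, norm_ex, mul_one, Complex.norm_real, Real.norm_eq_abs]
    exact mul_le_mul_of_nonneg_left (hM τ ξ) (abs_nonneg _)
  · fun_prop

lemma continuous_Phi {M : ℝ} (hγ : Measurable (Function.uncurry γ))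
    (hM : ∀ τ ξ, ‖γ τ ξ‖ ≤ M * env ξ) (T t : ℝ) : Continuous (Phi γ T t) := by
  refine continuous_of_dominated (bound := fun _ => ∫ ξ : ℝ × ℝ, |ξ.1| * (M * env ξ)) (fun x => ?_)
    (fun x => Filter.Eventually.of_forall fun τ => norm_causal_le (norm_kk_le hM) t τ)
    (integrable_const _) (Filter.Eventually.of_forall fun τ => ?_)
  · exact ((measurable_causal (measurable_kk (y := fun _ => x) measurable_const hγ)).comp
      measurable_prodMk_left).aestronglyMeasurable
  · unfold causal
    split_ifs
    · exact continuous_kk_const hγ hM t τ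
    · exact continuous_const

lemma Phi_eq_of_le {T t : ℝ} (htT : t ≤ T) (x : ℝ × ℝ) :
    Phi γ T t x = ∫ τ in Set.Ioc 0 t, kk (fun _ => x) γ t τ := by
  unfold Phi
  have h1 : ∀ τ, causal (kk (fun _ => x) γ) t τ
      = (Set.Iic t).indicator (fun τ => kk (fun _ => x) γ t τ) τ := fun τ => by
    simp [causal, Set.indicator]
  simp only [h1]
  rw [setIntegral_indicator measurableSet_Iic]
  congr 2
  ext τ
  simp only [Set.mem_inter_iff, Set.mem_Ioc, Set.mem_Iic]
  constructor
  · rintro ⟨⟨a, _⟩, b⟩; exact ⟨a, b⟩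
  · rintro ⟨a, b⟩; exact ⟨⟨a, b.trans htT⟩, b⟩

/-- The Duhamel term as an integral over time and frequency. -/
lemma Duh_eq {T t M : ℝ} {g : ℝ → SchwartzMap (ℝ × ℝ) ℂ} (ht0 : 0 ≤ t) (htT : t ≤ T)
    (hγ : Measurable (Function.uncurry (src T g)))
    (hM : ∀ τ ξ, ‖src T g τ ξ‖ ≤ M * env ξ) (x : ℝ × ℝ) :
    Duh (fun τ => ⇑(g τ)) t x = ∫ q, src T g q.1 q.2 *
      ex ((t - q.1) * ph q.2 + 2 * Real.pi * (x.1 * q.2.1 + x.2 * q.2.2))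
      ∂((volume.restrict (Set.Ioc 0 t)).prod (volume : Measure (ℝ × ℝ))) := by
  have hi : Integrable (fun q : ℝ × ℝ × ℝ => src T g q.1 q.2 *
      ex ((t - q.1) * ph q.2 + 2 * Real.pi * (x.1 * q.2.1 + x.2 * q.2.2)))
      ((volume.restrict (Set.Ioc 0 t)).prod (volume : Measure (ℝ × ℝ))) := by
    have hγ' : Measurable fun q : ℝ × ℝ × ℝ => src T g q.1 q.2 := hγ
    have henv : Integrable (fun ξ : ℝ × ℝ => M * env ξ) := by
      have := (integrable_env (q := 0) (by norm_num) (by norm_num)).const_mul M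
      simpa using this
    refine (henv.comp_snd (volume.restrict (Set.Ioc 0 t))).mono'
      (Measurable.aestronglyMeasurable (by fun_prop)) (Filter.Eventually.of_forall fun q => ?_)
    rw [norm_mul, norm_ex, mul_one]
    exact hM _ _
  rw [integral_prod _ hi]
  unfold Duh
  rw [intervalIntegral.integral_of_le ht0]
  refine setIntegral_congr_fun measurableSet_Ioc fun τ hτ => ?_
  simp only [U, FTinv]
  congr 1; ext ξ
  rw [src, if_pos ⟨hτ.1, hτ.2.trans htT⟩, add_comm, ex_add]
  have e : Complex.exp (Complex.I * (((t - τ) * ξ.1 * (ξ.1 ^ 2 + ξ.2 ^ 2) : ℝ) : ℂ))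
      = ex ((t - τ) * ph ξ) := by
    unfold ex ph
    rw [mul_comm, mul_assoc]
  rw [e]
  unfold ex
  ring

/-- The `x₁` derivative of the Duhamel term is `2πi Phi` wherever it exists, by differentiation under
the integral sign. -/
lemma norm_pd1_Duh_le {T t M : ℝ} {g : ℝ → SchwartzMap (ℝ × ℝ) ℂ} (ht0 : 0 ≤ t) (htT : t ≤ T)
    (hγ : Measurable (Function.uncurry (src T g)))
    (hM : ∀ τ ξ, ‖src T g τ ξ‖ ≤ M * env ξ) (x : ℝ × ℝ) :
    ‖pd1 (Duh (fun τ => ⇑(g τ)) t) x‖ ≤ 2 * Real.pi * ‖Phi (src T g) T t x‖ := by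
  unfold pd1
  by_cases hd : DifferentiableAt ℝ (Duh (fun τ => ⇑(g τ)) t) x
  swap
  -- where the derivative does not exist, `fderiv` is zero
  · rw [fderiv_zero_of_not_differentiableAt hd]
    simp only [zero_apply, norm_zero]
    positivity
  have hγ' : Measurable fun q : ℝ × ℝ × ℝ => src T g q.1 q.2 := hγ
  set μ := (volume.restrict (Set.Ioc 0 t)).prod (volume : Measure (ℝ × ℝ)) with hμ
  set A : ℝ → ℝ × ℝ × ℝ → ℂ := fun s q => src T g q.1 q.2 *
      ex ((t - q.1) * ph q.2 + 2 * Real.pi * ((x.1 + s) * q.2.1 + x.2 * q.2.2)) with hA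
  set A' : ℝ → ℝ × ℝ × ℝ → ℂ := fun s q => src T g q.1 q.2 *
      (((2 * Real.pi * q.2.1 : ℝ) : ℂ) * Complex.I *
      ex ((t - q.1) * ph q.2 + 2 * Real.pi * ((x.1 + s) * q.2.1 + x.2 * q.2.2))) with hA'
  have hAm : ∀ s, AEStronglyMeasurable (A s) μ := fun s =>
    Measurable.aestronglyMeasurable (by fun_prop)
  have hA'm : ∀ s, AEStronglyMeasurable (A' s) μ := fun s =>
    Measurable.aestronglyMeasurable (by fun_prop)
  have henv : Integrable (fun ξ : ℝ × ℝ => M * env ξ) := by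
    have := (integrable_env (q := 0) (by norm_num) (by norm_num)).const_mul M
    simpa using this
  have hAi : Integrable (A 0) μ := by
    refine (henv.comp_snd (volume.restrict (Set.Ioc 0 t))).mono' (hAm 0)
      (Filter.Eventually.of_forall fun q => ?_)
    simp only [hA]
    rw [norm_mul, norm_ex, mul_one]
    exact hM _ _
  have hbd : Integrable (fun q : ℝ × ℝ × ℝ => 2 * Real.pi * (|q.2.1| * (M * env q.2))) μ :=
    ((integrable_dom M).comp_snd (volume.restrict (Set.Ioc 0 t))).const_mul _
  have hder := (hasDerivAt_integral_of_dominated_loc_of_deriv_le (μ := μ) (F := A) (F' := A')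
    (x₀ := (0:ℝ)) (s := Set.univ) Filter.univ_mem (Filter.Eventually.of_forall hAm) hAi (hA'm 0)
    (Filter.Eventually.of_forall fun q s _ => by
      simp only [hA']
      rw [norm_mul, norm_mul, norm_mul, norm_ex, Complex.norm_I, Complex.norm_real, mul_one, mul_one,
        Real.norm_eq_abs, abs_mul, abs_of_pos Real.two_pi_pos]
      calc _ ≤ M * env q.2 * (2 * Real.pi * |q.2.1|) :=
            mul_le_mul_of_nonneg_right (hM _ _) (by positivity)
        _ = _ := by ring) hbd
    (Filter.Eventually.of_forall fun q s _ => by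
      refine (hasDerivAt_ex ?_).const_mul _
      have h := ((((hasDerivAt_id s).const_add x.1).mul_const q.2.1).add_const
        (x.2 * q.2.2)).const_mul (2 * Real.pi)
      have h' := h.const_add ((t - q.1) * ph q.2)
      simpa using h')).2
  have hline : HasDerivAt (fun s : ℝ => Duh (fun τ => ⇑(g τ)) t (x + s • ((1:ℝ), (0:ℝ))))
      (fderiv ℝ (Duh (fun τ => ⇑(g τ)) t) x (1, 0)) 0 := hd.hasFDerivAt.hasLineDerivAt _
  have heq : (fun s : ℝ => Duh (fun τ => ⇑(g τ)) t (x + s • ((1:ℝ), (0:ℝ))))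
      = fun s => ∫ q, A s q ∂μ := by
    ext s
    rw [Duh_eq ht0 htT hγ hM]
    simp [hA, hμ]
  rw [heq] at hline
  rw [hline.unique hder, Phi_eq_of_le htT]
  have hA'i : Integrable (A' 0) μ := hbd.mono' (hA'm 0) (Filter.Eventually.of_forall fun q => by
    simp only [hA']
    rw [norm_mul, norm_mul, norm_mul, norm_ex, Complex.norm_I, Complex.norm_real, mul_one, mul_one,
      Real.norm_eq_abs, abs_mul, abs_of_pos Real.two_pi_pos]
    calc _ ≤ M * env q.2 * (2 * Real.pi * |q.2.1|) :=
          mul_le_mul_of_nonneg_right (hM _ _) (by positivity)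
      _ = _ := by ring)
  have hfin : ∫ q, A' 0 q ∂μ = (((2 * Real.pi : ℝ) : ℂ) * Complex.I) *
      ∫ τ in Set.Ioc 0 t, kk (fun _ => x) (src T g) t τ := by
    rw [hμ, integral_prod _ hA'i, ← integral_const_mul]
    congr 1; ext τ
    rw [kk, ← integral_const_mul]
    congr 1; ext ξ
    simp only [hA', add_zero]
    push_cast
    ring
  rw [hfin, norm_mul, norm_mul, Complex.norm_I, Complex.norm_real, mul_one,
    Real.norm_of_nonneg Real.two_pi_pos.le]

/-- `Phi` is continuous in `x`, so its supremum over `ℝ²` is its supremum over a dense sequence. -/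
lemma eLpNorm_pd1_Duh_le {T t M : ℝ} {g : ℝ → SchwartzMap (ℝ × ℝ) ℂ} (ht0 : 0 ≤ t) (htT : t ≤ T)
    (hγ : Measurable (Function.uncurry (src T g)))
    (hM : ∀ τ ξ, ‖src T g τ ξ‖ ≤ M * env ξ) :
    eLpNorm (pd1 (Duh (fun τ => ⇑(g τ)) t)) ⊤ volume ≤ ENNReal.ofReal (2 * Real.pi) *
      ⨆ n, ‖Phi (src T g) T t (TopologicalSpace.denseSeq (ℝ × ℝ) n)‖ₑ := by
  rw [eLpNorm_exponent_top]
  refine eLpNormEssSup_le_of_ae_enorm_bound (Filter.Eventually.of_forall fun x => ?_)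
  have h1 : ‖pd1 (Duh (fun τ => ⇑(g τ)) t) x‖ₑ
      ≤ ENNReal.ofReal (2 * Real.pi) * ‖Phi (src T g) T t x‖ₑ := by
    rw [← ofReal_norm, ← ofReal_norm, ← ENNReal.ofReal_mul Real.two_pi_pos.le]
    exact ENNReal.ofReal_le_ofReal (norm_pd1_Duh_le ht0 htT hγ hM x)
  refine h1.trans (mul_le_mul_right ?_ _)
  refine (TopologicalSpace.denseRange_denseSeq (ℝ × ℝ)).induction_on
    (p := fun x => ‖Phi (src T g) T t x‖ₑ
      ≤ ⨆ n, ‖Phi (src T g) T t (TopologicalSpace.denseSeq (ℝ × ℝ) n)‖ₑ) x ?_ fun n => ?_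
  · exact isClosed_le (continuous_Phi hγ hM T t).enorm continuous_const
  · exact le_iSup (fun n => ‖Phi (src T g) T t (TopologicalSpace.denseSeq (ℝ × ℝ) n)‖ₑ) n

/-- Both estimates at once, with `r = 0` and `r = 2/9`. -/
lemma main_bound {T r : ℝ} (hT : 0 ≤ T) (hT1 : T ≤ 1) (hr : 0 ≤ r) (hr2 : r ≤ 2/9)
    {g : ℝ → SchwartzMap (ℝ × ℝ) ℂ} (hg : ContinuousOn g (Set.Icc 0 T)) :
    L94LinfNorm T (fun t => pd1 (Duh (fun τ => ⇑(g τ)) t))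
      ≤ ENNReal.ofReal (2 * Real.pi * causalC) * (∫⁻ t in Set.Icc (0:ℝ) T, ∫⁻ x : ℝ × ℝ,
      ENNReal.ofReal (1 + x.1 ^ 2) * (‖Dx1 (-r) (⇑(g t)) x‖₊ : ℝ≥0∞) ^ (2:ℝ)) ^ ((1:ℝ)/2) := by
  have hC : 0 < 2 * Real.pi * causalC := mul_pos Real.two_pi_pos causalC_pos
  obtain ⟨M, hM0, hM⟩ := exists_env_bound hg
  have hγ := measurable_src hg
  have hM' := norm_src_le hM0 hM
  rw [← Gn_src]
  -- an infinite right-hand side is trivial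
  by_cases hinf : Gn r (src T g) 0 T = ∞
  · rw [hinf, ENNReal.top_rpow_of_pos (by norm_num), ENNReal.mul_top (by simpa using hC)]
    exact le_top
  have hG : ∀ a b, Gn r (src T g) a b ≠ ∞ := fun a b => ne_top_of_le_ne_top hinf (Gn_src_le a b)
  have hsup := sup_bound hT hT1 hr hr2 hγ hM' hG (TopologicalSpace.denseSeq (ℝ × ℝ))
  unfold L94LinfNorm
  calc _ ≤ (∫⁻ t in Set.Icc (0:ℝ) T, ENNReal.ofReal (2 * Real.pi) ^ ((9:ℝ)/4) *
        (⨆ n, ‖Phi (src T g) T t (TopologicalSpace.denseSeq (ℝ × ℝ) n)‖ₑ) ^ ((9:ℝ)/4)) ^ ((4:ℝ)/9) := by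
        refine ENNReal.rpow_le_rpow (setLIntegral_mono' measurableSet_Icc fun t ht => ?_) (by norm_num)
        rw [← ENNReal.mul_rpow_of_nonneg _ _ (by norm_num)]
        exact ENNReal.rpow_le_rpow (eLpNorm_pd1_Duh_le ht.1 ht.2 hγ hM') (by norm_num)
    _ ≤ (ENNReal.ofReal (2 * Real.pi) ^ ((9:ℝ)/4) *
        (ENNReal.ofReal causalC * Gn r (src T g) 0 T ^ ((1:ℝ)/2)) ^ ((9:ℝ)/4)) ^ ((4:ℝ)/9) := by
        rw [lintegral_const_mul' _ _
          (ENNReal.rpow_ne_top_of_nonneg (by norm_num) ENNReal.ofReal_ne_top),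
          ← restrict_Ioc_eq_restrict_Icc]
        exact ENNReal.rpow_le_rpow (mul_le_mul_right hsup _) (by norm_num)
    _ = _ := by
        rw [← ENNReal.mul_rpow_of_nonneg _ _ (by norm_num), ← ENNReal.rpow_mul,
          ENNReal.ofReal_mul Real.two_pi_pos.le, mul_assoc]
        norm_num

end

/-- `L^{9/4}_T L^∞_x` estimates for `∂_{x₁}` of the Duhamel term by
weighted `L²_T L²_x` norms of the source. -/
theorem stmt5 :
    ∃ C : ℝ, 0 < C ∧ ∀ T : ℝ, 0 ≤ T → T ≤ 1 →
      ∀ g : ℝ → SchwartzMap (ℝ × ℝ) ℂ, ContinuousOn g (Set.Icc 0 T) →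
        L94LinfNorm T (fun t => pd1 (Duh (fun τ => ⇑(g τ)) t))
          ≤ ENNReal.ofReal C *
              (∫⁻ t in Set.Icc (0:ℝ) T, ∫⁻ x : ℝ × ℝ,
                  ENNReal.ofReal (1 + x.1 ^ 2) * (‖(g t) x‖₊ : ℝ≥0∞) ^ (2:ℝ)) ^ ((1:ℝ)/2) ∧
        L94LinfNorm T (fun t => pd1 (Duh (fun τ => ⇑(g τ)) t))
          ≤ ENNReal.ofReal C *
              (∫⁻ t in Set.Icc (0:ℝ) T, ∫⁻ x : ℝ × ℝ,
                  ENNReal.ofReal (1 + x.1 ^ 2) *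
                    (‖Dx1 (-(2:ℝ)/9) (⇑(g t)) x‖₊ : ℝ≥0∞) ^ (2:ℝ)) ^ ((1:ℝ)/2) := by
  refine ⟨2 * Real.pi * causalC, mul_pos Real.two_pi_pos causalC_pos, fun T hT hT1 g hg => ⟨?_, ?_⟩⟩
  · have h := main_bound (r := 0) hT hT1 le_rfl (by norm_num) hg
    simpa only [Dx1_zero] using h
  · have h := main_bound (r := 2/9) hT hT1 (by norm_num) le_rfl hg
    rwa [← neg_div] at h
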